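/- Fix κ > 0 and an integer m ≥ 3. There exists α ∈ (0,1] (independent of n) such that for all sufficiently large n the following holds: there is exactly one function φ : ℝ^I → ℝ that is Lipschitz continuous on the closed ball {x ∈ ℝ^I : |x| ≤ κ √n (log n)^m}, twice continuously differentiable on B_κ^n, vanishes at every boundary point x with |x| = κ √n (log n)^m, and satisfies the HJB equation at every x ∈ B_κ^n; moreover the second derivatives of this solution are α-Hölder continuous on every compact subset of B_κ^n. -/

import Mathlib

/-!
The proof is elementary: solutions are constructed by a monotone finite difference scheme, for which
a Schauder estimate is proved directly on the lattice, and uniqueness is the maximum principle.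

**Why the equation is a small perturbation.** In the heavy-traffic regime the diffusion coefficients
at the origin, `d_j = (λ_j^n + μ_j ν_j n) / 2 = a_j (λ^n + n / s) / 2` with `s = ∑ a_j / μ_j`, are of
order `n` and comparable with each other, whereas on `B_κ^n` all remaining second order
coefficients, including the controlled ones, are of order `R = κ √n (log n)^m = o(n)`
(`Rad_small`, `exists_Dat`). Hence for large `n` the equation reads `∑ d_j ∂²_jj φ = f`, where `f`
depends on the second derivatives of `φ` only through a nonlinearity with Lipschitz constant small
compared with the `d_j`. The equation is fully nonlinear, but no Evans-Krylov theory is needed: a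
constant coefficient Schauder estimate absorbs the perturbation, with exponent `α = 1/2`.

**The discrete Schauder estimate.** For `∑ d_j δ_j²` on the lattice, `grad_est` bounds first
differences by `osc / M + M sup |Lap|` on a cube of half-side `M`, by comparing the odd part under a
reflection with a quadratic barrier. It is applied to second differences of step `2 ^ p`, and
`telescope` sums the dyadic scales; the result `third_diff` improves a Hölder bound for the second
difference quotients by a small factor, up to the Hölder norm of the right-hand side, which
`ff_AH` controls. With weights given by powers of the distance to the sphere, and `interp` to handle
lower order quantities, a bound `S` for the weighted Hölder seminorm improves to `S / 2 + C`
(`PS_step`). On a fixed grid the seminorm is finite, so iteration yields a bound that is uniform in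
the mesh (`interior`).

**Existence.** The scheme is the dynamic programming equation of a finite controlled Markov chain,
solvable by a contraction argument (`exists_fixed`). A barrier of the form `e^{k r²} - e^{k |x|²}`,
with `r` slightly larger than `R`, bounds its solution by a multiple of the distance to the sphere,
up to the mesh size (`exists_scheme`). Limits along an ultrafilter
of the solution and of its first and second difference quotients satisfy Taylor expansions that
identify them with a `C^{2,1/2}` function and its derivatives (`exists_limit`, `exists_solution`),
and the equation passes to the limit.

**Uniqueness and regularity.** At a positive interior maximum of the difference of two solutions the
gradients agree and the second derivatives are ordered, which contradicts `γ > 0` (`le_of_PEq`). By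
uniqueness every solution coincides with the constructed one and inherits its Hölder continuity.
-/

open Finset Metric Set

noncomputable section

namespace HW

variable {I : ℕ}

/-- `ℝ^I` with the Euclidean norm. -/
abbrev Euc (I : ℕ) := EuclideanSpace ℝ (Fin I)

/-- First partial derivative `∂_i φ (x)`. -/
noncomputable def pd1 (φ : Euc I → ℝ) (i : Fin I) (x : Euc I) : ℝ :=
  fderiv ℝ φ x (EuclideanSpace.single i 1)

/-- Second partial derivative `∂²_{ii} φ (x)`. -/
noncomputable def pd2 (φ : Euc I → ℝ) (i : Fin I) (x : Euc I) : ℝ :=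
  fderiv ℝ (pd1 φ i) x (EuclideanSpace.single i 1)

/-- The fluid fraction `ν_i = (a_i/μ_i) · μ̄` where `μ̄ = (∑ a_j/μ_j)⁻¹`. -/
noncomputable def nu (μ a : Fin I → ℝ) (i : Fin I) : ℝ :=
  (a i / μ i) * (∑ j, a j / μ j)⁻¹

/-- The radius `κ √n (log n)^m` of the ball `B_κ^n`. -/
noncomputable def Rad (κ : ℝ) (m n : ℕ) : ℝ :=
  κ * Real.sqrt n * Real.log n ^ m

/-- The HJB equation at `x`, with a general "front" function `g` in place of `(e·x)^+`
(the true HJB equation uses `g y = max y 0`, the smoothed one uses `g = f_a`).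
Here `lam = λ^n`, `l_i^n = a_i λ^n − μ_i ν_i n`. -/
def HJBgen (μ a c : Fin I → ℝ) (γ lam : ℝ) (n : ℕ) (g : ℝ → ℝ)
    (φ : Euc I → ℝ) (x : Euc I) : Prop :=
  0 = -γ * φ x
    + g (∑ j, x j) * (⨅ i, (c i + μ i * pd1 φ i x - (1 / 2) * μ i * pd2 φ i x))
    + ∑ i, ((a i * lam - μ i * nu μ a i * n) - μ i * x i) * pd1 φ i x
    + (1 / 2) * ∑ i, (a i * lam + μ i * (nu μ a i * n + x i)) * pd2 φ i x

/-- A classical solution on `B = ball 0 R`: Lipschitz on the closed ball, `C²` on the open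
ball, vanishing on the boundary sphere, and satisfying the (generalized) HJB equation on `B`. -/
def IsSolGen (μ a c : Fin I → ℝ) (γ lam : ℝ) (n : ℕ) (R : ℝ) (g : ℝ → ℝ)
    (φ : Euc I → ℝ) : Prop :=
  (∃ K : NNReal, LipschitzOnWith K φ (closedBall 0 R)) ∧
  ContDiffOn ℝ 2 φ (ball 0 R) ∧
  (∀ x : Euc I, ‖x‖ = R → φ x = 0) ∧
  (∀ x ∈ ball (0 : Euc I) R, HJBgen μ a c γ lam n g φ x)

/-- α-Hölder continuity of the second derivative on every compact subset of `ball 0 R`. -/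
def HolderSecond (α R : ℝ) (φ : Euc I → ℝ) : Prop :=
  ∀ K : Set (Euc I), K ⊆ ball 0 R → IsCompact K →
    ∃ C : ℝ, ∀ x ∈ K, ∀ y ∈ K,
      ‖fderiv ℝ (fderiv ℝ φ) x - fderiv ℝ (fderiv ℝ φ) y‖ ≤ C * ‖x - y‖ ^ α

/-! ### Difference calculus on the integer lattice -/

/-- The integer lattice; the grid of mesh `h` is parametrised by `k ↦ h k`. -/
abbrev Zd (I : ℕ) := Fin I → ℤ

/-- The lattice vector `m e_k`. -/
def sg (k : Fin I) (m : ℤ) : Zd I := Pi.single k m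

@[simp] lemma sg_same (k : Fin I) (m : ℤ) : sg k m k = m := by simp [sg]

@[simp] lemma sg_ne {k j : Fin I} (h : j ≠ k) (m : ℤ) : sg k m j = 0 := by simp [sg, h]

@[simp] lemma sg_zero (k : Fin I) : sg k 0 = 0 := by simp [sg]

lemma sg_add (k : Fin I) (a b : ℤ) : sg k (a + b) = sg k a + sg k b := by
  simp [sg, Pi.single_add]

/-- Forward difference of step `m` in direction `k`. -/
def dif (k : Fin I) (m : ℤ) (F : Zd I → ℝ) : Zd I → ℝ :=
  fun x => F (x + sg k m) - F x

/-- Centred second difference in direction `k`. -/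
def sd (k : Fin I) (F : Zd I → ℝ) : Zd I → ℝ :=
  fun x => F (x + sg k 1) + F (x + sg k (-1)) - 2 * F x

/-- The lattice cube with centre `x0` and half-side `r`. -/
def Cube (x0 : Zd I) (r : ℕ) : Set (Zd I) := {x | ∀ j, |x j - x0 j| ≤ (r : ℤ)}

lemma mem_Cube {x0 x : Zd I} {r : ℕ} : x ∈ Cube x0 r ↔ ∀ j, |x j - x0 j| ≤ (r : ℤ) := Iff.rfl

lemma self_mem_Cube (x0 : Zd I) (r : ℕ) : x0 ∈ Cube x0 r := by
  intro j; simp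

lemma Cube_trans {x0 x y : Zd I} {r s t : ℕ} (hx : x ∈ Cube x0 r) (hy : y ∈ Cube x s)
    (h : r + s ≤ t) : y ∈ Cube x0 t := by
  intro j
  have h1 := abs_le.1 (hx j)
  have h2 := abs_le.1 (hy j)
  rw [abs_le]; constructor <;> omega

lemma add_single_mem_Cube (x : Zd I) (k : Fin I) (m : ℤ) {r : ℕ} (h : |m| ≤ r) :
    x + sg k m ∈ Cube x r := by
  intro j
  by_cases hj : j = k
  · subst hj; simpa using h
  · simp [hj]

/-- Telescoping along a lattice path that changes one coordinate at a time. -/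
lemma path_le (F : Zd I → ℝ) (x y : Zd I) (B : Fin I → ℝ)
    (hF : ∀ k z, (∀ j, z j = x j ∨ z j = y j) → z k = x k →
      |F (z + sg k (y k - x k)) - F z| ≤ B k) :
    |F y - F x| ≤ ∑ k, B k := by
  classical
  have key : ∀ s : Finset (Fin I),
      |F (fun j => if j ∈ s then y j else x j) - F x| ≤ ∑ k ∈ s, B k := by
    intro s
    induction s using Finset.induction_on with
    | empty => simp
    | insert k s hk ih =>
      have h1 := hF k (fun j => if j ∈ s then y j else x j)
        (fun j => by by_cases h : j ∈ s <;> simp [h]) (by simp [hk])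
      have h2 : (fun j => if j ∈ insert k s then y j else x j)
          = (fun j => if j ∈ s then y j else x j) + sg k (y k - x k) := by
        funext j
        by_cases hj : j = k
        · subst hj; simp [hk]
        · simp [hj]
      rw [Finset.sum_insert hk, h2]
      calc _ = |(F ((fun j => if j ∈ s then y j else x j) + sg k (y k - x k))
              - F (fun j => if j ∈ s then y j else x j))
              + (F (fun j => if j ∈ s then y j else x j) - F x)| := by ring_nf
        _ ≤ _ := (abs_add_le _ _).trans (add_le_add h1 ih)
  simpa using key Finset.univ

lemma single_add' (k : Fin I) (x : Zd I) (a b : ℤ) :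
    x + sg k a + sg k b = x + sg k (a + b) := by
  rw [sg_add, add_assoc]

lemma add_single_comm (i j : Fin I) (x : Zd I) (a b : ℤ) :
    x + sg i a + sg j b = x + sg j b + sg i a := by
  abel

lemma dif_eq_sum (k : Fin I) (l : ℕ) (F : Zd I → ℝ) (x : Zd I) :
    dif k l F x = ∑ a ∈ Finset.range l, dif k 1 F (x + sg k (a : ℤ)) := by
  have := Finset.sum_range_sub (fun a : ℕ => F (x + sg k (a : ℤ))) l
  simp only [dif, single_add']
  push_cast at this
  rw [this]; simp

lemma dif_dif_eq_sum (i j : Fin I) (l : ℕ) (F : Zd I → ℝ) (x : Zd I) :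
    dif i l (dif j l F) x = ∑ a ∈ Finset.range l, ∑ b ∈ Finset.range l,
      dif i 1 (dif j 1 F) (x + sg i (a : ℤ) + sg j (b : ℤ)) := by
  rw [dif_eq_sum]
  refine Finset.sum_congr rfl fun a _ => ?_
  simp only [dif]
  have e1 := dif_eq_sum j l F (x + sg i (a : ℤ) + sg i 1)
  have e2 := dif_eq_sum j l F (x + sg i (a : ℤ))
  simp only [dif] at e1 e2
  rw [e1, e2, ← Finset.sum_sub_distrib]
  refine Finset.sum_congr rfl fun b _ => ?_
  rw [add_single_comm i j (x + sg i (a : ℤ)) 1 b]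

/-- A bound on unit differences inside a cube bounds all differences inside it. -/
lemma cube_diff_le (F : Zd I → ℝ) (x0 : Zd I) (r : ℕ) (B : ℝ) (_hB : 0 ≤ B)
    (hF : ∀ k, ∀ x ∈ Cube x0 r, |dif k 1 F x| ≤ B) {x y : Zd I}
    (hx : x ∈ Cube x0 r) (hy : y ∈ Cube x0 r) :
    |F y - F x| ≤ ∑ k, B * |(y k : ℝ) - x k| := by
  have axis : ∀ (k : Fin I) (l : ℕ) (z : Zd I), z ∈ Cube x0 r → z + sg k (l : ℤ) ∈ Cube x0 r →
      |F (z + sg k (l : ℤ)) - F z| ≤ B * l := by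
    intro k l z hz hz'
    have := dif_eq_sum k l F z
    simp only [dif] at this
    rw [this]
    refine (Finset.abs_sum_le_sum_abs _ _).trans ?_
    have : ∀ a ∈ Finset.range l, |F (z + sg k (a:ℤ) + sg k 1)
        - F (z + sg k (a:ℤ))| ≤ B := by
      intro a ha
      refine hF k _ ?_
      intro j
      have h1 := abs_le.1 (hz j)
      have h2 := abs_le.1 (hz' j)
      have ha := Finset.mem_range.1 ha
      by_cases hj : j = k
      · subst hj
        simp only [Pi.add_apply, sg_same] at h2 ⊢
        rw [abs_le]; constructor <;> omega
      · simpa [hj] using hz j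
    refine (Finset.sum_le_sum this).trans ?_
    simp [mul_comm]
  refine path_le F x y _ ?_
  intro k z hz hzk
  have hzQ : z ∈ Cube x0 r := by
    intro j; rcases hz j with h | h <;> rw [h]
    exacts [hx j, hy j]
  have hzQ' : z + sg k (y k - x k) ∈ Cube x0 r := by
    intro j
    by_cases hj : j = k
    · subst hj; simpa [hzk] using hy j
    · simpa [hj] using hzQ j
  rcases le_total (x k) (y k) with h | h
  · obtain ⟨l, hl⟩ := Int.eq_ofNat_of_zero_le (sub_nonneg.2 h)
    have e : (y k : ℝ) - x k = l := by exact_mod_cast congrArg (Int.cast : ℤ → ℝ) hl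
    rw [e, Nat.abs_cast, hl]
    rw [hl] at hzQ'
    exact axis k l z hzQ hzQ'
  · obtain ⟨l, hl⟩ := Int.eq_ofNat_of_zero_le (sub_nonneg.2 h)
    have e : (x k : ℝ) - y k = l := by exact_mod_cast congrArg (Int.cast : ℤ → ℝ) hl
    rw [abs_sub_comm (y k : ℝ), e, Nat.abs_cast]
    have e2 : y k - x k = -(l : ℤ) := by omega
    rw [e2] at hzQ' ⊢
    have := axis k l (z + sg k (-(l:ℤ))) hzQ' (by simpa [single_add'] using hzQ)
    rw [single_add'] at this
    simpa [abs_sub_comm] using this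

/-- Discrete first-order Taylor estimate: the error is controlled by the oscillation of
the unit differences. -/
lemma cube_taylor (F : Zd I → ℝ) (x0 : Zd I) (r : ℕ) (B : ℝ) (hB : 0 ≤ B)
    {x y : Zd I} (hx : x ∈ Cube x0 r) (hy : y ∈ Cube x0 r)
    (hF : ∀ k, ∀ z ∈ Cube x0 r, |dif k 1 F z - dif k 1 F x| ≤ B) :
    |F y - F x - ∑ k, ((y k : ℝ) - x k) * dif k 1 F x| ≤ ∑ k, B * |(y k : ℝ) - x k| := by
  have := cube_diff_le (fun z => F z - ∑ k, (z k : ℝ) * dif k 1 F x) x0 r B hB ?_ hx hy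
  · convert this using 2
    simp only [sub_mul, Finset.sum_sub_distrib]
    ring
  · intro k z hz
    convert hF k z hz using 2
    have : ∑ j, ((z + sg k (1:ℤ)) j : ℝ) * dif j 1 F x
        = ∑ j, (z j : ℝ) * dif j 1 F x + dif k 1 F x := by
      simp only [Pi.add_apply, Int.cast_add, add_mul, Finset.sum_add_distrib]
      congr 1
      rw [Finset.sum_eq_single k]
      · simp
      · intro b _ hb; simp [hb]
      · simp
    simp only [dif] at this ⊢
    rw [this]
    ring

/-! ### The gradient estimate for constant coefficient difference operators -/

/-- The constant coefficient operator `∑ d_j δ_j²` on the unit lattice. -/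
def Lap (d : Fin I → ℝ) (F : Zd I → ℝ) (x : Zd I) : ℝ := ∑ j, d j * sd j F x

lemma sd_sub (k : Fin I) (F G : Zd I → ℝ) (x : Zd I) :
    sd k (fun y => F y - G y) x = sd k F x - sd k G x := by
  simp only [sd]; ring

lemma sd_separable (k : Fin I) (b : Fin I → ℤ → ℝ) (x : Zd I) :
    sd k (fun y => ∑ j, b j (y j)) x = b k (x k + 1) + b k (x k - 1) - 2 * b k (x k) := by
  simp only [sd]
  rw [← Finset.add_sum_erase _ _ (Finset.mem_univ k), ← Finset.add_sum_erase _ _ (Finset.mem_univ k),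
    ← Finset.add_sum_erase _ _ (Finset.mem_univ k)]
  have : ∀ m : ℤ, ∑ j ∈ Finset.univ.erase k, b j ((x + sg k m) j)
      = ∑ j ∈ Finset.univ.erase k, b j (x j) := by
    intro m
    refine Finset.sum_congr rfl fun j hj => ?_
    simp [Finset.ne_of_mem_erase hj]
  rw [this, this]
  simp only [Pi.add_apply, sg_same, ← sub_eq_add_neg]
  ring

lemma finite_Cube (x0 : Zd I) (r : ℕ) : (Cube x0 r).Finite := by
  refine (Set.finite_Icc (fun j => x0 j - r) (fun j => x0 j + r)).subset ?_
  intro x hx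
  constructor <;> intro j <;> have := abs_le.1 (hx j) <;> simp only <;> omega

/-- Interior gradient estimate. The odd part of `g` with respect to the reflection exchanging
`x1` and `x1 + l e_k` vanishes (or changes sign) across the hyperplane of symmetry, and is compared
with a quadratic barrier on the half cube. -/
lemma grad_est (d : Fin I → ℝ) (hd : ∀ j, 0 < d j) (Λ : ℝ) (g : Zd I → ℝ) (x1 : Zd I)
    (k : Fin I) (hΛ : ∑ j, d j ≤ Λ * d k)
    (l M : ℕ) (hl : 1 ≤ l) (hlM : l + 1 ≤ M) (O G : ℝ) (hOpos : 0 < O) (hG0 : 0 ≤ G)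
    (hO : ∀ x ∈ Cube x1 M, ∀ y ∈ Cube x1 M, g x - g y ≤ O)
    (hG : ∀ x ∈ Cube x1 M, |Lap d g x| ≤ G) :
    g (x1 + sg k l) - g x1 ≤ l * (O / M * (1 + Λ) + G * M / d k) := by
  classical
  -- reflection in the hyperplane `x k = x1 k + l / 2`
  set σ : Zd I → Zd I := fun x => x + sg k (2 * x1 k + l - 2 * x k) with hσ
  have hMpos : (0:ℝ) < M := by exact_mod_cast (by omega : 0 < M)
  have hlR : (1:ℝ) ≤ l := by exact_mod_cast hl
  have hlMR : (l:ℝ) + 1 ≤ M := by exact_mod_cast hlM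
  set M' : ℝ := M - l / 2 with hM'
  have hM'pos : M / 2 < M' := by rw [hM']; linarith
  have hM'0 : 0 < M' := by linarith
  set κ : ℝ := (G + O * (∑ j, d j) / M ^ 2) / d k with hκ
  have hdk := hd k
  have hsumpos : 0 < ∑ j, d j := Finset.sum_pos (fun j _ => hd j) ⟨k, Finset.mem_univ k⟩
  have hκ0 : 0 < κ := by positivity
  -- The barrier is linear plus concave in `x k - x1 k - l / 2` and quadratic in the other
  -- coordinates, so that it is at least `O` on the outer faces. The summand `1 / 4` makes its part in
  -- direction `k` odd between the two lattice points at distance `1 / 2` from the hyperplane.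
  set b : Fin I → ℤ → ℝ := fun j t =>
    if j = k then O * ((t:ℝ) - x1 k - l / 2) / M'
        + κ * (((t:ℝ) - x1 k - l / 2) * (M' - ((t:ℝ) - x1 k - l / 2)) + 1 / 4)
      else O * ((t:ℝ) - x1 j) ^ 2 / M ^ 2 with hb
  set B : Zd I → ℝ := fun x => ∑ j, b j (x j) with hB
  set v : Zd I → ℝ := fun x => g x - g (σ x) with hv
  have hbk : ∀ t, b k t = O * ((t:ℝ) - x1 k - l / 2) / M'
        + κ * (((t:ℝ) - x1 k - l / 2) * (M' - ((t:ℝ) - x1 k - l / 2)) + 1 / 4) := by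
    intro t; simp [hb]
  have hbj : ∀ j t, j ≠ k → b j t = O * ((t:ℝ) - x1 j) ^ 2 / M ^ 2 := by
    intro j t hj; simp [hb, hj]
  have hbj0 : ∀ j t, j ≠ k → 0 ≤ b j t := by
    intro j t hj; rw [hbj j t hj]; positivity
  have hBk : ∀ x, b k (x k) ≤ B x := by
    intro x
    simp only [hB]
    rw [← Finset.add_sum_erase _ _ (Finset.mem_univ k)]
    have : 0 ≤ ∑ j ∈ Finset.univ.erase k, b j (x j) :=
      Finset.sum_nonneg fun j hj => hbj0 j _ (Finset.ne_of_mem_erase hj)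
    linarith
  have hBjk : ∀ x j, j ≠ k → b j (x j) + b k (x k) ≤ B x := by
    intro x j hj
    simp only [hB]
    rw [← Finset.add_sum_erase _ _ (Finset.mem_univ k),
      ← Finset.add_sum_erase _ _ (Finset.mem_erase.2 ⟨hj, Finset.mem_univ j⟩)]
    have : 0 ≤ ∑ i ∈ (Finset.univ.erase k).erase j, b i (x i) :=
      Finset.sum_nonneg fun i hi => hbj0 i _ (Finset.ne_of_mem_erase (Finset.mem_of_mem_erase hi))
    linarith
  -- on the closed half cube the part of the barrier depending on `x k` is nonnegative
  have hbk0 : ∀ t : ℤ, 2 * x1 k + l ≤ 2 * t → t ≤ x1 k + M → 0 ≤ b k t := by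
    intro t h1 h2
    have h1' : (2 * x1 k + l : ℝ) ≤ 2 * t := by exact_mod_cast h1
    have h2' : (t : ℝ) ≤ x1 k + M := by exact_mod_cast h2
    rw [hbk]
    have hs : (0:ℝ) ≤ (t:ℝ) - x1 k - l / 2 := by linarith
    have hs' : (0:ℝ) ≤ M' - ((t:ℝ) - x1 k - l / 2) := by rw [hM']; linarith
    positivity
  have hσC : ∀ x ∈ Cube x1 M, 2 * x1 k + l ≤ 2 * x k + 1 → σ x ∈ Cube x1 M := by
    intro x hx h j
    have := abs_le.1 (hx j)
    by_cases hj : j = k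
    · subst hj
      simp only [hσ, Pi.add_apply, sg_same]
      rw [abs_le]; constructor <;> omega
    · simpa [hσ, hj] using hx j
  have hvO : ∀ x ∈ Cube x1 M, 2 * x1 k + l ≤ 2 * x k + 1 → v x ≤ O := fun x hx h =>
    hO x hx _ (hσC x hx h)
  -- the open half cube
  set D : Set (Zd I) := {x | x ∈ Cube x1 (M - 1) ∧ 2 * x1 k + l < 2 * x k} with hD
  have hDfin : D.Finite := (finite_Cube x1 (M - 1)).subset fun x hx => hx.1
  have hDC : ∀ x ∈ D, x ∈ Cube x1 M := fun x hx =>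
    Cube_trans hx.1 (self_mem_Cube x 0) (by omega)
  have hsdv : ∀ j x, sd j v x = sd j g x - sd j g (σ x) := by
    intro j x
    have e : ∀ m, g (σ (x + sg j m)) = if j = k then g (σ x + sg j (-m)) else g (σ x + sg j m) := by
      intro m
      by_cases hj : j = k
      · subst hj
        simp only [if_true, hσ]
        congr 1
        simp only [Pi.add_apply, sg_same, add_assoc, ← sg_add]
        congr 2; ring
      · simp only [hj, if_false, hσ, Pi.add_apply, sg_ne (Ne.symm hj), add_zero]
        congr 1
        rw [add_right_comm]
    simp only [sd, hv, e]
    by_cases hj : j = k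
    · simp [hj]; ring
    · simp [hj]; ring
  have hLv : ∀ x ∈ D, -(2 * G) ≤ Lap d v x := by
    intro x hx
    have h1 := abs_le.1 (hG x (hDC x hx))
    have h2 := abs_le.1 (hG (σ x) (hσC x (hDC x hx) (by have := hx.2; omega)))
    have : Lap d v x = Lap d g x - Lap d g (σ x) := by
      simp only [Lap, hsdv, mul_sub, Finset.sum_sub_distrib]
    linarith [h1.1, h2.2]
  have hLB : ∀ x, Lap d B x < -(2 * G) := by
    intro x
    have e : ∀ j, d j * sd j B x = (if j = k then -(2 * κ * d k) - 2 * O * d k / M ^ 2 else 0)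
        + 2 * O / M ^ 2 * d j := by
      intro j
      simp only [hB]
      rw [sd_separable]
      by_cases hj : j = k
      · subst hj
        rw [hbk, hbk, hbk, if_pos rfl]
        push_cast; field_simp; ring
      · rw [hbj _ _ hj, hbj _ _ hj, hbj _ _ hj, if_neg hj]
        push_cast; field_simp; ring
    simp only [Lap, e, Finset.sum_add_distrib, ← Finset.mul_sum]
    rw [Finset.sum_ite_eq' Finset.univ k]
    simp only [Finset.mem_univ, if_true]
    have : κ * d k = G + O * (∑ j, d j) / M ^ 2 := by rw [hκ]; field_simp
    have h3 : 0 < 2 * O * d k / M ^ 2 := by positivity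
    have h4 : 2 * O / M ^ 2 * ∑ j, d j = 2 * (O * (∑ j, d j) / M ^ 2) := by ring
    linarith
  -- maximum principle: `v - B` has no positive maximum over `D`
  have claim : ∀ x ∈ D, v x ≤ B x := by
    by_contra hcon
    push Not at hcon
    obtain ⟨z0, hz0, hz0'⟩ := hcon
    obtain ⟨x, hxD, hxmax⟩ := Set.exists_max_image D (fun x => v x - B x) hDfin ⟨z0, hz0⟩
    have hpos : 0 < v x - B x := by have := hxmax z0 hz0; linarith
    have hnb : ∀ (j : Fin I) (m : ℤ), m = 1 ∨ m = -1 →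
        v (x + sg j m) - B (x + sg j m) ≤ v x - B x := by
      intro j m hm
      have hm1 : |m| ≤ ((1:ℕ):ℤ) := by rcases hm with rfl | rfl <;> simp
      have hyC : x + sg j m ∈ Cube x1 M :=
        Cube_trans hxD.1 (add_single_mem_Cube x j m hm1) (by omega)
      by_cases hyD : x + sg j m ∈ D
      · exact hxmax _ hyD
      refine le_trans ?_ hpos.le
      have hx2 := hxD.2
      have hxC := hxD.1
      by_cases hj : j = k
      · subst hj
        have hyk : (x + sg j m) j = x j + m := by simp
        have hxj := abs_le.1 (hxC j)
        rcases hm with rfl | rfl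
        · have hyM : (x + sg j 1) j = x1 j + M := by
            by_contra hne
            refine hyD ⟨?_, by rw [hyk]; omega⟩
            intro i
            by_cases hi : i = j
            · subst hi
              rw [hyk] at hne ⊢
              rw [abs_le]; constructor <;> omega
            · simpa [hi] using hxC i
          have h1 := hvO _ hyC (by rw [hyk]; omega)
          have h2 := hBk (x + sg j 1)
          rw [hyM, hbk] at h2
          push_cast at h2
          have e1 : ((x1 j : ℝ) + M - x1 j - l / 2) = M' := by rw [hM']; ring
          rw [e1, mul_div_assoc, div_self hM'0.ne'] at h2
          linarith
        · have hcase : 2 * (x + sg j (-1)) j = 2 * x1 j + l ∨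
              2 * (x + sg j (-1)) j = 2 * x1 j + l - 1 := by
            rw [hyk]
            by_contra hne
            push Not at hne
            refine hyD ⟨?_, by rw [hyk]; omega⟩
            intro i
            by_cases hi : i = j
            · subst hi
              rw [hyk, abs_le]; constructor <;> omega
            · simpa [hi] using hxC i
          rcases hcase with hc | hc
          · have h1 : v (x + sg j (-1)) = 0 := by
              simp only [hv, hσ]
              rw [hc]; simp
            have h2 := hBk (x + sg j (-1))
            have h3 := hbk0 ((x + sg j (-1)) j) (by rw [hc]) (by rw [hyk]; omega)
            linarith
          -- half-integer symmetry plane: the neighbour is the mirror image of `x`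
          · have e1 : σ (x + sg j (-1)) = x := by
              simp only [hσ]
              rw [hc, add_assoc, ← sg_add]
              have : (-1 + (2 * x1 j + (l:ℤ) - (2 * x1 j + l - 1))) = 0 := by ring
              rw [this]; simp
            have e2 : σ x = x + sg j (-1) := by
              simp only [hσ]
              congr 2
              rw [hyk] at hc; omega
            have h1 : v (x + sg j (-1)) = - v x := by
              simp only [hv]
              rw [e1, e2]; ring
            have h2 := hBk (x + sg j (-1))
            have h3 := hBk x
            have hc' : (2 * (x j : ℝ)) = 2 * x1 j + l + 1 := by
              rw [hyk] at hc
              have : 2 * x j = 2 * x1 j + l + 1 := by omega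
              exact_mod_cast this
            have h4 : b j ((x + sg j (-1)) j) + b j (x j) = 0 := by
              rw [hyk, hbk, hbk]
              push_cast
              have e3 : (x j : ℝ) - x1 j - l / 2 = 1 / 2 := by linarith
              have e4 : (x j : ℝ) + -1 - x1 j - l / 2 = -(1 / 2) := by linarith
              rw [e3, e4]; ring
            linarith
      · have hyk : (x + sg j m) k = x k := by simp [Ne.symm hj]
        have hyj : |(x + sg j m) j - x1 j| = M := by
          by_contra hne
          refine hyD ⟨?_, by rw [hyk]; omega⟩
          intro i
          by_cases hi : i = j
          · subst hi
            have := hyC i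
            have := lt_of_le_of_ne this hne
            omega
          · simpa [hi] using hxC i
        have h1 := hvO _ hyC (by rw [hyk]; omega)
        have h2 := hBjk (x + sg j m) j hj
        have hxk := abs_le.1 (hxC k)
        have h3 := hbk0 ((x + sg j m) k) (by rw [hyk]; omega) (by rw [hyk]; omega)
        have h4 : b j ((x + sg j m) j) = O := by
          rw [hbj _ _ hj]
          have : (((x + sg j m) j : ℝ) - x1 j) ^ 2 = (M:ℝ) ^ 2 := by
            rw [← sq_abs]; congr 1
            exact_mod_cast congrArg (Int.cast : ℤ → ℝ) hyj
          rw [this]; field_simp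
        linarith
    have h1 : Lap d v x - Lap d B x ≤ 0 := by
      have : Lap d v x - Lap d B x = ∑ j, d j * sd j (fun y => v y - B y) x := by
        simp only [Lap, sd_sub, mul_sub, Finset.sum_sub_distrib]
      rw [this]
      refine Finset.sum_nonpos fun j _ => mul_nonpos_of_nonneg_of_nonpos (hd j).le ?_
      have a1 := hnb j 1 (Or.inl rfl)
      have a2 := hnb j (-1) (Or.inr rfl)
      simp only [sd]; linarith
    have h2 := hLv x hxD
    have h3 := hLB x
    linarith
  have hxl : x1 + sg k (l:ℤ) ∈ D := by
    refine ⟨add_single_mem_Cube x1 k l (by simp; omega), ?_⟩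
    simp; omega
  have h1 := claim _ hxl
  have h2 : v (x1 + sg k (l:ℤ)) = g (x1 + sg k l) - g x1 := by
    simp only [hv, hσ]
    congr 2
    rw [add_assoc, ← sg_add]
    have : (l:ℤ) + (2 * x1 k + l - 2 * (x1 + sg k (l:ℤ)) k) = 0 := by simp; ring
    rw [this]; simp
  have h3 : B (x1 + sg k (l:ℤ)) = b k (x1 k + l) := by
    simp only [hB]
    rw [Finset.sum_eq_single k]
    · simp
    · intro j _ hj
      rw [hbj _ _ hj]; simp [hj]
    · simp
  rw [h2, h3, hbk] at h1
  push_cast at h1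
  have e : (x1 k : ℝ) + l - x1 k - l / 2 = l / 2 := by ring
  rw [e] at h1
  refine h1.trans ?_
  have b1 : O * (l / 2 : ℝ) / M' ≤ l * (O / M) := by
    rw [div_le_iff₀ hM'0]
    have : l * (O / M) * M' = O * l / M * M' := by ring
    rw [this]
    have : O * l / M * (M / 2) ≤ O * l / M * M' := by gcongr
    have e3 : O * l / M * (M / 2) = O * (l / 2 : ℝ) := by field_simp
    linarith
  have b2 : ((l / 2 : ℝ) * (M' - l / 2) + 1 / 4) ≤ l * M := by
    rw [hM']; nlinarith
  have b3 : κ ≤ G / d k + O * Λ / M ^ 2 := by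
    rw [hκ, add_div]
    refine add_le_add le_rfl ?_
    rw [div_le_iff₀ hdk]
    calc O * (∑ j, d j) / M ^ 2 ≤ O * (Λ * d k) / M ^ 2 := by gcongr
      _ = _ := by ring
  calc _ ≤ l * (O / M) + (G / d k + O * Λ / M ^ 2) * (l * M) :=
        add_le_add b1 (mul_le_mul b3 b2 (by rw [hM']; nlinarith) (hκ0.le.trans b3))
    _ = _ := by field_simp; ring

/-! ### Dyadic telescoping of second difference quotients -/

/-- Mixed second difference quotient at the dyadic scale `2 ^ p` (on the unit lattice). -/
def Wd (i j : Fin I) (p : ℕ) (F : Zd I → ℝ) (x : Zd I) : ℝ :=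
  dif i ((2 ^ p : ℕ) : ℤ) (dif j ((2 ^ p : ℕ) : ℤ) F) x / 4 ^ p

/-- Doubling the scale amounts to averaging over four translates. -/
lemma Wd_succ (i j : Fin I) (p : ℕ) (F : Zd I → ℝ) (x : Zd I) :
    Wd i j (p + 1) F x = (Wd i j p F x + Wd i j p F (x + sg i ((2 ^ p : ℕ) : ℤ))
      + Wd i j p F (x + sg j ((2 ^ p : ℕ) : ℤ))
      + Wd i j p F (x + sg i ((2 ^ p : ℕ) : ℤ) + sg j ((2 ^ p : ℕ) : ℤ))) / 4 := by
  have e : ((2 ^ (p + 1) : ℕ) : ℤ) = ((2 ^ p : ℕ) : ℤ) + ((2 ^ p : ℕ) : ℤ) := by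
    push_cast; ring
  simp only [Wd, dif, e, sg_add]
  generalize sg i ((2 ^ p : ℕ) : ℤ) = A
  generalize sg j ((2 ^ p : ℕ) : ℤ) = B
  have h1 : F (x + (A + A) + (B + B)) = F (x + A + B + A + B) := by congr 1; abel
  have h2 : F (x + (A + A)) = F (x + A + A) := by rw [add_assoc]
  have h3 : F (x + (B + B)) = F (x + B + B) := by rw [add_assoc]
  have h4 : F (x + B + A) = F (x + A + B) := by rw [add_right_comm]
  have h5 : F (x + A + A + B) = F (x + A + B + A) := by rw [add_right_comm]
  have h6 : F (x + B + A + B) = F (x + A + B + B) := by congr 1; abel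
  rw [h1, h2, h3, h4, h5, h6, pow_succ]
  have h0 : (4:ℝ) ^ p ≠ 0 := by positivity
  field_simp
  ring

/-- If the quotients at every dyadic scale `2 ^ p` vary by at most `A q ^ p` over a step `2 ^ p`,
then the quotients at the finest scale are Hölder continuous. -/
lemma telescope (V : ℕ → Zd I → ℝ) (i j : Fin I)
    (hV : ∀ p x, V (p + 1) x = (V p x + V p (x + sg i ((2 ^ p : ℕ) : ℤ))
      + V p (x + sg j ((2 ^ p : ℕ) : ℤ))
      + V p (x + sg i ((2 ^ p : ℕ) : ℤ) + sg j ((2 ^ p : ℕ) : ℤ))) / 4)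
    (x0 : Zd I) (P : ℕ) (A q : ℝ) (hA0 : 0 ≤ A) (hq : 4 / 3 ≤ q)
    (hA : ∀ p < P, ∀ m, ∀ x ∈ Cube x0 (2 * 2 ^ P),
      |V p (x + sg m ((2 ^ p : ℕ) : ℤ)) - V p x| ≤ A * q ^ p)
    (k : Fin I) (l : ℕ) (hl : l < 2 ^ P) :
    |V 0 (x0 + sg k (l : ℤ)) - V 0 x0| ≤ 21 * A * q ^ P := by
  have hq0 : 0 < q := by linarith
  have hpow : ∀ p < P, 2 * 2 ^ p ≤ 2 ^ P := fun p hp => by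
    rw [← pow_succ']; exact Nat.pow_le_pow_right (by norm_num) hp
  -- Averaging over translates shows that consecutive scales are close, hence all scales are close to
  -- the finest one; `4 / 3 ≤ q` makes the resulting geometric sums controllable.
  have T1 : ∀ p < P, ∀ x ∈ Cube x0 (2 ^ P), |V (p + 1) x - V p x| ≤ A * q ^ p := by
    intro p hp x hx
    have hle := hpow p hp
    have hx1 : x ∈ Cube x0 (2 * 2 ^ P) := Cube_trans hx (self_mem_Cube x 0) (by omega)
    have hxi : x + sg i ((2 ^ p : ℕ) : ℤ) ∈ Cube x0 (2 * 2 ^ P) :=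
      Cube_trans hx (add_single_mem_Cube x i _ (r := 2 ^ p) (by simp)) (by omega)
    have a1 := abs_le.1 (hA p hp i x hx1)
    have a2 := abs_le.1 (hA p hp j x hx1)
    have a3 := abs_le.1 (hA p hp j _ hxi)
    rw [hV, abs_le]
    constructor <;> linarith [a1.1, a1.2, a2.1, a2.2, a3.1, a3.2]
  have T2 : ∀ p ≤ P, ∀ x ∈ Cube x0 (2 ^ P), |V p x - V 0 x| ≤ 3 * A * q ^ p := by
    intro p
    induction p with
    | zero => intro _ x _; simp; positivity
    | succ p ih =>
      intro hp x hx
      have h1 := abs_le.1 (ih (by omega) x hx)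
      have h2 := abs_le.1 (T1 p (by omega) x hx)
      have h3 : 0 ≤ A * q ^ p := by positivity
      have h4 : 4 * (A * q ^ p) ≤ 3 * A * q ^ (p + 1) := by
        rw [pow_succ]; nlinarith
      rw [abs_le]; constructor <;> linarith [h1.1, h1.2, h2.1, h2.2]
  have T3 : ∀ p < P, ∀ x ∈ Cube x0 (2 ^ P), x + sg k ((2 ^ p : ℕ) : ℤ) ∈ Cube x0 (2 ^ P) →
      |V 0 (x + sg k ((2 ^ p : ℕ) : ℤ)) - V 0 x| ≤ 7 * A * q ^ p := by
    intro p hp x hx hx'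
    have h1 := abs_le.1 (T2 p hp.le x hx)
    have h2 := abs_le.1 (T2 p hp.le _ hx')
    have h3 := abs_le.1 (hA p hp k x (Cube_trans hx (self_mem_Cube x 0) (by omega)))
    rw [abs_le]; constructor <;> linarith [h1.1, h1.2, h2.1, h2.2, h3.1, h3.2]
  -- a step `l < 2 ^ (p + 1)` is at most one step `2 ^ p` followed by a step below `2 ^ p`
  have T4 : ∀ p ≤ P, ∀ l : ℕ, l < 2 ^ p → ∀ x ∈ Cube x0 (2 ^ P - 2 ^ p),
      |V 0 (x + sg k (l : ℤ)) - V 0 x| ≤ 21 * A * q ^ p := by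
    intro p
    induction p with
    | zero =>
      intro _ l hl x _
      have : l = 0 := by simp at hl; exact hl
      subst this
      simp; positivity
    | succ p ih =>
      intro hp l hl x hx
      have hle := hpow p (by omega)
      have hle' : 2 ^ (p + 1) ≤ 2 ^ P := Nat.pow_le_pow_right (by norm_num) hp
      have hs : 2 ^ (p + 1) = 2 * 2 ^ p := pow_succ' 2 p
      have h3 : 0 ≤ A * q ^ p := by positivity
      have h4 : 28 * (A * q ^ p) ≤ 21 * A * q ^ (p + 1) := by
        rw [pow_succ]; nlinarith
      have hx2 : x ∈ Cube x0 (2 ^ P - 2 ^ p) := Cube_trans hx (self_mem_Cube x 0) (by omega)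
      by_cases hlp : l < 2 ^ p
      · have := ih (by omega) l hlp x hx2
        linarith
      · obtain ⟨l', rfl⟩ := Nat.exists_eq_add_of_le (not_lt.1 hlp)
        have hy : x + sg k ((2 ^ p : ℕ) : ℤ) ∈ Cube x0 (2 ^ P - 2 ^ p) :=
          Cube_trans hx (add_single_mem_Cube x k _ (r := 2 ^ p) (by simp)) (by omega)
        have a1 := abs_le.1 (ih (by omega) l' (by omega) _ hy)
        have a2 := abs_le.1 (T3 p (by omega) x (Cube_trans hx2 (self_mem_Cube x 0) (by omega))
          (Cube_trans hy (self_mem_Cube _ 0) (by omega)))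
        rw [single_add', ← Nat.cast_add] at a1
        rw [abs_le]; constructor <;> linarith [a1.1, a1.2, a2.1, a2.2]
  exact T4 P le_rfl l hl x0 (self_mem_Cube _ _)

/-! ### The grid in the ball and Hölder bounds along coordinate directions -/

/-- The grid point `h x` of `ℝ^I`. -/
def pt (h : ℝ) (x : Zd I) : Euc I := WithLp.toLp 2 fun j => h * (x j : ℝ)

@[simp] lemma pt_apply (h : ℝ) (x : Zd I) (j : Fin I) : pt h x j = h * (x j : ℝ) := rfl

/-- Distance from the grid point `h x` to the sphere of radius `R` (negative outside). -/
def Dd (R h : ℝ) (x : Zd I) : ℝ := R - ‖pt h x‖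

lemma norm_le_sum_abs (v : Euc I) : ‖v‖ ≤ ∑ j, |v j| := by
  rw [EuclideanSpace.norm_eq]
  refine Real.sqrt_le_iff.2 ⟨Finset.sum_nonneg fun j _ => abs_nonneg _, ?_⟩
  simp only [Real.norm_eq_abs]
  exact Finset.sum_sq_le_sq_sum_of_nonneg fun j _ => abs_nonneg _

lemma abs_apply_le_norm (v : Euc I) (j : Fin I) : |v j| ≤ ‖v‖ := by
  simpa using PiLp.norm_apply_le v j

lemma Dd_Cube {R h : ℝ} (hh : 0 ≤ h) {x y : Zd I} {r : ℕ} (hy : y ∈ Cube x r) :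
    |Dd R h y - Dd R h x| ≤ I * (r * h) := by
  have h1 : |‖pt h x‖ - ‖pt h y‖| ≤ ‖pt h x - pt h y‖ := abs_norm_sub_norm_le _ _
  have h2 : ‖pt h x - pt h y‖ ≤ ∑ _j : Fin I, r * h := by
    refine (norm_le_sum_abs _).trans (Finset.sum_le_sum fun j _ => ?_)
    have : (|y j - x j| : ℝ) ≤ r := by exact_mod_cast hy j
    have e : (pt h x - pt h y) j = -(((y j : ℝ) - x j) * h) := by simp; ring
    rw [e, abs_neg, abs_mul, abs_of_nonneg hh]
    exact mul_le_mul_of_nonneg_right this hh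
  simp only [Finset.sum_const, Finset.card_univ, Fintype.card_fin, nsmul_eq_mul] at h2
  have e : Dd R h y - Dd R h x = ‖pt h x‖ - ‖pt h y‖ := by simp only [Dd]; ring
  rw [e]; exact h1.trans h2

/-- `F` is `1/2`-Hölder with constant `E` along coordinate segments with end points in `Q`. -/
def AH (Q : Set (Zd I)) (h E : ℝ) (F : Zd I → ℝ) : Prop :=
  ∀ k : Fin I, ∀ m : ℤ, ∀ z ∈ Q, z + sg k m ∈ Q →
    |F (z + sg k m) - F z| ≤ E * Real.sqrt (|(m:ℝ)| * h)

lemma AH.mono {Q Q' : Set (Zd I)} {h E E' : ℝ} {F : Zd I → ℝ} (hF : AH Q h E F)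
    (hQ : Q' ⊆ Q) (hE : E ≤ E') : AH Q' h E' F := fun k m z hz hz' =>
  (hF k m z (hQ hz) (hQ hz')).trans (mul_le_mul_of_nonneg_right hE (Real.sqrt_nonneg _))

lemma AH.add {Q : Set (Zd I)} {h E E' : ℝ} {F G : Zd I → ℝ} (hF : AH Q h E F)
    (hG : AH Q h E' G) : AH Q h (E + E') (fun x => F x + G x) := fun k m z hz hz' => by
  have h1 := hF k m z hz hz'
  have h2 := hG k m z hz hz'
  calc _ = |(F (z + sg k m) - F z) + (G (z + sg k m) - G z)| := by ring_nf
    _ ≤ _ := (abs_add_le _ _).trans (by linarith)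

lemma AH.neg {Q : Set (Zd I)} {h E : ℝ} {F : Zd I → ℝ} (hF : AH Q h E F) :
    AH Q h E (fun x => - F x) := fun k m z hz hz' => by
  have h1 := hF k m z hz hz'
  calc _ = |(F (z + sg k m) - F z)| := by rw [← abs_neg]; ring_nf
    _ ≤ _ := h1

lemma AH.sub {Q : Set (Zd I)} {h E E' : ℝ} {F G : Zd I → ℝ} (hF : AH Q h E F)
    (hG : AH Q h E' G) : AH Q h (E + E') (fun x => F x - G x) := by
  simpa [sub_eq_add_neg] using hF.add hG.neg

lemma AH.sum {Q : Set (Zd I)} {h E : ℝ} {F : Fin I → Zd I → ℝ} (hF : ∀ j, AH Q h E (F j)) :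
    AH Q h (I * E) (fun x => ∑ j, F j x) := fun k m z hz hz' => by
  rw [← Finset.sum_sub_distrib]
  refine (Finset.abs_sum_le_sum_abs _ _).trans
    ((Finset.sum_le_sum fun j _ => hF j k m z hz hz').trans ?_)
  simp [mul_assoc]

lemma AH.mul {Q : Set (Zd I)} {h E E' B B' : ℝ} {F G : Zd I → ℝ} (hF : AH Q h E F)
    (hG : AH Q h E' G) (hB : ∀ z ∈ Q, |F z| ≤ B) (hB' : ∀ z ∈ Q, |G z| ≤ B') :
    AH Q h (B * E' + B' * E) (fun x => F x * G x) := fun k m z hz hz' => by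
  have h1 := hF k m z hz hz'
  have h2 := hG k m z hz hz'
  calc _ = |F (z + sg k m) * (G (z + sg k m) - G z) + G z * (F (z + sg k m) - F z)| := by
        ring_nf
    _ ≤ |F (z + sg k m)| * |G (z + sg k m) - G z| + |G z| * |F (z + sg k m) - F z| := by
        refine (abs_add_le _ _).trans ?_
        rw [abs_mul, abs_mul]
    _ ≤ B * (E' * Real.sqrt (|(m:ℝ)| * h)) + B' * (E * Real.sqrt (|(m:ℝ)| * h)) :=
        add_le_add (mul_le_mul (hB _ hz') h2 (abs_nonneg _) ((abs_nonneg _).trans (hB _ hz')))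
          (mul_le_mul (hB' _ hz) h1 (abs_nonneg _) ((abs_nonneg _).trans (hB' _ hz)))
    _ = _ := by ring

lemma AH.const_mul {Q : Set (Zd I)} {h E : ℝ} {F : Zd I → ℝ} (hF : AH Q h E F) (a : ℝ) :
    AH Q h (|a| * E) (fun x => a * F x) := fun k m z hz hz' => by
  have h1 := hF k m z hz hz'
  rw [← mul_sub, abs_mul, mul_assoc]
  exact mul_le_mul_of_nonneg_left h1 (abs_nonneg _)

lemma AH.const_add {Q : Set (Zd I)} {h E : ℝ} {F : Zd I → ℝ} (hF : AH Q h E F) (a : ℝ) :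
    AH Q h E (fun x => a + F x) := fun k m z hz hz' => by
  simpa using hF k m z hz hz'

lemma iInf_sub_le [Nonempty (Fin I)] (a b : Fin I → ℝ) (e : ℝ) (h : ∀ i, |a i - b i| ≤ e) :
    |(⨅ i, a i) - ⨅ i, b i| ≤ e := by
  have key : ∀ a b : Fin I → ℝ, (∀ i, |a i - b i| ≤ e) → (⨅ i, a i) - ⨅ i, b i ≤ e := by
    intro a b h
    obtain ⟨i, hi⟩ := exists_eq_ciInf_of_finite (f := b)
    rw [← hi]
    have h1 := ciInf_le (Set.finite_range a).bddBelow i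
    have h2 := (abs_le.1 (h i)).2
    linarith
  rw [abs_le]
  constructor
  · have := key b a fun i => by rw [abs_sub_comm]; exact h i
    linarith
  · exact key a b h

lemma AH.iInf [Nonempty (Fin I)] {Q : Set (Zd I)} {h E : ℝ} {F : Fin I → Zd I → ℝ}
    (hF : ∀ j, AH Q h E (F j)) :
    AH Q h E (fun x => ⨅ j, F j x) := fun k m z hz hw =>
  iInf_sub_le _ _ _ fun i => hF i k m z hz hw

/-- A Lipschitz function on a small cube is Hölder, with a small constant. -/
lemma AH.of_lip {x0 : Zd I} {r : ℕ} {h B δ : ℝ} (hh : 0 < h) (hB : 0 ≤ B) {F : Zd I → ℝ}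
    (hF : ∀ k, ∀ x ∈ Cube x0 r, |dif k 1 F x| ≤ B * h) (hδ : 0 ≤ δ) (hr : 2 * r * h ≤ δ ^ 2) :
    AH (Cube x0 r) h (B * δ) F := fun k m z hz hz' => by
  have h1 := cube_diff_le F x0 r (B * h) (by positivity) hF hz hz'
  have h2 : ∑ j, B * h * |(((z + sg k m) j : ℤ) : ℝ) - z j| = B * h * |(m:ℝ)| := by
    rw [Finset.sum_eq_single k]
    · simp
    · intro j _ hj; simp [hj]
    · simp
  rw [h2] at h1
  have h3 : |(m:ℝ)| ≤ 2 * r := by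
    have a1 := abs_le.1 (hz k); have a2 := abs_le.1 (hz' k)
    simp only [Pi.add_apply, sg_same] at a2
    have : |m| ≤ 2 * r := by rw [abs_le]; constructor <;> omega
    exact_mod_cast this
  have h4 : |(m:ℝ)| * h ≤ δ ^ 2 := (mul_le_mul_of_nonneg_right h3 hh.le).trans hr
  have h5 : Real.sqrt (|(m:ℝ)| * h) ≤ δ := Real.sqrt_le_iff.2 ⟨hδ, h4⟩
  have h6 := Real.mul_self_sqrt (show 0 ≤ |(m:ℝ)| * h by positivity)
  refine h1.trans ?_
  calc B * h * |(m:ℝ)| = B * (Real.sqrt (|(m:ℝ)| * h) * Real.sqrt (|(m:ℝ)| * h)) := by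
        rw [h6]; ring
    _ ≤ B * (δ * Real.sqrt (|(m:ℝ)| * h)) := by gcongr
    _ = _ := by ring

/-- Passing from coordinate segments to arbitrary pairs of points of a cube. -/
lemma AH.pair {x0 : Zd I} {r : ℕ} {h E : ℝ} {F : Zd I → ℝ} (hh : 0 ≤ h) (hE : 0 ≤ E)
    (hF : AH (Cube x0 r) h E F)
    {x y : Zd I} (hx : x ∈ Cube x0 r) (hy : y ∈ Cube x0 r) (t : ℝ)
    (ht : ∀ k, |(y k : ℝ) - x k| ≤ t) : |F y - F x| ≤ I * (E * Real.sqrt (t * h)) := by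
  have := path_le F x y (fun _ => E * Real.sqrt (t * h)) ?_
  · simpa using this
  · intro k z hz hzk
    have hz1 : z ∈ Cube x0 r := by
      intro j; rcases hz j with h | h <;> rw [h]
      exacts [hx j, hy j]
    refine (hF k _ z hz1 ?_).trans ?_
    · intro j
      by_cases hj : j = k
      · subst hj; simpa [hzk] using hy j
      · simpa [hj] using hz1 j
    · have := ht k
      push_cast
      gcongr

/-! ### The difference scheme -/

/-- First difference quotient on the grid of mesh `h`. -/
def vq (h : ℝ) (u : Zd I → ℝ) (j : Fin I) (x : Zd I) : ℝ := dif j 1 u x / h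

/-- Mixed second difference quotient on the grid of mesh `h`. -/
def wq (h : ℝ) (u : Zd I → ℝ) (i j : Fin I) (x : Zd I) : ℝ := dif i 1 (dif j 1 u) x / h ^ 2

lemma wq_back (h : ℝ) (u : Zd I → ℝ) (j : Fin I) (x : Zd I) :
    wq h u j j (x + sg j (-1)) = sd j u x / h ^ 2 := by
  simp only [wq, dif, sd, single_add']
  norm_num
  ring

/-- Data of the equation: `d_j + μ_j x_j / 2` are the second order coefficients and
`b_j - μ_j x_j` the first order ones, before the control term is added. -/
structure Dat (I : ℕ) where
  /-- service rates -/
  μ : Fin I → ℝ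
  /-- holding costs -/
  c : Fin I → ℝ
  /-- constant part of the drift -/
  b : Fin I → ℝ
  /-- constant part of the diffusion -/
  d : Fin I → ℝ
  /-- discount rate -/
  γ : ℝ
  /-- radius of the ball -/
  R : ℝ
  hμ : ∀ i, 0 < μ i
  hc : ∀ i, 0 < c i
  hd : ∀ i, 0 < d i
  hγ : 0 < γ
  hR : 0 < R

/-- The queue length `(∑ x_j)^+` at the grid point. -/
def qs (h : ℝ) (x : Zd I) : ℝ := max (∑ j, h * (x j : ℝ)) 0

/-- The discrete Hamiltonian: the minimum over the controls. -/
def ham (P : Dat I) (h : ℝ) (u : Zd I → ℝ) (x : Zd I) : ℝ :=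
  ⨅ i, (P.c i + (P.μ i * vq h u i x - 1 / 2 * P.μ i * wq h u i i (x + sg i (-1))))

/-- The right-hand side when the equation is written as `∑ d_j δ_j² u / h² = f`. -/
def ff (P : Dat I) (h : ℝ) (u : Zd I → ℝ) (x : Zd I) : ℝ :=
  P.γ * u x - qs h x * ham P h u x - ∑ j, (P.b j - P.μ j * (h * (x j : ℝ))) * vq h u j x
    - ∑ j, (1 / 2 * P.μ j * (h * (x j : ℝ))) * wq h u j j (x + sg j (-1))

/-- Weighted interior Hölder bound for the second difference quotients. -/
def PS (R h : ℝ) (u : Zd I → ℝ) (S : ℝ) : Prop :=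
  ∀ i j k : Fin I, ∀ x : Zd I, 0 < Dd R h x → ∀ l : ℕ, l * h ≤ Dd R h x / 8 →
    |wq h u i j (x + sg k (l : ℤ)) - wq h u i j x|
      ≤ S * Real.sqrt (l * h) / (Dd R h x * Real.sqrt (Dd R h x))

lemma Dd_le (R h : ℝ) (x : Zd I) : Dd R h x ≤ R := by simp [Dd]

/-- Distances to the sphere are comparable inside a small cube. -/
lemma Dd_Cube' {R h : ℝ} (hh : 0 < h) {x0 x : Zd I} {r : ℕ}
    (hr : 32 * I * r * h ≤ Dd R h x0) (hx : x ∈ Cube x0 r) :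
    31 / 32 * Dd R h x0 ≤ Dd R h x ∧ Dd R h x ≤ 33 / 32 * Dd R h x0 := by
  have := abs_le.1 (Dd_Cube (R := R) hh.le hx)
  constructor <;> nlinarith [this.1, this.2]

lemma PS_AH {R h : ℝ} {u : Zd I → ℝ} {S : ℝ} (hS : 0 ≤ S) (hP : PS R h u S) (hh : 0 < h)
    {x0 : Zd I} (h0 : 0 < Dd R h x0) {r : ℕ} (hr : 32 * I * r * h ≤ Dd R h x0) (i j : Fin I) :
    AH (Cube x0 r) h (2 * S / (Dd R h x0 * Real.sqrt (Dd R h x0))) (wq h u i j) := by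
  have key : ∀ (k : Fin I) (l : ℕ), ∀ z ∈ Cube x0 r, z + sg k (l : ℤ) ∈ Cube x0 r →
      |wq h u i j (z + sg k (l:ℤ)) - wq h u i j z|
        ≤ 2 * S / (Dd R h x0 * Real.sqrt (Dd R h x0)) * Real.sqrt (l * h) := by
    intro k l z hz hz'
    have hI : (1:ℝ) ≤ I := by exact_mod_cast (k.pos)
    obtain ⟨d1, d2⟩ := Dd_Cube' hh hr hz
    have hl : (l:ℝ) ≤ 2 * r := by
      have a1 := abs_le.1 (hz k); have a2 := abs_le.1 (hz' k)
      simp only [Pi.add_apply, sg_same] at a2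
      have : l ≤ 2 * r := by omega
      exact_mod_cast this
    have hrh : 0 ≤ r * h := by positivity
    have h1 : l * h ≤ Dd R h z / 8 := by
      have : l * h ≤ 2 * r * h := mul_le_mul_of_nonneg_right hl hh.le
      have : (r:ℝ) * h ≤ I * (r * h) := by nlinarith
      nlinarith
    have hz0 : 0 < Dd R h z := by linarith
    refine (hP i j k z hz0 l h1).trans ?_
    have hs : 31 / 32 * Real.sqrt (Dd R h x0) ≤ Real.sqrt (Dd R h z) := by
      apply Real.le_sqrt_of_sq_le
      rw [mul_pow, Real.sq_sqrt h0.le]; linarith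
    have hs0 := Real.sqrt_pos.2 h0
    have hD : Dd R h x0 * Real.sqrt (Dd R h x0) / 2 ≤ Dd R h z * Real.sqrt (Dd R h z) := by
      calc _ ≤ (31 / 32 * Dd R h x0) * (31 / 32 * Real.sqrt (Dd R h x0)) := by nlinarith
        _ ≤ _ := mul_le_mul d1 hs (by positivity) hz0.le
    calc _ ≤ S * Real.sqrt (l * h) / (Dd R h x0 * Real.sqrt (Dd R h x0) / 2) := by
          gcongr
      _ = _ := by field_simp
  intro k m z hz hz'
  obtain ⟨l, rfl | rfl⟩ := m.eq_nat_or_neg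
  · simpa using key k l z hz hz'
  · have := key k l _ hz' (by simpa [single_add'] using hz)
    rw [single_add'] at this
    simpa [abs_sub_comm] using this

lemma shift_mem_Cube {x0 x : Zd I} {r : ℕ} (hx : x ∈ Cube x0 r) (k : Fin I) (m : ℤ)
    (hm : |m| ≤ 1) : x + sg k m ∈ Cube x0 (r + 1) :=
  Cube_trans hx (add_single_mem_Cube x k m (r := 1) (by simpa using hm)) le_rfl

/-- The right-hand side is Hölder; the only quantity that is not of lower order carries the small
factor `mb R`. -/
lemma ff_AH (P : Dat I) (hI : 0 < I) (mb : ℝ) (hmb : ∀ i, P.μ i ≤ mb) :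
    ∃ K : ℝ, 0 ≤ K ∧ ∀ (h : ℝ) (u : Zd I → ℝ) (S B : ℝ), 0 < h → 0 ≤ S → 0 ≤ B →
      PS P.R h u S → (∀ j x, 0 < Dd P.R h x → |vq h u j x| ≤ B) →
      (∀ i j x, 0 < Dd P.R h x → |wq h u i j x| * Dd P.R h x ≤ B) →
      ∀ (x0 : Zd I) (r : ℕ), 0 < Dd P.R h x0 → 32 * I * (r + 1 : ℕ) * h ≤ Dd P.R h x0 →
        AH (Cube x0 r) h ((2 * I * mb * P.R * S + K * (B + 1))
          / (Dd P.R h x0 * Real.sqrt (Dd P.R h x0))) (ff P h u) := by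
  have : Nonempty (Fin I) := ⟨⟨0, hI⟩⟩
  have hR := P.hR
  have hγ := P.hγ
  have hmb0 : 0 < mb := (P.hμ ⟨0, hI⟩).trans_le (hmb _)
  obtain ⟨bm, hbm⟩ : ∃ bm : ℝ, ∀ j, |P.b j| ≤ bm :=
    ⟨∑ j, |P.b j|, fun j => Finset.single_le_sum (f := fun j => |P.b j|)
      (fun _ _ => abs_nonneg _) (Finset.mem_univ j)⟩
  obtain ⟨cm, hcm⟩ : ∃ cm : ℝ, ∀ j, P.c j ≤ cm :=
    ⟨∑ j, P.c j, fun j => Finset.single_le_sum (f := P.c)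
      (fun i _ => (P.hc i).le) (Finset.mem_univ j)⟩
  have hbm0 : 0 ≤ bm := (abs_nonneg _).trans (hbm ⟨0, hI⟩)
  have hcm0 : 0 ≤ cm := (P.hc _).le.trans (hcm ⟨0, hI⟩)
  have hIR : (1:ℝ) ≤ I := by exact_mod_cast hI
  set R := P.R with hRdef
  refine ⟨P.γ * R ^ 2 + 2 * I * R * mb * R + (cm + mb) * R ^ 2 + mb * R
    + I * ((bm + mb * R) * (2 * R) + mb * R ^ 2) + I * mb * R, by positivity, ?_⟩
  intro h u S B hh hS hB hP hv hw x0 r h0 hr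
  set D0 := Dd R h x0 with hD0
  set δ := Real.sqrt D0 with hδ
  have hδ0 : 0 < δ := Real.sqrt_pos.2 h0
  have hδ2 : δ * δ = D0 := Real.mul_self_sqrt h0.le
  have hD0R : D0 ≤ R := Dd_le _ _ _
  have hQ : Cube x0 r ⊆ Cube x0 (r + 1) := fun x hx =>
    Cube_trans hx (self_mem_Cube x 0) (by omega)
  have hpos : ∀ x ∈ Cube x0 (r + 1), D0 / 2 ≤ Dd R h x := fun x hx => by
    have := (Dd_Cube' hh hr hx).1
    linarith
  have hrh : 2 * (r:ℝ) * h ≤ δ ^ 2 := by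
    have : 0 ≤ (r:ℝ) * h := by positivity
    have e : 32 * (I:ℝ) * (r + 1 : ℕ) * h = 32 * I * (r * h) + 32 * I * h := by push_cast; ring
    have : 0 ≤ 32 * (I:ℝ) * h := by positivity
    have : (r:ℝ) * h ≤ I * (r * h) := by nlinarith
    rw [e] at hr
    rw [sq, hδ2]; linarith
  -- sup bounds
  set K1 := 2 * B / D0 with hK1
  have hK10 : 0 ≤ K1 := by positivity
  have hwb : ∀ i j, ∀ x ∈ Cube x0 (r + 1), |wq h u i j x| ≤ K1 := fun i j x hx => by
    have hx1 := hpos x hx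
    have := hw i j x (by linarith)
    rw [hK1, le_div_iff₀ h0]
    nlinarith [abs_nonneg (wq h u i j x)]
  have hvb : ∀ j, ∀ x ∈ Cube x0 r, |vq h u j x| ≤ B := fun j x hx =>
    hv j x (by have := hpos x (hQ hx); linarith)
  have hxb : ∀ j, ∀ x ∈ Cube x0 r, |h * (x j : ℝ)| ≤ R := fun j x hx => by
    have h1 := hpos x (hQ hx)
    have h2 := abs_apply_le_norm (pt h x) j
    simp only [Dd] at h1
    rw [pt_apply] at h2
    linarith
  have hsb : ∀ x ∈ Cube x0 r, |qs h x| ≤ I * R := fun x hx => by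
    have h1 : ∑ j, h * (x j : ℝ) ≤ ∑ _j : Fin I, R :=
      Finset.sum_le_sum fun j _ => (abs_le.1 (hxb j x hx)).2
    simp only [Finset.sum_const, Finset.card_univ, Fintype.card_fin, nsmul_eq_mul] at h1
    rw [qs, abs_of_nonneg (le_max_right _ _)]
    exact max_le h1 (by positivity)
  -- Hölder bounds
  set Ew := 2 * S / (D0 * δ) with hEw
  have hEw0 : 0 ≤ Ew := by positivity
  have hwA : ∀ i j, AH (Cube x0 (r + 1)) h Ew (wq h u i j) := fun i j =>
    PS_AH hS hP hh h0 hr i j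
  have hwA' : ∀ j, AH (Cube x0 r) h Ew (fun x => wq h u j j (x + sg j (-1))) := by
    intro j k m z hz hz'
    have := hwA j j k m (z + sg j (-1)) (shift_mem_Cube hz _ _ (by simp))
      (by rw [add_single_comm]; exact shift_mem_Cube hz' _ _ (by simp))
    rwa [add_single_comm] at this
  have hwb' : ∀ j, ∀ x ∈ Cube x0 r, |wq h u j j (x + sg j (-1))| ≤ K1 := fun j x hx =>
    hwb j j _ (shift_mem_Cube hx _ _ (by simp))
  have hvA : ∀ j, AH (Cube x0 r) h (K1 * δ) (vq h u j) := fun j => by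
    refine AH.of_lip hh hK10 ?_ hδ0.le hrh
    intro k x hx
    have := hwb k j x (hQ hx)
    have e : dif k 1 (vq h u j) x = wq h u k j x * h := by
      simp only [vq, wq, dif]; field_simp
    rw [e, abs_mul, abs_of_pos hh]
    exact mul_le_mul_of_nonneg_right this hh.le
  have huA : AH (Cube x0 r) h (B * δ) u := by
    refine AH.of_lip hh hB ?_ hδ0.le hrh
    intro k x hx
    have := hvb k x hx
    have e : dif k 1 u x = vq h u k x * h := by
      simp only [vq]; field_simp
    rw [e, abs_mul, abs_of_pos hh]
    exact mul_le_mul_of_nonneg_right this hh.le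
  have hxA : ∀ j, AH (Cube x0 r) h (1 * δ) (fun x => h * (x j : ℝ)) := fun j => by
    refine AH.of_lip hh zero_le_one ?_ hδ0.le hrh
    intro k x hx
    by_cases hj : j = k
    · subst hj; simp [dif, mul_add, abs_of_pos hh]
    · simp [dif, hj, hh.le]
  have hsA : AH (Cube x0 r) h (1 * δ) (qs h) := by
    refine AH.of_lip hh zero_le_one ?_ hδ0.le hrh
    intro k x hx
    have e : ∑ j, h * (((x + sg k 1) j : ℤ) : ℝ) = ∑ j, h * (x j : ℝ) + h := by
      simp only [Pi.add_apply, Int.cast_add, mul_add, Finset.sum_add_distrib]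
      congr 1
      rw [Finset.sum_eq_single k]
      · simp
      · intro j _ hj; simp [hj]
      · simp
    simp only [dif, qs, e]
    refine (abs_max_sub_max_le_abs _ _ _).trans ?_
    simp [abs_of_pos hh]
  have hhamA : AH (Cube x0 r) h (mb * (K1 * δ) + 1 / 2 * mb * Ew) (ham P h u) := by
    refine AH.iInf fun i => AH.const_add (AH.mono (((hvA i).const_mul (P.μ i)).sub
      ((hwA' i).const_mul (1 / 2 * P.μ i))) subset_rfl ?_) _
    have := P.hμ i
    rw [abs_of_pos this, abs_of_pos (by positivity)]
    have := hmb i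
    gcongr
  have hhamb : ∀ x ∈ Cube x0 r, |ham P h u x| ≤ cm + mb * B + 1 / 2 * mb * K1 := by
    intro x hx
    obtain ⟨i, hi⟩ := exists_eq_ciInf_of_finite
      (f := fun i => (P.c i + (P.μ i * vq h u i x - 1 / 2 * P.μ i * wq h u i i (x + sg i (-1)))))
    rw [ham, ← hi]
    have h1 := hvb i x hx
    have h2 := hwb' i x hx
    have h3 := P.hμ i
    have h4 := hmb i
    calc _ ≤ |P.c i| + (|P.μ i * vq h u i x| + |1 / 2 * P.μ i * wq h u i i (x + sg i (-1))|) :=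
          (abs_add_le _ _).trans (add_le_add le_rfl (abs_sub _ _))
      _ = P.c i + (P.μ i * |vq h u i x| + 1 / 2 * P.μ i * |wq h u i i (x + sg i (-1))|) := by
          rw [abs_mul, abs_mul, abs_of_pos (P.hc i), abs_of_pos h3,
            abs_of_pos (show 0 < 1 / 2 * P.μ i by positivity)]
      _ ≤ cm + (mb * B + 1 / 2 * mb * K1) := by
          have := hcm i
          gcongr
      _ = _ := by ring
  have T1 := huA.const_mul P.γ
  have T2 := hsA.mul hhamA hsb hhamb
  have T3 : AH (Cube x0 r) h (I * ((bm + mb * R) * (K1 * δ) + B * (mb * δ)))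
      (fun x => ∑ j, (P.b j - P.μ j * (h * (x j : ℝ))) * vq h u j x) := by
    refine AH.sum fun j => ?_
    refine AH.mul (E := mb * δ) (AH.mono (((hxA j).const_mul (P.μ j)).neg.const_add (P.b j))
      subset_rfl ?_) (hvA j) ?_ (hvb j)
    · rw [abs_of_pos (P.hμ j), one_mul]
      have := hmb j
      gcongr
    · intro z hz
      have h1 := hxb j z hz
      have h2 := hbm j
      have h3 := P.hμ j
      have h4 := hmb j
      refine (abs_sub _ _).trans ?_
      rw [abs_mul, abs_of_pos h3]
      gcongr
  have T4 : AH (Cube x0 r) h (I * ((1 / 2 * mb * R) * Ew + K1 * (1 / 2 * mb * δ)))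
      (fun x => ∑ j, (1 / 2 * P.μ j * (h * (x j : ℝ))) * wq h u j j (x + sg j (-1))) := by
    refine AH.sum fun j => ?_
    have h3 := P.hμ j
    have h4 := hmb j
    refine AH.mul (E := 1 / 2 * mb * δ) (AH.mono ((hxA j).const_mul (1 / 2 * P.μ j))
      subset_rfl ?_) (hwA' j) ?_ (hwb' j)
    · rw [abs_of_pos (by positivity), one_mul]
      gcongr
    · intro z hz
      have h1 := hxb j z hz
      rw [abs_mul, abs_of_pos (by positivity)]
      gcongr
  refine AH.mono (((T1.sub T2).sub T3).sub T4) subset_rfl ?_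
  rw [abs_of_pos hγ, le_div_iff₀ (by positivity)]
  have e1 : Ew * (D0 * δ) = 2 * S := by rw [hEw]; field_simp
  have e2 : K1 * δ * (D0 * δ) = 2 * B * D0 := by
    rw [hK1, ← hδ2]; field_simp
  have e3 : δ * (D0 * δ) = D0 ^ 2 := by linear_combination D0 * hδ2
  have f3 : D0 ^ 2 ≤ R ^ 2 := by gcongr
  have f2 : 2 * B * D0 ≤ 2 * B * R := by gcongr
  calc _ = P.γ * B * (δ * (D0 * δ)) + I * R * mb * (Ew * (D0 * δ))
        + I * R * mb * (K1 * δ * (D0 * δ)) + (cm + mb * B) * (δ * (D0 * δ))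
        + 1 / 2 * mb * (K1 * δ * (D0 * δ))
        + I * ((bm + mb * R) * (K1 * δ * (D0 * δ)) + B * mb * (δ * (D0 * δ)))
        + I * (1 / 2 * mb * (K1 * δ * (D0 * δ))) := by ring
    _ = P.γ * B * D0 ^ 2 + I * R * mb * (2 * S)
        + I * R * mb * (2 * B * D0) + (cm + mb * B) * D0 ^ 2
        + 1 / 2 * mb * (2 * B * D0)
        + I * ((bm + mb * R) * (2 * B * D0) + B * mb * D0 ^ 2)
        + I * (1 / 2 * mb * (2 * B * D0)) := by rw [e1, e2, e3]
    _ ≤ P.γ * B * R ^ 2 + I * R * mb * (2 * S)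
        + I * R * mb * (2 * B * R) + (cm + mb * B) * R ^ 2
        + 1 / 2 * mb * (2 * B * R)
        + I * ((bm + mb * R) * (2 * B * R) + B * mb * R ^ 2)
        + I * (1 / 2 * mb * (2 * B * R)) := by gcongr
    _ ≤ 2 * I * mb * R * S + (P.γ * R ^ 2 + 2 * I * R * mb * R + (cm + mb) * R ^ 2 + mb * R
        + I * ((bm + mb * R) * (2 * R) + mb * R ^ 2) + I * mb * R) * (B + 1) := by
      have p1 : 0 ≤ P.γ * R ^ 2 := by positivity
      have p2 : 0 ≤ 2 * I * R * mb * R := by positivity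
      have p3 : 0 ≤ (cm * B + mb) * R ^ 2 := by positivity
      have p4 : 0 ≤ mb * R := by positivity
      have p5 : 0 ≤ I * ((bm + mb * R) * (2 * R) + mb * R ^ 2) := by positivity
      have p6 : 0 ≤ I * mb * R := by positivity
      linarith

/-! ### Interpolation -/

lemma dif_vq (h : ℝ) (hh : 0 < h) (u : Zd I → ℝ) (k j : Fin I) (x : Zd I) :
    dif k 1 (vq h u j) x = wq h u k j x * h := by
  simp only [vq, wq, dif]; field_simp

set_option maxHeartbeats 1000000 in
/-- Difference quotients of order one and two are bounded by a small multiple of the Hölder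
constant of the second ones, provided the function itself decays linearly at the sphere. -/
lemma interp (hI : 0 < I) (R C0 : ℝ) (hC0 : 0 ≤ C0) (η : ℝ) (hη : 0 < η) :
    ∃ C : ℝ, 0 ≤ C ∧ ∀ (h : ℝ) (u : Zd I → ℝ) (S : ℝ), 0 < h → 0 ≤ S → PS R h u S →
      (∀ x, |u x| ≤ C0 * (max (Dd R h x) 0 + h)) →
      (∀ j x, 0 < Dd R h x → |vq h u j x| ≤ η * S + C) ∧
      (∀ i j x, 0 < Dd R h x → |wq h u i j x| * Dd R h x ≤ η * S + C) := by
  have hIR : (1:ℝ) ≤ I := by exact_mod_cast hI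
  obtain ⟨θ, hθ0, hθ1, hθ2⟩ : ∃ θ : ℝ, 0 < θ ∧ 64 * I * θ ≤ 1 ∧ 4 * Real.sqrt θ ≤ η := by
    refine ⟨min (1 / (64 * I)) ((η / 4) ^ 2), by positivity, ?_, ?_⟩
    · have := min_le_left (1 / (64 * (I:ℝ))) ((η / 4) ^ 2)
      rw [le_div_iff₀ (by positivity)] at this
      linarith
    · have : Real.sqrt (min (1 / (64 * (I:ℝ))) ((η / 4) ^ 2)) ≤ η / 4 :=
        Real.sqrt_le_iff.2 ⟨by positivity, min_le_right _ _⟩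
      linarith
  have hθ3 : 64 * θ ≤ 1 := by nlinarith
  set Cw := 4 * (C0 * (1 / θ + 2 * I + 1)) / θ + 48 * C0 / θ ^ 2 with hCw
  have hCw0 : 0 ≤ Cw := by positivity
  set Cv := 2 * (C0 * (1 / θ + 2 * I + 1)) + 12 * C0 / θ with hCv
  have hCv0 : 0 ≤ Cv := by positivity
  refine ⟨Cw + Cv, by positivity, ?_⟩
  intro h u S hh hS hP hu
  have near : ∀ x, 0 < Dd R h x → θ * Dd R h x < h → ∀ y ∈ Cube x 2,
      |u y| ≤ C0 * (1 / θ + 2 * I + 1) * h := by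
    intro x hx hxh y hy
    have h1 := (abs_le.1 (Dd_Cube (R := R) hh.le hy)).2
    have h2 : Dd R h x ≤ 1 / θ * h := by
      rw [one_div, inv_mul_eq_div, le_div_iff₀ hθ0]; linarith
    push_cast at h1
    have h3 : max (Dd R h y) 0 ≤ 1 / θ * h + I * (2 * h) := max_le (by linarith) (by positivity)
    refine (hu y).trans ?_
    rw [mul_assoc]
    refine mul_le_mul_of_nonneg_left ?_ hC0
    linarith
  have far : ∀ x, 0 < Dd R h x → ¬ θ * Dd R h x < h → ∃ l : ℕ, 1 ≤ l ∧
      l * h ≤ θ * Dd R h x ∧ θ * Dd R h x ≤ 2 * (l * h) ∧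
      32 * I * (2 * l : ℕ) * h ≤ Dd R h x ∧
      ∀ y ∈ Cube x (2 * l), |u y| ≤ C0 * (3 * Dd R h x) := by
    intro x hx hxh
    push Not at hxh
    have h1 : 1 ≤ θ * Dd R h x / h := by rw [le_div_iff₀ hh]; linarith
    have hl1 : 1 ≤ ⌊θ * Dd R h x / h⌋₊ := Nat.one_le_floor_iff _ |>.2 h1
    have hl2 : (⌊θ * Dd R h x / h⌋₊ : ℝ) * h ≤ θ * Dd R h x := by
      have := Nat.floor_le (show 0 ≤ θ * Dd R h x / h by positivity)
      rwa [le_div_iff₀ hh] at this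
    have hl3 : θ * Dd R h x < (⌊θ * Dd R h x / h⌋₊ + 1) * h := by
      have := Nat.lt_floor_add_one (θ * Dd R h x / h)
      rwa [div_lt_iff₀ hh] at this
    generalize ⌊θ * Dd R h x / h⌋₊ = l at hl1 hl2 hl3
    have hl1R : (1:ℝ) ≤ l := by exact_mod_cast hl1
    have hr : 32 * I * (2 * l : ℕ) * h ≤ Dd R h x := by
      push_cast
      calc 32 * (I:ℝ) * (2 * l) * h = 64 * I * (l * h) := by ring
        _ ≤ 64 * I * (θ * Dd R h x) := by gcongr
        _ = (64 * I * θ) * Dd R h x := by ring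
        _ ≤ 1 * Dd R h x := by gcongr
        _ = _ := one_mul _
    refine ⟨l, hl1, hl2, by nlinarith, hr, ?_⟩
    intro y hy
    have h2 := (Dd_Cube' hh hr hy).2
    have h3 : max (Dd R h y) 0 ≤ 2 * Dd R h x := max_le (by linarith) (by positivity)
    refine (hu y).trans (mul_le_mul_of_nonneg_left ?_ hC0)
    nlinarith
  have W : ∀ i j x, 0 < Dd R h x → |wq h u i j x| * Dd R h x ≤ η * S + Cw := by
    intro i j x hx
    by_cases hc : θ * Dd R h x < h
    · have nb := near x hx hc
      set m := C0 * (1 / θ + 2 * I + 1) with hm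
      have hm0 : 0 ≤ m := by positivity
      have m1 : ∀ a b : ℤ, 0 ≤ a → a ≤ 1 → 0 ≤ b → b ≤ 1 → x + sg i a + sg j b ∈ Cube x 2 := by
        intro a b ha1 ha2 hb1 hb2
        exact Cube_trans (add_single_mem_Cube x i a (r := 1) (by rw [abs_le]; constructor <;> omega))
          (add_single_mem_Cube _ j b (r := 1) (by rw [abs_le]; constructor <;> omega)) le_rfl
      have b1 := abs_le.1 (nb _ (m1 0 0 (by simp) (by simp) (by simp) (by simp)))
      have b2 := abs_le.1 (nb _ (m1 1 0 (by simp) (by simp) (by simp) (by simp)))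
      have b3 := abs_le.1 (nb _ (m1 0 1 (by simp) (by simp) (by simp) (by simp)))
      have b4 := abs_le.1 (nb _ (m1 1 1 (by simp) (by simp) (by simp) (by simp)))
      simp only [sg_zero, add_zero] at b1 b2 b3 b4
      have hw : |dif i 1 (dif j 1 u) x| ≤ 4 * (m * h) := by
        simp only [dif]
        rw [abs_le]; constructor <;> linarith [b1.1, b1.2, b2.1, b2.2, b3.1, b3.2, b4.1, b4.2]
      rw [wq, abs_div, abs_of_pos (by positivity : 0 < h ^ 2), div_mul_eq_mul_div,
        div_le_iff₀ (by positivity)]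
      have hxh : Dd R h x ≤ h / θ := by rw [le_div_iff₀ hθ0]; linarith
      calc _ ≤ 4 * (m * h) * (h / θ) := by gcongr
        _ = 4 * m / θ * h ^ 2 := by ring
        _ ≤ (η * S + Cw) * h ^ 2 := by
            refine mul_le_mul_of_nonneg_right ?_ (by positivity)
            have : 0 ≤ 48 * C0 / θ ^ 2 := by positivity
            have : 0 ≤ η * S := by positivity
            linarith
    · obtain ⟨l, hl1, hl2, hl3, hr, hub⟩ := far x hx hc
      set D0 := Dd R h x with hD0
      have hl1R : (1:ℝ) ≤ l := by exact_mod_cast hl1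
      have hlh : 0 < l * h := by positivity
      have hA := PS_AH hS hP hh hx hr i j
      rw [← hD0] at hA
      set E := 2 * S / (D0 * Real.sqrt D0) with hE
      have hs0 := Real.sqrt_pos.2 hx
      have hE0 : 0 ≤ E := by positivity
      have hes : E * Real.sqrt (l * h) ≤ 2 * S * Real.sqrt θ / D0 := by
        have : Real.sqrt (l * h) ≤ Real.sqrt θ * Real.sqrt D0 := by
          rw [← Real.sqrt_mul hθ0.le]; exact Real.sqrt_le_sqrt hl2
        calc _ ≤ E * (Real.sqrt θ * Real.sqrt D0) := by gcongr
          _ = _ := by rw [hE]; field_simp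
      have hab : ∀ a ∈ Finset.range l, ∀ b ∈ Finset.range l,
          |wq h u i j (x + sg i (a:ℤ) + sg j (b:ℤ)) - wq h u i j x|
            ≤ 4 * S * Real.sqrt θ / D0 := by
        intro a ha b hb
        have ha := Finset.mem_range.1 ha
        have hb := Finset.mem_range.1 hb
        have q0 : x ∈ Cube x (2 * l) := self_mem_Cube _ _
        have q1' : x + sg i (a:ℤ) ∈ Cube x l :=
          add_single_mem_Cube x i a (by rw [abs_le]; constructor <;> omega)
        have q1 : x + sg i (a:ℤ) ∈ Cube x (2 * l) :=
          Cube_trans q1' (self_mem_Cube _ 0) (by omega)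
        have q2 : x + sg i (a:ℤ) + sg j (b:ℤ) ∈ Cube x (2 * l) :=
          Cube_trans q1' (add_single_mem_Cube _ j b (r := l)
            (by rw [abs_le]; constructor <;> omega)) (by omega)
        have e1 := hA i a x q0 q1
        have e2 := hA j b _ q1 q2
        have l1 : E * Real.sqrt (|((a:ℤ):ℝ)| * h) ≤ E * Real.sqrt (l * h) := by
          have : |((a:ℤ):ℝ)| ≤ l := by simp; omega
          gcongr
        have l2 : E * Real.sqrt (|((b:ℤ):ℝ)| * h) ≤ E * Real.sqrt (l * h) := by
          have : |((b:ℤ):ℝ)| ≤ l := by simp; omega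
          gcongr
        have e3 := abs_sub_le (wq h u i j (x + sg i (a:ℤ) + sg j (b:ℤ)))
          (wq h u i j (x + sg i (a:ℤ))) (wq h u i j x)
        have : 4 * S * Real.sqrt θ / D0 = 2 * (2 * S * Real.sqrt θ / D0) := by ring
        linarith
      have hsum : dif i l (dif j l u) x = ∑ a ∈ Finset.range l, ∑ b ∈ Finset.range l,
          h ^ 2 * wq h u i j (x + sg i (a:ℤ) + sg j (b:ℤ)) := by
        rw [dif_dif_eq_sum]
        refine Finset.sum_congr rfl fun a _ => Finset.sum_congr rfl fun b _ => ?_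
        rw [wq]; field_simp
      have hmain : |dif i l (dif j l u) x - (l * h) ^ 2 * wq h u i j x|
          ≤ (l * h) ^ 2 * (4 * S * Real.sqrt θ / D0) := by
        have : dif i l (dif j l u) x - (l * h) ^ 2 * wq h u i j x
            = ∑ a ∈ Finset.range l, ∑ b ∈ Finset.range l,
              h ^ 2 * (wq h u i j (x + sg i (a:ℤ) + sg j (b:ℤ)) - wq h u i j x) := by
          rw [hsum]
          simp only [mul_sub, Finset.sum_sub_distrib, Finset.sum_const, Finset.card_range,
            nsmul_eq_mul]
          ring
        rw [this]
        refine (Finset.abs_sum_le_sum_abs _ _).trans ((Finset.sum_le_sum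
          (g := fun _ => ∑ _b ∈ Finset.range l, h ^ 2 * (4 * S * Real.sqrt θ / D0)) fun a ha =>
          (Finset.abs_sum_le_sum_abs _ _).trans (Finset.sum_le_sum fun b hb => ?_)).trans_eq ?_)
        · rw [abs_mul, abs_of_pos (by positivity : 0 < h ^ 2)]
          exact mul_le_mul_of_nonneg_left (hab a ha b hb) (by positivity)
        · simp only [Finset.sum_const, Finset.card_range, nsmul_eq_mul]; ring
      have hdd : |dif i l (dif j l u) x| ≤ 12 * C0 * D0 := by
        have m1 : ∀ a b : ℕ, a ≤ l → b ≤ l → x + sg i (a:ℤ) + sg j (b:ℤ) ∈ Cube x (2 * l) := by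
          intro a b ha hb
          exact Cube_trans (add_single_mem_Cube x i a (r := l)
              (by rw [abs_le]; constructor <;> omega))
            (add_single_mem_Cube _ j b (r := l) (by rw [abs_le]; constructor <;> omega)) (by omega)
        have b1 := abs_le.1 (hub _ (m1 0 0 (by simp) (by simp)))
        have b2 := abs_le.1 (hub _ (m1 l 0 (by simp) (by simp)))
        have b3 := abs_le.1 (hub _ (m1 0 l (by simp) (by simp)))
        have b4 := abs_le.1 (hub _ (m1 l l (by simp) (by simp)))
        simp only [Nat.cast_zero, sg_zero, add_zero] at b1 b2 b3 b4
        simp only [dif]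
        rw [abs_le]; constructor <;> linarith [b1.1, b1.2, b2.1, b2.2, b3.1, b3.2, b4.1, b4.2]
      have h5 : (l * h) ^ 2 * |wq h u i j x| ≤ 12 * C0 * D0 + (l * h) ^ 2 * (4 * S * Real.sqrt θ / D0) := by
        rw [← abs_of_pos (show 0 < (l * h) ^ 2 by positivity), ← abs_mul,
          abs_of_pos (show 0 < (l * h) ^ 2 by positivity)]
        have a1 := abs_le.1 hmain
        have a2 := abs_le.1 hdd
        rw [abs_le]; constructor <;> linarith [a1.1, a1.2, a2.1, a2.2]
      have h6 : (θ * D0) ^ 2 / 4 ≤ (l * h) ^ 2 := by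
        have : 0 ≤ θ * D0 := by positivity
        nlinarith
      have h7 : 12 * C0 * D0 ≤ (l * h) ^ 2 * (48 * C0 / (θ ^ 2 * D0)) := by
        calc 12 * C0 * D0 = (θ * D0) ^ 2 / 4 * (48 * C0 / (θ ^ 2 * D0)) := by
              field_simp; ring
          _ ≤ _ := by gcongr
      have h8 : |wq h u i j x| ≤ 48 * C0 / (θ ^ 2 * D0) + 4 * S * Real.sqrt θ / D0 := by
        have : (l * h) ^ 2 * |wq h u i j x|
            ≤ (l * h) ^ 2 * (48 * C0 / (θ ^ 2 * D0) + 4 * S * Real.sqrt θ / D0) := by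
          rw [mul_add]; linarith
        exact le_of_mul_le_mul_left this (by positivity)
      calc _ ≤ (48 * C0 / (θ ^ 2 * D0) + 4 * S * Real.sqrt θ / D0) * D0 := by gcongr
        _ = 48 * C0 / θ ^ 2 + 4 * Real.sqrt θ * S := by field_simp
        _ ≤ η * S + Cw := by
          have : 4 * Real.sqrt θ * S ≤ η * S := by gcongr
          have : 0 ≤ 4 * (C0 * (1 / θ + 2 * I + 1)) / θ := by positivity
          linarith
  refine ⟨?_, fun i j x hx => (W i j x hx).trans (by linarith)⟩
  intro j x hx
  by_cases hc : θ * Dd R h x < h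
  · have nb := near x hx hc
    set m := C0 * (1 / θ + 2 * I + 1) with hm
    have b1 := abs_le.1 (nb x (self_mem_Cube _ _))
    have b2 := abs_le.1 (nb _ (add_single_mem_Cube x j 1 (by simp)))
    rw [vq, abs_div, abs_of_pos hh, div_le_iff₀ hh]
    have hv : |dif j 1 u x| ≤ 2 * m * h := by
      simp only [dif]
      rw [abs_le]; constructor <;> linarith [b1.1, b1.2, b2.1, b2.2]
    refine hv.trans (mul_le_mul_of_nonneg_right ?_ hh.le)
    have : 0 ≤ 12 * C0 / θ := by positivity
    have : 0 ≤ η * S := by positivity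
    linarith
  · obtain ⟨l, hl1, hl2, hl3, hr, hub⟩ := far x hx hc
    set D0 := Dd R h x with hD0
    have hl1R : (1:ℝ) ≤ l := by exact_mod_cast hl1
    have hlh : 0 < l * h := by positivity
    set B0 := η * S + Cw with hB0
    have hB00 : 0 ≤ B0 := by positivity
    have hq : Cube x l ⊆ Cube x (2 * l) := fun y hy => Cube_trans hy (self_mem_Cube _ 0) (by omega)
    have hdv : ∀ k, ∀ y ∈ Cube x l, |dif k 1 (vq h u j) y| ≤ 2 * B0 / D0 * h := by
      intro k y hy
      have h1 := (Dd_Cube' hh hr (hq hy)).1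
      have hy0 : D0 / 2 ≤ Dd R h y := by linarith
      have h2 := W k j y (by linarith)
      rw [dif_vq h hh, abs_mul, abs_of_pos hh]
      refine mul_le_mul_of_nonneg_right ?_ hh.le
      rw [le_div_iff₀ hx]
      nlinarith [abs_nonneg (wq h u k j y)]
    have hva : ∀ a ∈ Finset.range l, |vq h u j (x + sg j (a:ℤ)) - vq h u j x| ≤ B0 := by
      intro a ha
      have ha := Finset.mem_range.1 ha
      have := cube_diff_le _ x l (2 * B0 / D0 * h) (by positivity) hdv (self_mem_Cube x l)
        (add_single_mem_Cube x j (a:ℤ) (by rw [abs_le]; constructor <;> omega))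
      rw [Finset.sum_eq_single j] at this
      · simp only [Pi.add_apply, sg_same, Int.cast_add, add_sub_cancel_left] at this
        have ha' : |(((a:ℕ):ℤ):ℝ)| ≤ l := by simp; omega
        calc _ ≤ _ := this
          _ ≤ 2 * B0 / D0 * h * l := by gcongr
          _ = 2 * B0 / D0 * (l * h) := by ring
          _ ≤ 2 * B0 / D0 * (θ * D0) := by gcongr
          _ = 2 * θ * B0 := by field_simp
          _ ≤ 1 * B0 := by gcongr; linarith
          _ = B0 := one_mul _
      · intro k _ hk; simp [hk]
      · simp
    have hmain : |dif j l u x - l * h * vq h u j x| ≤ l * h * B0 := by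
      have : dif j l u x - l * h * vq h u j x
          = ∑ a ∈ Finset.range l, h * (vq h u j (x + sg j (a:ℤ)) - vq h u j x) := by
        rw [dif_eq_sum]
        simp only [mul_sub, Finset.sum_sub_distrib, Finset.sum_const, Finset.card_range,
          nsmul_eq_mul]
        congr 1
        · refine Finset.sum_congr rfl fun a _ => ?_
          rw [vq]; field_simp
        · ring
      rw [this]
      refine (Finset.abs_sum_le_sum_abs _ _).trans ((Finset.sum_le_sum (g := fun _ => h * B0)
        fun a ha => ?_).trans_eq ?_)
      · rw [abs_mul, abs_of_pos hh]
        exact mul_le_mul_of_nonneg_left (hva a ha) hh.le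
      · simp only [Finset.sum_const, Finset.card_range, nsmul_eq_mul]; ring
    have b1 := abs_le.1 (hub x (self_mem_Cube _ _))
    have b2 := abs_le.1 (hub _ (add_single_mem_Cube x j (l:ℤ)
      (by rw [abs_le]; constructor <;> omega)))
    have a1 := abs_le.1 hmain
    have h5 : l * h * |vq h u j x| ≤ 6 * C0 * D0 + l * h * B0 := by
      rw [← abs_of_pos hlh, ← abs_mul, abs_of_pos hlh]
      simp only [dif] at a1
      rw [abs_le]; constructor <;> linarith [a1.1, a1.2, b1.1, b1.2, b2.1, b2.2]
    have h7 : 6 * C0 * D0 ≤ l * h * (12 * C0 / θ) := by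
      calc 6 * C0 * D0 = (θ * D0) / 2 * (12 * C0 / θ) := by field_simp; ring
        _ ≤ _ := by gcongr; linarith
    have h8 : |vq h u j x| ≤ 12 * C0 / θ + B0 := by
      have : l * h * |vq h u j x| ≤ l * h * (12 * C0 / θ + B0) := by rw [mul_add]; linarith
      exact le_of_mul_le_mul_left this hlh
    have : 0 ≤ 2 * (C0 * (1 / θ + 2 * I + 1)) := by positivity
    linarith

/-! ### Third differences -/

lemma Lap_dif (d : Fin I → ℝ) (i : Fin I) (m : ℤ) (F : Zd I → ℝ) (x : Zd I) :
    Lap d (dif i m F) x = dif i m (Lap d F) x := by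
  simp only [Lap, dif, sd, ← Finset.sum_sub_distrib]
  refine Finset.sum_congr rfl fun j _ => ?_
  rw [add_single_comm j i x 1 m, add_single_comm j i x (-1) m]
  ring

lemma Lap_div (d : Fin I → ℝ) (F : Zd I → ℝ) (a : ℝ) (x : Zd I) :
    Lap d (fun y => F y / a) x = Lap d F x / a := by
  simp only [Lap, sd, Finset.sum_div]
  refine Finset.sum_congr rfl fun j _ => ?_
  ring

lemma Lap_Wd (d : Fin I → ℝ) (i j : Fin I) (p : ℕ) (F : Zd I → ℝ) (x : Zd I) :
    Lap d (Wd i j p F) x = Wd i j p (Lap d F) x := by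
  have e : Wd i j p F = fun y => dif i ((2 ^ p : ℕ) : ℤ) (dif j ((2 ^ p : ℕ) : ℤ) F) y / 4 ^ p := rfl
  rw [e, Lap_div, Lap_dif]
  simp only [Wd, dif]
  have := Lap_dif d j ((2 ^ p : ℕ) : ℤ) F
  simp only [dif] at this
  rw [this, this]

lemma sqrt_two_pow (p : ℕ) (h : ℝ) : Real.sqrt (2 ^ p * h) = Real.sqrt h * Real.sqrt 2 ^ p := by
  rw [Real.sqrt_mul (by positivity), mul_comm]
  congr 1
  rw [Real.sqrt_eq_iff_mul_self_eq (by positivity) (by positivity), ← mul_pow,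
    Real.mul_self_sqrt (by norm_num)]

/-- The quotient at scale `2 ^ p` is an average of translates of the finest one. -/
lemma Wd_sub_le (i j : Fin I) (p : ℕ) (F : Zd I → ℝ) (x y : Zd I) (e : ℝ)
    (he : ∀ a b : ℕ, a ≤ 2 ^ p → b ≤ 2 ^ p →
      |Wd i j 0 F (x + sg i (a:ℤ) + sg j (b:ℤ)) - Wd i j 0 F (y + sg i (a:ℤ) + sg j (b:ℤ))| ≤ e) :
    |Wd i j p F x - Wd i j p F y| ≤ e := by
  have h4 : (0:ℝ) < 4 ^ p := by positivity
  have e1 : Wd i j p F x - Wd i j p F y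
      = (∑ a ∈ Finset.range (2 ^ p), ∑ b ∈ Finset.range (2 ^ p),
        (Wd i j 0 F (x + sg i (a:ℤ) + sg j (b:ℤ)) - Wd i j 0 F (y + sg i (a:ℤ) + sg j (b:ℤ))))
        / 4 ^ p := by
    simp only [Finset.sum_sub_distrib]
    rw [sub_div]
    simp only [Wd]
    rw [dif_dif_eq_sum, dif_dif_eq_sum]
    simp
  rw [e1, abs_div, abs_of_pos h4, div_le_iff₀ h4]
  refine (Finset.abs_sum_le_sum_abs _ _).trans ((Finset.sum_le_sum
    (g := fun _ => ∑ _b ∈ Finset.range (2 ^ p), e) fun a ha =>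
    (Finset.abs_sum_le_sum_abs _ _).trans (Finset.sum_le_sum fun b hb => ?_)).trans_eq ?_)
  · exact he a b (Finset.mem_range.1 ha).le (Finset.mem_range.1 hb).le
  · simp only [Finset.sum_const, Finset.card_range, nsmul_eq_mul]
    have : (4:ℝ) ^ p = 2 ^ p * 2 ^ p := by rw [← mul_pow]; norm_num
    rw [this]; push_cast; ring

/-- Improved Hölder bound for the second difference quotients: the a priori Hölder constant `Ew`
enters only with the small factor `1 / n0`. -/
lemma third_diff (d : Fin I → ℝ) (hd : ∀ j, 0 < d j) (Λ dm : ℝ) (hdm : 0 < dm)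
    (hdm' : ∀ k, dm ≤ d k) (hΛ : ∀ k, ∑ j, d j ≤ Λ * d k) (hΛ0 : 0 ≤ Λ) (n0 : ℕ) (hn0 : 2 ≤ n0)
    (h : ℝ) (hh : 0 < h) (u f : Zd I → ℝ) (x0 : Zd I) (r P : ℕ)
    (hr : (n0 ^ 2 + 6) * 2 ^ P ≤ r) (Ew Φ : ℝ) (hEw : 0 < Ew) (hΦ : 0 ≤ Φ)
    (hw : ∀ i j, AH (Cube x0 r) h Ew (wq h u i j)) (hf : AH (Cube x0 r) h Φ f)
    (heq : ∀ x ∈ Cube x0 r, Lap d u x / h ^ 2 = f x)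
    (i j k : Fin I) (l : ℕ) (hl : l < 2 ^ P) :
    |wq h u i j (x0 + sg k (l:ℤ)) - wq h u i j x0|
      ≤ 21 * (Real.sqrt h * (2 * I * Ew * (1 + Λ) / n0 + 2 * Φ * n0 ^ 2 / dm)) * Real.sqrt 2 ^ P := by
  have hI1 : (0:ℝ) < I := by exact_mod_cast k.pos
  have hn0R : (0:ℝ) < n0 := by exact_mod_cast (by omega : 0 < n0)
  set U : Zd I → ℝ := fun y => u y / h ^ 2 with hU
  have hV0 : ∀ i j x, Wd i j 0 U x = wq h u i j x := by
    intro i j x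
    simp only [Wd, wq, dif, hU]
    norm_num; ring
  have hq : (4:ℝ) / 3 ≤ Real.sqrt 2 := Real.le_sqrt_of_sq_le (by norm_num)
  rw [← hV0, ← hV0]
  set A := Real.sqrt h * (2 * I * Ew * (1 + Λ) / n0 + 2 * Φ * n0 ^ 2 / dm) with hA
  refine telescope (fun p => Wd i j p U) i j (fun p x => Wd_succ i j p U x) x0 P A (Real.sqrt 2)
    (by positivity) hq ?_ k l hl
  intro p hp m x hx
  have hpP : 2 * 2 ^ p ≤ 2 ^ P := by
    rw [← pow_succ']; exact Nat.pow_le_pow_right (by norm_num) hp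
  set t := 2 ^ p with ht
  set T := 2 ^ P with hT
  have hr' : n0 ^ 2 * t + 2 * t + 2 * T ≤ r := by nlinarith
  have ht0 : 0 < t := by positivity
  have htR : (0:ℝ) < t := by exact_mod_cast ht0
  -- On a cube of half-side `n0 ^ 2 t` the oscillation grows only like `n0`, while the gradient
  -- estimate divides it by the half-side.
  set M := n0 ^ 2 * t with hM
  have hM2 : 2 * t ≤ M := Nat.mul_le_mul_right _ (by nlinarith)
  have hpt : ∀ y ∈ Cube x M, ∀ a b : ℕ, a ≤ t → b ≤ t → ∀ i j,
      y + sg i (a:ℤ) + sg j (b:ℤ) ∈ Cube x0 r := by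
    intro y hy a b ha hb i j
    refine Cube_trans hx (Cube_trans hy (Cube_trans
      (add_single_mem_Cube y i a (r := t) (by rw [abs_le]; constructor <;> omega))
      (add_single_mem_Cube _ j b (r := t) (by rw [abs_le]; constructor <;> omega)) le_rfl)
      le_rfl) ?_
    omega
  set s := Real.sqrt (t * h) with hs
  have hs0 : 0 < s := Real.sqrt_pos.2 (by positivity)
  have hsA : s = Real.sqrt h * Real.sqrt 2 ^ p := by
    rw [hs, ← sqrt_two_pow]; simp [ht]
  have hosc : ∀ y ∈ Cube x M, ∀ z ∈ Cube x M, |Wd i j p U y - Wd i j p U z|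
      ≤ I * (Ew * (2 * n0 * s)) := by
    intro y hy z hz
    refine Wd_sub_le i j p U y z _ ?_
    intro a b ha hb
    rw [hV0, hV0]
    refine ((hw i j).pair hh.le hEw.le (hpt z hz a b ha hb i j) (hpt y hy a b ha hb i j)
      (2 * M) ?_).trans ?_
    · intro k
      have a1 := abs_le.1 (hy k); have a2 := abs_le.1 (hz k)
      have : |(y + sg i (a:ℤ) + sg j (b:ℤ)) k - (z + sg i (a:ℤ) + sg j (b:ℤ)) k| ≤ 2 * M := by
        simp only [Pi.add_apply]
        rw [abs_le]; constructor <;> omega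
      exact_mod_cast this
    · have : Real.sqrt (2 * M * h) ≤ 2 * n0 * s := by
        rw [Real.sqrt_le_left (by positivity), mul_pow, hs, Real.sq_sqrt (by positivity), hM]
        push_cast
        nlinarith [show (0:ℝ) ≤ n0 ^ 2 * t * h by positivity]
      gcongr
  have hlap : ∀ y ∈ Cube x M, |Lap d (Wd i j p U) y| ≤ 2 * Φ * s / 4 ^ p := by
    intro y hy
    rw [Lap_Wd]
    simp only [Wd]
    have h4 : (0:ℝ) < 4 ^ p := by positivity
    rw [abs_div, abs_of_pos h4]
    refine div_le_div_of_nonneg_right ?_ h4.le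
    have hLf : ∀ a b : ℕ, a ≤ t → b ≤ t →
        Lap d U (y + sg i (a:ℤ) + sg j (b:ℤ)) = f (y + sg i (a:ℤ) + sg j (b:ℤ)) := by
      intro a b ha hb
      rw [hU, Lap_div, heq _ (hpt y hy a b ha hb i j)]
    have c1 := hLf 0 0 (by omega) (by omega)
    have c2 := hLf t 0 (by omega) (by omega)
    have c3 := hLf 0 t (by omega) (by omega)
    have c4 := hLf t t (by omega) (by omega)
    have p1 := hpt y hy 0 0 (by omega) (by omega) i j
    have p2 := hpt y hy t 0 (by omega) (by omega) i j
    have p3 := hpt y hy 0 t (by omega) (by omega) i j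
    have p4 := hpt y hy t t (by omega) (by omega) i j
    simp only [Nat.cast_zero, sg_zero, add_zero] at c1 c2 c3 c4 p1 p2 p3 p4
    have f1 := abs_le.1 (hf j t y p1 p3)
    have f2 := abs_le.1 (hf j t _ p2 p4)
    simp only [Int.cast_natCast, Nat.abs_cast] at f1 f2
    rw [← hs] at f1 f2
    simp only [dif]
    rw [c1, c2, c3, c4, abs_le]
    constructor <;> linarith [f1.1, f1.2, f2.1, f2.2]
  have hfin : (t:ℝ) * (I * (Ew * (2 * n0 * s)) / M * (1 + Λ) + 2 * Φ * s / 4 ^ p * M / d m)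
      ≤ A * Real.sqrt 2 ^ p := by
    have e1 : (t:ℝ) * (I * (Ew * (2 * n0 * s)) / M * (1 + Λ))
        = s * (2 * I * Ew * (1 + Λ) / n0) := by
      rw [hM]; push_cast; field_simp
    have e4 : (4:ℝ) ^ p = t * t := by rw [ht]; push_cast; rw [← mul_pow]; norm_num
    have e2 : (t:ℝ) * (2 * Φ * s / 4 ^ p * M / d m) = s * (2 * Φ * n0 ^ 2 / d m) := by
      have := hd m
      rw [hM, e4]; push_cast; field_simp
    have e3 : 2 * Φ * n0 ^ 2 / d m ≤ 2 * Φ * n0 ^ 2 / dm := by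
      have := hdm' m
      gcongr
    rw [mul_add, e1, e2, ← mul_add, hA, mul_right_comm (Real.sqrt h), ← hsA]
    gcongr
  have hMlt : t + 1 ≤ M := by omega
  have g1 := grad_est d hd Λ (Wd i j p U) x m (hΛ m) t M (by omega) hMlt
    (I * (Ew * (2 * n0 * s))) (2 * Φ * s / 4 ^ p) (by positivity) (by positivity)
    (fun y hy z hz => (abs_le.1 (hosc y hy z hz)).2) hlap
  have g2 := grad_est d hd Λ (fun y => - Wd i j p U y) x m (hΛ m) t M (by omega) hMlt
    (I * (Ew * (2 * n0 * s))) (2 * Φ * s / 4 ^ p) (by positivity) (by positivity)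
    (fun y hy z hz => by
      have := (abs_le.1 (hosc y hy z hz)).1
      linarith) (fun y hy => by
      have e : Lap d (fun y => - Wd i j p U y) y = - Lap d (Wd i j p U) y := by
        simp only [Lap, sd, ← Finset.sum_neg_distrib]
        exact Finset.sum_congr rfl fun _ _ => by ring
      rw [e, abs_neg]; exact hlap y hy)
  rw [abs_le]
  constructor <;> linarith

/-! ### The uniform interior estimate -/

/-- `u` solves the scheme of mesh `h` in the ball and vanishes outside. -/
def IsU (P : Dat I) (h : ℝ) (u : Zd I → ℝ) : Prop :=
  (∀ x, 0 < Dd P.R h x → Lap P.d u x / h ^ 2 = ff P h u x) ∧ ∀ x, Dd P.R h x ≤ 0 → u x = 0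

lemma Dd_axis {R h : ℝ} (hh : 0 ≤ h) (x : Zd I) (k : Fin I) (l : ℕ) :
    Dd R h x - l * h ≤ Dd R h (x + sg k (l:ℤ)) := by
  have e : pt h (x + sg k (l:ℤ)) = pt h x + EuclideanSpace.single k ((l:ℝ) * h) := by
    ext j
    by_cases hj : j = k
    · subst hj; simp; ring
    · simp [hj]
  have h1 : ‖pt h (x + sg k (l:ℤ))‖ ≤ ‖pt h x‖ + l * h := by
    rw [e]
    refine (norm_add_le _ _).trans ?_
    have : 0 ≤ (l:ℝ) * h := by positivity
    rw [PiLp.norm_single, Real.norm_of_nonneg this]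
  simp only [Dd]; linarith

lemma PS.mono {R h S S' : ℝ} {u : Zd I → ℝ} (hP : PS R h u S) (hS : S ≤ S') : PS R h u S' := by
  intro i j k x hx l hl
  refine (hP i j k x hx l hl).trans ?_
  gcongr

/-- On a fixed grid the weighted Hölder constant is finite. -/
lemma PS_exists {R h M : ℝ} (hh : 0 < h) {u : Zd I → ℝ} (hu : ∀ x, |u x| ≤ M) :
    ∃ S, PS R h u S := by
  refine ⟨8 * M / h ^ 2 * (R * Real.sqrt R) / Real.sqrt h, ?_⟩
  intro i j k x hx l hl
  have hM : 0 ≤ M := (abs_nonneg _).trans (hu x)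
  have hR : 0 < R := hx.trans_le (Dd_le _ _ _)
  have hs := Real.sqrt_pos.2 hx
  have hsh := Real.sqrt_pos.2 hh
  rcases Nat.eq_zero_or_pos l with rfl | hl1
  · simp
  have hw : ∀ y, |wq h u i j y| ≤ 4 * M / h ^ 2 := by
    intro y
    rw [wq, abs_div, abs_of_pos (by positivity : 0 < h ^ 2)]
    refine div_le_div_of_nonneg_right ?_ (by positivity)
    simp only [dif]
    have b1 := abs_le.1 (hu y)
    have b2 := abs_le.1 (hu (y + sg i 1))
    have b3 := abs_le.1 (hu (y + sg j 1))
    have b4 := abs_le.1 (hu (y + sg i 1 + sg j 1))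
    rw [abs_le]; constructor <;> linarith [b1.1, b1.2, b2.1, b2.2, b3.1, b3.2, b4.1, b4.2]
  have h1 : |wq h u i j (x + sg k (l:ℤ)) - wq h u i j x| ≤ 8 * M / h ^ 2 := by
    refine (abs_sub _ _).trans ?_
    have := hw x
    have := hw (x + sg k (l:ℤ))
    have e : 8 * M / h ^ 2 = 4 * M / h ^ 2 + 4 * M / h ^ 2 := by ring
    linarith
  refine h1.trans ?_
  rw [le_div_iff₀ (by positivity)]
  have h2 : Dd R h x * Real.sqrt (Dd R h x) ≤ R * Real.sqrt R :=
    mul_le_mul (Dd_le _ _ _) (Real.sqrt_le_sqrt (Dd_le _ _ _)) hs.le hR.le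
  have h3 : Real.sqrt h ≤ Real.sqrt (l * h) := by
    refine Real.sqrt_le_sqrt ?_
    have : (1:ℝ) ≤ l := by exact_mod_cast hl1
    nlinarith
  calc 8 * M / h ^ 2 * (Dd R h x * Real.sqrt (Dd R h x))
      ≤ 8 * M / h ^ 2 * (R * Real.sqrt R) := by gcongr
    _ = 8 * M / h ^ 2 * (R * Real.sqrt R) / Real.sqrt h * Real.sqrt h := by field_simp
    _ ≤ _ := by gcongr

/-- Ratio parameter of the absorption argument: a difference of step `t` is estimated on a cube of
half-side `n0 ^ 2 * t`, and `n0` is so large that `1024 I (1 + Λ) ≤ n0`. -/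
def n0 (I : ℕ) (Λ : ℝ) : ℕ := ⌈1024 * I * (1 + Λ)⌉₊ + 2

set_option maxHeartbeats 1000000 in
/-- One step of the absorption argument: a Hölder bound `S` improves to `S / 2 + C`, because every
contribution of `S` to the estimate carries one of the small factors `1 / n0`, `n0 ^ 2 mb R / dm`
or `η`. -/
lemma PS_step (P : Dat I) (hI : 0 < I) (mb dm Λ : ℝ) (hmb : ∀ i, P.μ i ≤ mb) (hdm : 0 < dm)
    (hdm' : ∀ k, dm ≤ P.d k) (hΛ0 : 0 ≤ Λ) (hΛ : ∀ k, ∑ j, P.d j ≤ Λ * P.d k)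
    (hsmall : 1024 * (n0 I Λ) ^ 2 * I * (mb * P.R) ≤ dm) (C0 : ℝ) (hC0 : 0 ≤ C0) :
    ∃ C : ℝ, 1 ≤ C ∧ ∀ (h : ℝ) (u : Zd I → ℝ), 0 < h → IsU P h u →
      (∀ x, |u x| ≤ C0 * (max (Dd P.R h x) 0 + h)) →
      ∀ S, 1 ≤ S → PS P.R h u S → PS P.R h u (S / 2 + C) := by
  have hIR : (1:ℝ) ≤ I := by exact_mod_cast hI
  have hR := P.hR
  have hmb0 : 0 < mb := (P.hμ ⟨0, hI⟩).trans_le (hmb _)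
  obtain ⟨K, hK0, hK⟩ := ff_AH P hI mb hmb
  set n := n0 I Λ with hn
  have hn2 : 2 ≤ n := by simp [hn, n0]
  have hnR : (2:ℝ) ≤ n := by exact_mod_cast hn2
  have hnL : 1024 * I * (1 + Λ) ≤ n := by
    rw [hn, n0]; push_cast
    have := Nat.le_ceil (1024 * I * (1 + Λ))
    linarith
  -- `θ` separates short steps, for which the cube of half-side `r` below stays well inside the ball,
  -- from long ones; `η` is the interpolation parameter
  set θ : ℝ := 1 / (32 * I * (2 * n ^ 2 + 13)) with hθ
  have hθ0 : 0 < θ := by positivity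
  have hsθ := Real.sqrt_pos.2 hθ0
  set η : ℝ := min (dm / (512 * n ^ 2 * (K + 1))) (Real.sqrt θ / 6) with hη
  have hη0 : 0 < η := by positivity
  have hη1 : 64 * n ^ 2 * K * η ≤ dm / 8 := by
    have h1 := min_le_left (dm / (512 * n ^ 2 * (K + 1))) (Real.sqrt θ / 6)
    rw [← hη, le_div_iff₀ (by positivity)] at h1
    have : 0 ≤ (n:ℝ) ^ 2 * η := by positivity
    nlinarith
  have hη2 : 6 * η ≤ Real.sqrt θ := by
    have h1 := min_le_right (dm / (512 * n ^ 2 * (K + 1))) (Real.sqrt θ / 6)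
    rw [← hη] at h1; linarith
  obtain ⟨Cη, hCη0, hCη⟩ := interp hI P.R C0 hC0 η hη0
  refine ⟨1 + 64 * n ^ 2 * K * (Cη + 1) / dm + 3 * Cη / Real.sqrt θ, ?_, ?_⟩
  · have : 0 ≤ 64 * n ^ 2 * K * (Cη + 1) / dm + 3 * Cη / Real.sqrt θ := by positivity
    linarith
  intro h u hh hu hub S hS hP i j k x hx l hl
  have hS0 : 0 ≤ S := by linarith
  obtain ⟨hv, hw⟩ := hCη h u S hh hS0 hP hub
  set B := η * S + Cη with hB
  have hB0 : 0 ≤ B := by positivity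
  set D0 := Dd P.R h x with hD0
  have hs0 := Real.sqrt_pos.2 hx
  rcases Nat.eq_zero_or_pos l with rfl | hl1
  · simp
  have hlR : (1:ℝ) ≤ l := by exact_mod_cast hl1
  rw [le_div_iff₀ (by positivity)]
  by_cases hc : l * h ≤ θ * D0
  · -- the step is short: use the bound for third differences
    obtain ⟨p, hp1, hp2⟩ : ∃ p, l < 2 ^ p ∧ 2 ^ p ≤ 2 * l := by
      refine ⟨Nat.log 2 l + 1, Nat.lt_pow_succ_log_self (by norm_num) l, ?_⟩
      have := Nat.pow_log_le_self 2 (show l ≠ 0 by omega)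
      rw [pow_succ]; omega
    set r := (n ^ 2 + 6) * 2 ^ p with hr
    have hrl : r + 1 ≤ (2 * n ^ 2 + 13) * l := by
      rw [hr]; nlinarith
    have hrD : 32 * I * (r + 1 : ℕ) * h ≤ D0 := by
      have : ((r + 1 : ℕ):ℝ) ≤ (2 * n ^ 2 + 13) * l := by exact_mod_cast hrl
      calc 32 * I * (r + 1 : ℕ) * h ≤ 32 * I * ((2 * n ^ 2 + 13) * l) * h := by gcongr
        _ = 32 * I * (2 * n ^ 2 + 13) * (l * h) := by ring
        _ ≤ 32 * I * (2 * n ^ 2 + 13) * (θ * D0) := by gcongr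
        _ = D0 := by rw [hθ]; field_simp
    have hrD' : 32 * I * (r:ℝ) * h ≤ D0 := by
      refine le_trans ?_ hrD
      push_cast
      have : 0 ≤ 32 * (I:ℝ) * h := by positivity
      nlinarith
    have hf := hK h u S B hh hS0 hB0 hP hv hw x r hx hrD
    rw [← hD0] at hf
    set Z := D0 * Real.sqrt D0 with hZ
    have hZ0 : 0 < Z := by positivity
    have h3 := third_diff P.d P.hd Λ dm hdm hdm' hΛ hΛ0 n hn2 h hh u (ff P h u) x r p le_rfl
      (2 * S / Z) ((2 * I * mb * P.R * S + K * (B + 1)) / Z) (by positivity) (by positivity)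
      (fun i j => PS_AH hS0 hP hh hx hrD' i j) hf
      (fun y hy => hu.1 y (by have := (Dd_Cube' hh hrD' hy).1; linarith)) i j k l hp1
    have hsq : Real.sqrt h * Real.sqrt 2 ^ p ≤ 3 / 2 * Real.sqrt (l * h) := by
      rw [← sqrt_two_pow, Real.sqrt_le_left (by positivity), mul_pow,
        Real.sq_sqrt (by positivity)]
      have : (2:ℝ) ^ p ≤ 2 * l := by exact_mod_cast hp2
      nlinarith
    set X := 2 * I * (2 * S / Z) * (1 + Λ) / n
      + 2 * ((2 * I * mb * P.R * S + K * (B + 1)) / Z) * n ^ 2 / dm with hX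
    have hX0 : 0 ≤ X := by positivity
    have h4 : |wq h u i j (x + sg k (l:ℤ)) - wq h u i j x| ≤ 32 * X * Real.sqrt (l * h) := by
      calc _ ≤ _ := h3
        _ = 21 * X * (Real.sqrt h * Real.sqrt 2 ^ p) := by ring
        _ ≤ 21 * X * (3 / 2 * Real.sqrt (l * h)) := by gcongr
        _ ≤ _ := by nlinarith [mul_nonneg hX0 (Real.sqrt_nonneg (l * h))]
    have e1 : 32 * X * Z = 128 * I * (1 + Λ) / n * S
        + (128 * n ^ 2 * I * (mb * P.R) / dm * S + 64 * n ^ 2 * K * η / dm * S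
          + 64 * n ^ 2 * K * (Cη + 1) / dm) := by
      rw [hX, hB]; field_simp; ring
    -- the total coefficient of `S` is at most `3 / 8`
    have e2 : 128 * I * (1 + Λ) / n ≤ 1 / 8 := by
      rw [div_le_iff₀ (by positivity)]; linarith
    have e3 : 128 * n ^ 2 * I * (mb * P.R) / dm ≤ 1 / 8 := by
      rw [div_le_iff₀ hdm]; linarith
    have e4 : 64 * n ^ 2 * K * η / dm ≤ 1 / 8 := by
      rw [div_le_iff₀ hdm]; linarith
    have e5 : 32 * X * Z ≤ S / 2 + (1 + 64 * n ^ 2 * K * (Cη + 1) / dm + 3 * Cη / Real.sqrt θ) := by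
      rw [e1]
      have t1 := mul_le_mul_of_nonneg_right e2 hS0
      have t2 := mul_le_mul_of_nonneg_right e3 hS0
      have t3 := mul_le_mul_of_nonneg_right e4 hS0
      have : 0 ≤ 3 * Cη / Real.sqrt θ := by positivity
      linarith
    calc _ ≤ 32 * X * Real.sqrt (l * h) * Z := by gcongr
      _ = 32 * X * Z * Real.sqrt (l * h) := by ring
      _ ≤ _ := by gcongr
  · -- the step is long: use the sup bound
    push Not at hc
    have hd1 := Dd_axis (R := P.R) hh.le x k l
    rw [← hD0] at hd1
    have hd2 : 7 / 8 * D0 ≤ Dd P.R h (x + sg k (l:ℤ)) := by linarith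
    have w1 := hw i j x hx
    have w2 := hw i j (x + sg k (l:ℤ)) (by linarith)
    rw [← hD0] at w1
    have w3 : |wq h u i j (x + sg k (l:ℤ)) - wq h u i j x| * D0 ≤ 3 * B := by
      have a1 := abs_sub (wq h u i j (x + sg k (l:ℤ))) (wq h u i j x)
      have a2 := abs_nonneg (wq h u i j (x + sg k (l:ℤ)))
      nlinarith
    have w4 : Real.sqrt θ * Real.sqrt D0 ≤ Real.sqrt (l * h) := by
      rw [← Real.sqrt_mul hθ0.le]; exact Real.sqrt_le_sqrt hc.le
    have w5 : Real.sqrt D0 ≤ Real.sqrt (l * h) / Real.sqrt θ := by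
      rw [le_div_iff₀ hsθ]; linarith
    have w6 : 3 * B / Real.sqrt θ
        ≤ S / 2 + (1 + 64 * n ^ 2 * K * (Cη + 1) / dm + 3 * Cη / Real.sqrt θ) := by
      have t1 : 3 * B / Real.sqrt θ = 3 * η / Real.sqrt θ * S + 3 * Cη / Real.sqrt θ := by
        rw [hB]; ring
      have t2 : 3 * η / Real.sqrt θ ≤ 1 / 2 := by
        rw [div_le_iff₀ hsθ]; linarith
      have t3 := mul_le_mul_of_nonneg_right t2 hS0
      have : 0 ≤ 64 * n ^ 2 * K * (Cη + 1) / dm := by positivity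
      rw [t1]; linarith
    calc _ = |wq h u i j (x + sg k (l:ℤ)) - wq h u i j x| * D0 * Real.sqrt D0 := by ring
      _ ≤ 3 * B * Real.sqrt D0 := by gcongr
      _ ≤ 3 * B * (Real.sqrt (l * h) / Real.sqrt θ) := by gcongr
      _ = 3 * B / Real.sqrt θ * Real.sqrt (l * h) := by ring
      _ ≤ _ := by gcongr

/-- Interior estimates for the solutions of the scheme, uniform in the mesh. -/
lemma interior (P : Dat I) (hI : 0 < I) (mb dm Λ : ℝ) (hmb : ∀ i, P.μ i ≤ mb) (hdm : 0 < dm)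
    (hdm' : ∀ k, dm ≤ P.d k) (hΛ0 : 0 ≤ Λ) (hΛ : ∀ k, ∑ j, P.d j ≤ Λ * P.d k)
    (hsmall : 1024 * (n0 I Λ) ^ 2 * I * (mb * P.R) ≤ dm) (C0 : ℝ) (hC0 : 0 ≤ C0) :
    ∃ C : ℝ, 0 ≤ C ∧ ∀ (h : ℝ) (u : Zd I → ℝ), 0 < h → IsU P h u →
      (∀ x, |u x| ≤ C0 * (max (Dd P.R h x) 0 + h)) →
      PS P.R h u C ∧ (∀ j x, 0 < Dd P.R h x → |vq h u j x| ≤ C) ∧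
      (∀ i j x, 0 < Dd P.R h x → |wq h u i j x| * Dd P.R h x ≤ C) := by
  obtain ⟨C, hC1, hC⟩ := PS_step P hI mb dm Λ hmb hdm hdm' hΛ0 hΛ hsmall C0 hC0
  obtain ⟨C', hC'0, hC'⟩ := interp hI P.R C0 hC0 1 one_pos
  refine ⟨1 * (2 * C + 2) + C', by linarith, ?_⟩
  intro h u hh hu hub
  have hPS : PS P.R h u (2 * C + 2) := by
    have hbd : ∀ x, |u x| ≤ C0 * (P.R + h) := fun x => (hub x).trans (by
      have := max_le (Dd_le P.R h x) P.hR.le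
      gcongr)
    obtain ⟨S0, hS0⟩ := PS_exists (R := P.R) hh hbd
    set A : Set ℝ := {S | 1 ≤ S ∧ PS P.R h u S} with hA
    have hne : A.Nonempty := ⟨max S0 1, le_max_right _ _, hS0.mono (le_max_left _ _)⟩
    have hbb : BddBelow A := ⟨1, fun S hS => hS.1⟩
    obtain ⟨S, hS, hS'⟩ := exists_lt_of_csInf_lt hne (lt_add_one (sInf A))
    have h1 : S / 2 + C ∈ A := ⟨by linarith [hS.1], hC h u hh hu hub S hS.1 hS.2⟩
    have h2 := csInf_le hbb h1
    exact hS.2.mono (by linarith)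
  obtain ⟨h1, h2⟩ := hC' h u (2 * C + 2) hh (by linarith) hPS hub
  exact ⟨hPS.mono (by linarith), h1, h2⟩

/-! ### Solvability of the scheme and a barrier -/

/-- A finite controlled Markov chain problem with discounting has a solution: the value iteration
is a contraction. Here `p i j x`, `q i j x` are the jump rates from `x` to `x ± e_j` under the
control `i`, and `r i x` is the running cost. -/
lemma exists_fixed (hI : 0 < I) (Ω : Set (Zd I)) (hΩ : Ω.Finite) (γ : ℝ) (hγ : 0 < γ)
    (p q : Fin I → Fin I → Zd I → ℝ) (r : Fin I → Zd I → ℝ)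
    (hp : ∀ i j, ∀ x ∈ Ω, 0 ≤ p i j x) (hq : ∀ i j, ∀ x ∈ Ω, 0 ≤ q i j x) :
    ∃ u : Zd I → ℝ, (∀ x ∈ Ω, γ * u x = ⨅ i, (r i x
      + ∑ j, (p i j x * (u (x + sg j 1) - u x) + q i j x * (u (x + sg j (-1)) - u x))))
      ∧ ∀ x, x ∉ Ω → u x = 0 := by
  classical
  have : Nonempty (Fin I) := ⟨⟨0, hI⟩⟩
  have := hΩ.fintype
  -- a bound for the total jump rate, which fixes the time step `ε`
  obtain ⟨M, hM⟩ : ∃ M : ℝ, ∀ (x : Ω) (i : Fin I), ∑ j, (p i j x + q i j x) ≤ M := by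
    obtain ⟨M, hM⟩ := (Set.finite_range
      (fun y : Ω × Fin I => ∑ j, (p y.2 j y.1 + q y.2 j y.1))).bddAbove
    exact ⟨M, fun x i => hM ⟨(x, i), rfl⟩⟩
  set M' : ℝ := max M 0 with hM'
  have hM0 : 0 ≤ M' := le_max_right _ _
  set ε : ℝ := 1 / (M' + γ) with hε
  have hε0 : 0 < ε := by positivity
  have hεM : ε * (M' + γ) = 1 := by rw [hε]; field_simp
  let ext : (Ω → ℝ) → Zd I → ℝ := fun v x => if hx : x ∈ Ω then v ⟨x, hx⟩ else 0
  let G : (Ω → ℝ) → Fin I → Ω → ℝ := fun v i x => r i x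
      + ∑ j, (p i j x * (ext v (x + sg j 1) - ext v x)
        + q i j x * (ext v (x + sg j (-1)) - ext v x))
  let T : (Ω → ℝ) → (Ω → ℝ) := fun v x => v x + ε * ((⨅ i, G v i x) - γ * v x)
  have hext : ∀ v w : Ω → ℝ, ∀ x, |ext v x - ext w x| ≤ dist v w := by
    intro v w x
    by_cases hx : x ∈ Ω
    · simp only [ext, hx, dif_pos]
      exact dist_le_pi_dist v w ⟨x, hx⟩
    · simp [ext, hx]
  have hext' : ∀ (v : Ω → ℝ) (x : Ω), ext v x = v x := fun v x => by simp [ext]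
  have hlip : ∀ v w : Ω → ℝ, dist (T v) (T w) ≤ (1 - ε * γ) * dist v w := by
    intro v w
    have h1 : 0 ≤ 1 - ε * γ := by nlinarith
    refine (dist_pi_le_iff (by positivity)).2 fun x => ?_
    rw [Real.dist_eq]
    have hT : ∀ v, T v x = ⨅ i, (v x + ε * (G v i x - γ * v x)) := by
      intro v
      obtain ⟨i0, hi0⟩ := exists_eq_ciInf_of_finite (f := fun i => G v i x)
      refine le_antisymm (le_ciInf fun i => ?_) ?_
      · have : (⨅ i, G v i x) ≤ G v i x := ciInf_le (Set.finite_range _).bddBelow i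
        simp only [T]; gcongr
      · refine (ciInf_le (Set.finite_range _).bddBelow i0).trans ?_
        simp only [T]; rw [← hi0]
    rw [hT v, hT w]
    refine iInf_sub_le _ _ _ fun i => ?_
    have e : v x + ε * (G v i x - γ * v x) - (w x + ε * (G w i x - γ * w x))
        = (1 - ε * γ - ε * ∑ j, (p i j x + q i j x)) * (ext v x - ext w x)
          + ε * ∑ j, (p i j x * (ext v (x + sg j 1) - ext w (x + sg j 1))
            + q i j x * (ext v (x + sg j (-1)) - ext w (x + sg j (-1)))) := by
      have : (∑ j, (p i j x + q i j x)) * (ext v x - ext w x)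
          = ∑ j, (p i j x + q i j x) * (ext v x - ext w x) := Finset.sum_mul _ _ _
      have e2 : G v i x - G w i x = ∑ j, (p i j x * (ext v (x + sg j 1) - ext w (x + sg j 1))
            + q i j x * (ext v (x + sg j (-1)) - ext w (x + sg j (-1))))
            - (∑ j, (p i j x + q i j x)) * (ext v x - ext w x) := by
        rw [this, ← Finset.sum_sub_distrib]
        simp only [G]
        rw [add_sub_add_left_eq_sub, ← Finset.sum_sub_distrib]
        exact Finset.sum_congr rfl fun j _ => by ring
      rw [← hext' v x, ← hext' w x]
      linear_combination ε * e2
    rw [e]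
    have h2 : 0 ≤ 1 - ε * γ - ε * ∑ j, (p i j x + q i j x) := by
      have := (hM x i).trans (le_max_left M 0)
      nlinarith
    have h3 : |∑ j, (p i j x * (ext v (x + sg j 1) - ext w (x + sg j 1))
            + q i j x * (ext v (x + sg j (-1)) - ext w (x + sg j (-1))))|
        ≤ (∑ j, (p i j x + q i j x)) * dist v w := by
      rw [Finset.sum_mul]
      refine (Finset.abs_sum_le_sum_abs _ _).trans (Finset.sum_le_sum fun j _ => ?_)
      refine (abs_add_le _ _).trans ?_
      rw [abs_mul, abs_mul, abs_of_nonneg (hp i j x x.2), abs_of_nonneg (hq i j x x.2), add_mul]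
      exact add_le_add (mul_le_mul_of_nonneg_left (hext v w _) (hp i j x x.2))
        (mul_le_mul_of_nonneg_left (hext v w _) (hq i j x x.2))
    refine (abs_add_le _ _).trans ?_
    rw [abs_mul, abs_mul, abs_of_nonneg h2, abs_of_pos hε0]
    have := mul_le_mul_of_nonneg_left (hext v w x) h2
    have := mul_le_mul_of_nonneg_left h3 hε0.le
    linarith
  have hc : ContractingWith (1 - ε * γ).toNNReal T := by
    refine ⟨?_, LipschitzWith.of_dist_le_mul fun v w => ?_⟩
    · rw [Real.toNNReal_lt_one]; nlinarith
    · rw [Real.coe_toNNReal _ (by nlinarith)]; exact hlip v w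
  have hfix : T (ContractingWith.fixedPoint T hc) = ContractingWith.fixedPoint T hc :=
    ContractingWith.fixedPoint_isFixedPt hc
  set v := ContractingWith.fixedPoint T hc with hv
  refine ⟨ext v, fun x hx => ?_, fun x hx => by simp [ext, hx]⟩
  have h1 := congrFun hfix ⟨x, hx⟩
  have h2 : ε * ((⨅ i, G v i ⟨x, hx⟩) - γ * v ⟨x, hx⟩) = 0 := by
    have : T v ⟨x, hx⟩ = v ⟨x, hx⟩ + ε * ((⨅ i, G v i ⟨x, hx⟩) - γ * v ⟨x, hx⟩) := rfl
    linarith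
  have h3 := (mul_eq_zero.1 h2).resolve_left hε0.ne'
  have h4 : ext v x = v ⟨x, hx⟩ := hext' v ⟨x, hx⟩
  rw [h4]
  have : γ * v ⟨x, hx⟩ = ⨅ i, G v i ⟨x, hx⟩ := by linarith
  rw [this]; simp only [G, h4]

/-- Comparison for the discrete problem: nonnegative costs give a nonnegative solution, and a
nonnegative supersolution for a single control is an upper bound. -/
lemma comparison (hI : 0 < I) (Ω : Set (Zd I)) (hΩ : Ω.Finite) (γ : ℝ) (hγ : 0 < γ)
    (p q : Fin I → Fin I → Zd I → ℝ) (r : Fin I → Zd I → ℝ)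
    (hp : ∀ i j, ∀ x ∈ Ω, 0 ≤ p i j x) (hq : ∀ i j, ∀ x ∈ Ω, 0 ≤ q i j x)
    (hr : ∀ i, ∀ x ∈ Ω, 0 ≤ r i x) (u : Zd I → ℝ)
    (hu : ∀ x ∈ Ω, γ * u x = ⨅ i, (r i x
      + ∑ j, (p i j x * (u (x + sg j 1) - u x) + q i j x * (u (x + sg j (-1)) - u x))))
    (hu0 : ∀ x, x ∉ Ω → u x = 0) (W : Zd I → ℝ) (hW0 : ∀ x ∈ Ω, 0 ≤ W x)
    (hW0' : ∀ x ∈ Ω, ∀ j, 0 ≤ W (x + sg j 1) ∧ 0 ≤ W (x + sg j (-1))) (i0 : Fin I)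
    (hW : ∀ x ∈ Ω, r i0 x + ∑ j, (p i0 j x * (W (x + sg j 1) - W x)
      + q i0 j x * (W (x + sg j (-1)) - W x)) ≤ 0) :
    (∀ x, 0 ≤ u x) ∧ ∀ x ∈ Ω, u x ≤ W x := by
  have : Nonempty (Fin I) := ⟨⟨0, hI⟩⟩
  constructor
  · by_contra! hcon
    obtain ⟨y, hy⟩ := hcon
    have hyΩ : y ∈ Ω := by by_contra hn; rw [hu0 y hn] at hy; exact lt_irrefl _ hy
    obtain ⟨x, hx, hmin⟩ := Set.exists_min_image Ω u hΩ ⟨y, hyΩ⟩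
    have hxn : u x < 0 := (hmin y hyΩ).trans_lt hy
    have hall : ∀ z, u x ≤ u z := fun z => by
      by_cases hz : z ∈ Ω
      · exact hmin z hz
      · rw [hu0 z hz]; exact hxn.le
    have h1 : 0 ≤ γ * u x := by
      rw [hu x hx]
      refine le_ciInf fun i => add_nonneg (hr i x hx) (Finset.sum_nonneg fun j _ => ?_)
      have := mul_nonneg (hp i j x hx) (sub_nonneg.2 (hall (x + sg j 1)))
      have := mul_nonneg (hq i j x hx) (sub_nonneg.2 (hall (x + sg j (-1))))
      linarith
    nlinarith
  · by_contra! hcon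
    obtain ⟨y, hyΩ, hy⟩ := hcon
    obtain ⟨x, hx, hmax⟩ := Set.exists_max_image Ω (fun z => u z - W z) hΩ ⟨y, hyΩ⟩
    have hxp : 0 < u x - W x := by have := hmax y hyΩ; linarith
    have hall : ∀ z, 0 ≤ W z → u z - W z ≤ u x - W x := fun z hz => by
      by_cases hzΩ : z ∈ Ω
      · exact hmax z hzΩ
      · rw [hu0 z hzΩ]; linarith
    have h1 : γ * u x ≤ r i0 x + ∑ j, (p i0 j x * (u (x + sg j 1) - u x)
        + q i0 j x * (u (x + sg j (-1)) - u x)) := by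
      rw [hu x hx]; exact ciInf_le (Set.finite_range _).bddBelow i0
    have h2 : ∑ j, (p i0 j x * (u (x + sg j 1) - u x) + q i0 j x * (u (x + sg j (-1)) - u x))
        ≤ ∑ j, (p i0 j x * (W (x + sg j 1) - W x) + q i0 j x * (W (x + sg j (-1)) - W x)) := by
      refine Finset.sum_le_sum fun j _ => ?_
      have a1 := hall _ (hW0' x hx j).1
      have a2 := hall _ (hW0' x hx j).2
      exact add_le_add (mul_le_mul_of_nonneg_left (by linarith) (hp i0 j x hx))
        (mul_le_mul_of_nonneg_left (by linarith) (hq i0 j x hx))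
    have h3 := hW x hx
    have h4 := hW0 x hx
    nlinarith

/-- Diffusion coefficients of the equation under the control `i`. -/
def cA (P : Dat I) (s : ℝ) (i j : Fin I) (t : ℝ) : ℝ :=
  P.d j + 1 / 2 * P.μ j * t - if j = i then 1 / 2 * P.μ i * s else 0

/-- Drift coefficients of the equation under the control `i`. -/
def cB (P : Dat I) (s : ℝ) (i j : Fin I) (t : ℝ) : ℝ :=
  P.b j - P.μ j * t + if j = i then P.μ i * s else 0

/-- The equation, with the control-dependent terms collected. -/
lemma collect (P : Dat I) (s : ℝ) (i : Fin I) (t v w : Fin I → ℝ) :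
    s * (P.c i + (P.μ i * v i - 1 / 2 * P.μ i * w i)) + ∑ j, (P.b j - P.μ j * t j) * v j
      + ∑ j, (1 / 2 * P.μ j * t j) * w j + ∑ j, P.d j * w j
      = s * P.c i + ∑ j, (cA P s i j (t j) * w j + cB P s i j (t j) * v j) := by
  simp only [cA, cB, sub_mul, add_mul, Finset.sum_add_distrib, Finset.sum_sub_distrib, ite_mul,
    zero_mul, Finset.sum_ite_eq', Finset.mem_univ, if_true]
  ring

lemma mul_ciInf' [Nonempty (Fin I)] {s : ℝ} (hs : 0 ≤ s) (f : Fin I → ℝ) (e : ℝ) :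
    s * (⨅ i, f i) + e = ⨅ i, (s * f i + e) := by
  obtain ⟨i0, hi0⟩ := exists_eq_ciInf_of_finite (f := f)
  refine le_antisymm (le_ciInf fun i => ?_) ?_
  · have : (⨅ i, f i) ≤ f i := ciInf_le (Set.finite_range _).bddBelow i
    gcongr
  · refine (ciInf_le (Set.finite_range _).bddBelow i0).trans ?_
    rw [← hi0]

lemma qs_nonneg (h : ℝ) (x : Zd I) : 0 ≤ qs h x := le_max_right _ _

lemma abs_coord_lt {R h : ℝ} {x : Zd I} (hx : 0 < Dd R h x) (j : Fin I) : |h * (x j : ℝ)| < R := by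
  have := abs_apply_le_norm (pt h x) j
  rw [pt_apply] at this
  simp only [Dd] at hx
  linarith

lemma qs_le {R h : ℝ} (hR : 0 ≤ R) {x : Zd I} (hx : 0 < Dd R h x) : qs h x ≤ I * R := by
  refine max_le ?_ (by positivity)
  have : ∑ j : Fin I, h * (x j : ℝ) ≤ ∑ _j : Fin I, R :=
    Finset.sum_le_sum (g := fun _ => R) fun j _ => (le_abs_self _).trans (abs_coord_lt hx j).le
  simpa using this

lemma cA_ge (P : Dat I) {mb dm s t : ℝ} (hmb : ∀ i, P.μ i ≤ mb)
    (hdm' : ∀ k, dm ≤ P.d k) (hsm : (I + 1) * (mb * P.R) ≤ dm)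
    (hs0 : 0 ≤ s) (hs : s ≤ I * P.R) (ht : |t| ≤ P.R) (i j : Fin I) : dm / 2 ≤ cA P s i j t := by
  have hR := P.hR
  have h1 := hdm' j
  have h2 := (abs_le.1 ht).1
  have h3 : -(mb * P.R) ≤ P.μ j * t := by
    have := P.hμ j; have := hmb j
    nlinarith
  have h4 : P.μ i * s ≤ mb * (I * P.R) :=
    mul_le_mul (hmb i) hs hs0 ((P.hμ i).le.trans (hmb i))
  have h5 : 0 ≤ mb * (I * P.R) := by
    have := (P.hμ i).le.trans (hmb i); positivity
  unfold cA
  split_ifs <;> nlinarith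

lemma cB_le (P : Dat I) {mb b0 s t : ℝ} (hmb : ∀ i, P.μ i ≤ mb)
    (hb : ∀ k, |P.b k| ≤ b0)
    (hs0 : 0 ≤ s) (hs : s ≤ I * P.R) (ht : |t| ≤ P.R) (i j : Fin I) :
    |cB P s i j t| ≤ b0 + (I + 1) * (mb * P.R) := by
  have hR := P.hR
  have h1 := hb j
  have h3 : |P.μ j * t| ≤ mb * P.R := by
    rw [abs_mul, abs_of_pos (P.hμ j)]
    exact mul_le_mul (hmb j) ht (abs_nonneg _) ((P.hμ i).le.trans (hmb i))
  have h4 : P.μ i * s ≤ mb * (I * P.R) :=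
    mul_le_mul (hmb i) hs hs0 ((P.hμ i).le.trans (hmb i))
  have h5 : 0 ≤ P.μ i * s := mul_nonneg (P.hμ i).le hs0
  have h6 := abs_le.1 h1
  have h7 := abs_le.1 h3
  unfold cB
  rw [abs_le]
  split_ifs <;> constructor <;> linarith [h6.1, h6.2, h7.1, h7.2]

/-- One-dimensional computation for the barrier `e^{k r²}`: the discrete second derivative
dominates the drift term once `k` is large. -/
lemma exp_barrier {d0 b0 k R h t A B : ℝ} (hd0 : 0 < d0) (hb0 : 0 ≤ b0) (hk : 0 < k)
    (hh : 0 < h) (hk1 : b0 + b0 ^ 2 / (4 * d0) ≤ k * d0) (ht : |t| ≤ R)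
    (hh1 : h * (k + (k * h + 2 * k * R) ^ 2) ≤ 1) (hh2 : h * (k * h + 2 * k * R) ≤ 1)
    (hA : d0 ≤ A) (hB : |B| ≤ b0) :
    k * d0 * h ^ 2 ≤ A * (Real.exp (k * ((t + h) ^ 2 - t ^ 2)) +
      Real.exp (k * ((t - h) ^ 2 - t ^ 2)) - 2)
      + B * h * (Real.exp (k * ((t + h) ^ 2 - t ^ 2)) - 1) := by
  have e1 : k * ((t + h) ^ 2 - t ^ 2) = k * h ^ 2 + 2 * k * t * h := by ring
  have e2 : k * ((t - h) ^ 2 - t ^ 2) = k * h ^ 2 + -(2 * k * t * h) := by ring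
  rw [e1, e2]
  set z := 2 * k * t * h with hz
  -- `e^{a+z} + e^{a-z} ≥ 2 (1 + a) (1 + z² / 2)`
  have hcosh : 2 + z ^ 2 ≤ Real.exp z + Real.exp (-z) := by
    have s1 : |z / 2| ≤ |Real.sinh (z / 2)| := by
      rw [Real.abs_sinh]; exact Real.self_le_sinh_iff.2 (abs_nonneg _)
    have s2 := sq_le_sq.2 s1
    have s3 : Real.exp z = Real.exp (z / 2) ^ 2 := by rw [← Real.exp_nat_mul]; congr 1; push_cast; ring
    have s4 : Real.exp (-z) = Real.exp (-(z / 2)) ^ 2 := by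
      rw [← Real.exp_nat_mul]; congr 1; push_cast; ring
    have s5 : Real.exp (z / 2) * Real.exp (-(z / 2)) = 1 := by rw [← Real.exp_add]; simp
    rw [Real.sinh_eq] at s2
    rw [s3, s4]
    nlinarith
  have h1 : 2 * (k * h ^ 2) + z ^ 2 ≤
      Real.exp (k * h ^ 2 + z) + Real.exp (k * h ^ 2 + -z) - 2 := by
    rw [Real.exp_add, Real.exp_add, ← mul_add]
    have h2 := Real.add_one_le_exp (k * h ^ 2)
    have h3 : (0:ℝ) ≤ k * h ^ 2 := by positivity
    nlinarith [sq_nonneg z]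
  have habs : |k * h ^ 2 + z| ≤ h * (k * h + 2 * k * |t|) := by
    refine (abs_add_le _ _).trans ?_
    rw [abs_of_nonneg (by positivity : 0 ≤ k * h ^ 2), hz]
    simp only [abs_mul, abs_of_pos hk, abs_of_pos hh, abs_two]
    apply le_of_eq; ring
  have habs' : h * (k * h + 2 * k * |t|) ≤ h * (k * h + 2 * k * R) := by gcongr
  have h4 : |Real.exp (k * h ^ 2 + z) - 1| ≤ h * (1 + 2 * k * |t|) := by
    have h5 := Real.abs_exp_sub_one_sub_id_le (x := k * h ^ 2 + z) (by linarith)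
    have h6 : |Real.exp (k * h ^ 2 + z) - 1| ≤ |k * h ^ 2 + z| + (k * h ^ 2 + z) ^ 2 := by
      have : Real.exp (k * h ^ 2 + z) - 1
        = (k * h ^ 2 + z) + (Real.exp (k * h ^ 2 + z) - 1 - (k * h ^ 2 + z)) := by ring
      rw [this]
      exact (abs_add_le _ _).trans (by gcongr)
    have h7 : (k * h ^ 2 + z) ^ 2 ≤ (h * (k * h + 2 * k * R)) ^ 2 := by
      rw [← sq_abs]
      exact pow_le_pow_left₀ (abs_nonneg _) (habs.trans habs') 2
    have h8 : h * (h * (k + (k * h + 2 * k * R) ^ 2)) ≤ h * 1 := by gcongr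
    nlinarith
  have h9 : |B * h * (Real.exp (k * h ^ 2 + z) - 1)| ≤ b0 * h * (h * (1 + 2 * k * |t|)) := by
    rw [abs_mul, abs_mul, abs_of_pos hh]
    gcongr
  have h10 := (abs_le.1 h9).1
  have h11 : d0 * (2 * (k * h ^ 2) + z ^ 2) ≤ A * (Real.exp (k * h ^ 2 + z)
      + Real.exp (k * h ^ 2 + -z) - 2) :=
    mul_le_mul hA h1 (by positivity) (hd0.le.trans hA)
  have h12 : 2 * k * |t| * b0 ≤ d0 * (2 * k * |t|) ^ 2 + b0 ^ 2 / (4 * d0) := by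
    have : d0 * (2 * k * |t|) ^ 2 + b0 ^ 2 / (4 * d0) - 2 * k * |t| * b0
        = (2 * d0 * (2 * k * |t|) - b0) ^ 2 / (4 * d0) := by field_simp; ring
    have : 0 ≤ (2 * d0 * (2 * k * |t|) - b0) ^ 2 / (4 * d0) := by positivity
    linarith
  have h13 : z ^ 2 = (2 * k * |t|) ^ 2 * h ^ 2 := by rw [hz, mul_pow _ |t|, sq_abs]; ring
  have h14 : 0 ≤ h ^ 2 * (k * d0 - b0 - b0 ^ 2 / (4 * d0)) :=
    mul_nonneg (sq_nonneg _) (by linarith)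
  have h15 : 0 ≤ h ^ 2 * (d0 * (2 * k * |t|) ^ 2 + b0 ^ 2 / (4 * d0) - 2 * k * |t| * b0) :=
    mul_nonneg (sq_nonneg _) (by linarith)
  rw [h13] at h11
  nlinarith

lemma norm_pt_add (h : ℝ) (x : Zd I) (j : Fin I) (m : ℤ) :
    ‖pt h (x + sg j m)‖ ^ 2
      = ‖pt h x‖ ^ 2 + ((h * (x j : ℝ) + m * h) ^ 2 - (h * (x j : ℝ)) ^ 2) := by
  rw [EuclideanSpace.real_norm_sq_eq, EuclideanSpace.real_norm_sq_eq, ← sub_eq_iff_eq_add',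
    ← Finset.sum_sub_distrib, Finset.sum_eq_single j]
  · simp; ring
  · intro l _ hl; simp [hl]
  · simp

lemma finite_inside {R h : ℝ} (hh : 0 < h) : {x : Zd I | 0 < Dd R h x}.Finite := by
  refine (finite_Cube 0 ⌈R / h⌉₊).subset fun x hx j => ?_
  have h1 := abs_coord_lt hx j
  rw [abs_mul, abs_of_pos hh] at h1
  have h2 : |(x j : ℝ)| ≤ ⌈R / h⌉₊ :=
    le_trans (by rw [le_div_iff₀ hh]; linarith) (Nat.le_ceil (R / h))
  simp only [Pi.zero_apply, sub_zero]
  exact_mod_cast h2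

lemma exp_sub_le (a b : ℝ) : Real.exp a - Real.exp b ≤ Real.exp a * (a - b) := by
  have h1 := Real.add_one_le_exp (b - a)
  have h2 : Real.exp b = Real.exp a * Real.exp (b - a) := by rw [← Real.exp_add]; congr 1; ring
  rw [h2]
  nlinarith [Real.exp_pos a]

set_option maxHeartbeats 1000000 in
/-- The scheme is solvable for every small mesh, and its solution is bounded by a multiple of the
distance to the sphere, up to the mesh size. -/
lemma exists_scheme (P : Dat I) (hI : 0 < I) (mb dm b0 : ℝ) (hmb : ∀ i, P.μ i ≤ mb) (hdm : 0 < dm)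
    (hdm' : ∀ k, dm ≤ P.d k) (hb : ∀ k, |P.b k| ≤ b0) (hsm : (I + 1) * (mb * P.R) ≤ dm) :
    ∃ h0 C0 : ℝ, 0 < h0 ∧ h0 ≤ 1 ∧ 0 ≤ C0 ∧ ∀ h, 0 < h → h ≤ h0 →
      ∃ u : Zd I → ℝ, IsU P h u ∧ ∀ x, |u x| ≤ C0 * (max (Dd P.R h x) 0 + h) := by
  have : Nonempty (Fin I) := ⟨⟨0, hI⟩⟩
  set i0 : Fin I := ⟨0, hI⟩
  set R := P.R with hR
  have hR0 : 0 < R := P.hR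
  have hmb0 : 0 < mb := (P.hμ i0).trans_le (hmb i0)
  have hb00 : 0 ≤ b0 := (abs_nonneg _).trans (hb i0)
  set B0 := b0 + (I + 1) * (mb * R) with hB0
  have hB00 : 0 ≤ B0 := by positivity
  set d0 := dm / 2 with hd0
  have hd00 : 0 < d0 := by positivity
  set k := (B0 + B0 ^ 2 / (4 * d0)) / d0 + 1 with hk
  have hk0 : 0 < k := by positivity
  have hkd : B0 + B0 ^ 2 / (4 * d0) ≤ k * d0 := by
    have : k * d0 = B0 + B0 ^ 2 / (4 * d0) + d0 := by rw [hk]; field_simp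
    linarith
  set D := 1 + k + (k + 2 * k * R) ^ 2 + (k + 2 * k * R) + B0 / d0 with hD
  have hD1 : 1 ≤ D := by
    have : 0 ≤ k + (k + 2 * k * R) ^ 2 + (k + 2 * k * R) + B0 / d0 := by positivity
    linarith
  set Cr := I * R * P.c i0 with hCr
  have hCr0 : 0 ≤ Cr := by have := P.hc i0; positivity
  set K := Cr / (k * d0) with hK
  have hK0 : 0 ≤ K := by positivity
  refine ⟨1 / D, K * Real.exp (k * (R + 1) ^ 2) * k * (2 * R + 1), by positivity,
    (div_le_one (by positivity)).2 hD1, by positivity, fun h hh hh0 => ?_⟩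
  have hhD : h * D ≤ 1 := by rwa [le_div_iff₀ (by positivity)] at hh0
  have hh1 : h ≤ 1 := hh0.trans ((div_le_one (by positivity)).2 hD1)
  have hkh : k * h + 2 * k * R ≤ k + 2 * k * R := by nlinarith
  have c1 : h * (k + (k * h + 2 * k * R) ^ 2) ≤ 1 := by
    refine le_trans ?_ hhD
    have h1 : (k * h + 2 * k * R) ^ 2 ≤ (k + 2 * k * R) ^ 2 := by gcongr
    have h2 : 0 ≤ k + 2 * k * R := by positivity
    have h3 : 0 ≤ B0 / d0 := by positivity
    gcongr; linarith
  have c2 : h * (k * h + 2 * k * R) ≤ 1 := by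
    refine le_trans ?_ hhD
    have h2 : 0 ≤ (k + 2 * k * R) ^ 2 := by positivity
    have h3 : 0 ≤ B0 / d0 := by positivity
    gcongr; linarith
  have c3 : h * B0 ≤ d0 := by
    have h2 : 0 ≤ k + (k + 2 * k * R) ^ 2 + (k + 2 * k * R) := by positivity
    have h3 : h * (B0 / d0) ≤ 1 := by
      refine le_trans ?_ hhD
      gcongr; linarith
    rw [← mul_div_assoc, div_le_one hd00] at h3
    exact h3
  set Ω : Set (Zd I) := {x : Zd I | 0 < Dd R h x} with hΩ
  have hΩf : Ω.Finite := finite_inside hh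
  set A : Fin I → Fin I → Zd I → ℝ := fun i j x => cA P (qs h x) i j (h * (x j : ℝ)) with hA
  set B : Fin I → Fin I → Zd I → ℝ := fun i j x => cB P (qs h x) i j (h * (x j : ℝ)) with hB
  have hAge : ∀ i j, ∀ x ∈ Ω, d0 ≤ A i j x := fun i j x hx =>
    cA_ge P hmb hdm' hsm (qs_nonneg h x) (qs_le hR0.le hx) (abs_coord_lt hx j).le i j
  have hBle : ∀ i j, ∀ x ∈ Ω, |B i j x| ≤ B0 := fun i j x hx =>
    cB_le P hmb hb (qs_nonneg h x) (qs_le hR0.le hx) (abs_coord_lt hx j).le i j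
  set p : Fin I → Fin I → Zd I → ℝ := fun i j x => (A i j x + B i j x * h) / h ^ 2 with hp
  set q : Fin I → Fin I → Zd I → ℝ := fun i j x => A i j x / h ^ 2 with hq
  set r : Fin I → Zd I → ℝ := fun i x => qs h x * P.c i with hr
  have hp0 : ∀ i j, ∀ x ∈ Ω, 0 ≤ p i j x := fun i j x hx => by
    have h1 := hAge i j x hx
    have h2 := abs_le.1 (hBle i j x hx)
    have : 0 ≤ A i j x + B i j x * h := by nlinarith [h2.1]
    positivity
  have hq0 : ∀ i j, ∀ x ∈ Ω, 0 ≤ q i j x := fun i j x hx => by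
    have h1 := hAge i j x hx
    have : 0 ≤ A i j x := by linarith
    positivity
  have hr0 : ∀ i, ∀ x ∈ Ω, 0 ≤ r i x := fun i x _ => mul_nonneg (qs_nonneg h x) (P.hc i).le
  obtain ⟨u, hu, hu0⟩ := exists_fixed hI Ω hΩf P.γ P.hγ p q r hp0 hq0
  set W : Zd I → ℝ := fun x => K * (Real.exp (k * (R + h) ^ 2) - Real.exp (k * ‖pt h x‖ ^ 2))
    with hW
  have hWnn : ∀ x, ‖pt h x‖ ≤ R + h → 0 ≤ W x := fun x hx => by
    refine mul_nonneg hK0 (sub_nonneg.2 (Real.exp_le_exp.2 ?_))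
    gcongr
  have hnorm : ∀ x ∈ Ω, ∀ j, ∀ m : ℤ, |m| ≤ 1 → ‖pt h (x + sg j m)‖ ≤ R + h := by
    intro x hx j m hm
    have e : pt h (x + sg j m) = pt h x + EuclideanSpace.single j (h * (m:ℝ)) := by
      ext l
      by_cases hl : l = j
      · subst hl; simp; ring
      · simp [hl]
    have hx' : 0 < R - ‖pt h x‖ := hx
    have h1 : ‖EuclideanSpace.single j (h * (m:ℝ))‖ ≤ h := by
      rw [PiLp.norm_single, Real.norm_eq_abs, abs_mul, abs_of_pos hh]
      have : |(m:ℝ)| ≤ 1 := by exact_mod_cast hm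
      nlinarith
    rw [e]
    refine (norm_add_le _ _).trans ?_
    linarith
  have hWsup : ∀ x ∈ Ω, r i0 x + ∑ j, (p i0 j x * (W (x + sg j 1) - W x)
      + q i0 j x * (W (x + sg j (-1)) - W x)) ≤ 0 := by
    intro x hx
    set E := Real.exp (k * ‖pt h x‖ ^ 2) with hE
    have hE1 : 1 ≤ E := Real.one_le_exp (by positivity)
    have hterm : ∀ j, p i0 j x * (W (x + sg j 1) - W x) + q i0 j x * (W (x + sg j (-1)) - W x)
        ≤ -(K * (k * d0)) := by
      intro j
      have hb1 := exp_barrier hd00 hB00 hk0 hh hkd (abs_coord_lt hx j).le c1 c2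
        (hAge i0 j x hx) (hBle i0 j x hx)
      set t := h * (x j : ℝ) with ht
      have s1 : W (x + sg j 1) - W x
          = -(K * E * (Real.exp (k * ((t + h) ^ 2 - t ^ 2)) - 1)) := by
        simp only [hW]
        rw [norm_pt_add, mul_add, Real.exp_add, ← hE]
        push_cast; rw [one_mul, ← ht]; ring
      have s2 : W (x + sg j (-1)) - W x
          = -(K * E * (Real.exp (k * ((t - h) ^ 2 - t ^ 2)) - 1)) := by
        simp only [hW]
        rw [norm_pt_add, mul_add, Real.exp_add, ← hE]
        push_cast; rw [neg_one_mul, ← sub_eq_add_neg, ← ht]; ring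
      rw [s1, s2]
      set e1 := Real.exp (k * ((t + h) ^ 2 - t ^ 2)) with he1
      set e2 := Real.exp (k * ((t - h) ^ 2 - t ^ 2)) with he2
      have s3 : p i0 j x * -(K * E * (e1 - 1)) + q i0 j x * -(K * E * (e2 - 1))
          = -(K * E * ((A i0 j x * (e1 + e2 - 2) + B i0 j x * h * (e1 - 1)) / h ^ 2)) := by
        simp only [hp, hq]; field_simp; ring
      rw [s3]
      have s4 : k * d0 ≤ (A i0 j x * (e1 + e2 - 2) + B i0 j x * h * (e1 - 1)) / h ^ 2 := by
        rw [le_div_iff₀ (by positivity)]; exact hb1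
      have s5 : K * 1 * (k * d0) ≤ K * E *
          ((A i0 j x * (e1 + e2 - 2) + B i0 j x * h * (e1 - 1)) / h ^ 2) := by gcongr
      linarith
    have hsum : ∑ j, (p i0 j x * (W (x + sg j 1) - W x) + q i0 j x * (W (x + sg j (-1)) - W x))
        ≤ ∑ _j : Fin I, -(K * (k * d0)) := Finset.sum_le_sum fun j _ => hterm j
    have hKk : K * (k * d0) = Cr := by rw [hK]; field_simp
    rw [hKk] at hsum
    simp only [Finset.sum_const, Finset.card_univ, Fintype.card_fin, nsmul_eq_mul] at hsum
    have hI1 : (1:ℝ) ≤ I := by exact_mod_cast hI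
    have hrl : r i0 x ≤ Cr := by
      simp only [hr, hCr]
      exact mul_le_mul_of_nonneg_right (qs_le hR0.le hx) (P.hc i0).le
    nlinarith
  have hΩle : ∀ x ∈ Ω, ‖pt h x‖ ≤ R + h := fun x hx => by
    have hx' : 0 < R - ‖pt h x‖ := hx
    linarith
  obtain ⟨hup, huW⟩ := comparison hI Ω hΩf P.γ P.hγ p q r hp0 hq0 hr0 u hu hu0 W
    (fun x hx => hWnn x (hΩle x hx))
    (fun x hx j => ⟨hWnn _ (hnorm x hx j 1 (by norm_num)), hWnn _ (hnorm x hx j (-1) (by norm_num))⟩)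
    i0 hWsup
  refine ⟨u, ⟨fun x hx => ?_, fun x hx => hu0 x (not_lt.2 hx)⟩, fun x => ?_⟩
  · have h1 := hu x hx
    have h2 : ∀ i, r i x + ∑ j, (p i j x * (u (x + sg j 1) - u x)
        + q i j x * (u (x + sg j (-1)) - u x))
        = qs h x * (P.c i + (P.μ i * vq h u i x - 1 / 2 * P.μ i * wq h u i i (x + sg i (-1))))
        + (∑ j, (P.b j - P.μ j * (h * (x j : ℝ))) * vq h u j x
          + ∑ j, (1 / 2 * P.μ j * (h * (x j : ℝ))) * wq h u j j (x + sg j (-1))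
          + Lap P.d u x / h ^ 2) := by
      intro i
      have h3 : Lap P.d u x / h ^ 2 = ∑ j, P.d j * wq h u j j (x + sg j (-1)) := by
        simp only [Lap, Finset.sum_div, wq_back, mul_div_assoc]
      have h4 := collect P (qs h x) i (fun j => h * (x j : ℝ)) (fun j => vq h u j x)
        (fun j => wq h u j j (x + sg j (-1)))
      rw [h3]
      refine Eq.trans ?_ (h4.symm.trans (by ring))
      simp only [hr]
      congr 1
      refine Finset.sum_congr rfl fun j _ => ?_
      rw [wq_back]
      simp only [hp, hq, hA, hB, vq, dif, sd]
      field_simp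
      ring
    simp only [h2] at h1
    rw [← mul_ciInf' (qs_nonneg h x)] at h1
    simp only [ff, ham]
    linarith
  · rw [abs_of_nonneg (hup x)]
    by_cases hx : x ∈ Ω
    · refine (huW x hx).trans ?_
      have hx' : 0 < Dd R h x := hx
      have hx'' : 0 < R - ‖pt h x‖ := hx
      rw [max_eq_left hx'.le]
      have h1 := exp_sub_le (k * (R + h) ^ 2) (k * ‖pt h x‖ ^ 2)
      have h2 : k * (R + h) ^ 2 - k * ‖pt h x‖ ^ 2 ≤ k * ((2 * R + 1) * (Dd R h x + h)) := by
        rw [← mul_sub]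
        have : (R + h) ^ 2 - ‖pt h x‖ ^ 2 = (R + h + ‖pt h x‖) * (Dd R h x + h) := by
          simp only [Dd]; ring
        rw [this]
        have h5 : R + h + ‖pt h x‖ ≤ 2 * R + 1 := by linarith
        gcongr
      have h3 : Real.exp (k * (R + h) ^ 2) ≤ Real.exp (k * (R + 1) ^ 2) := by gcongr
      have h4 : 0 ≤ k * ((2 * R + 1) * (Dd R h x + h)) := by positivity
      calc W x ≤ K * (Real.exp (k * (R + h) ^ 2) * (k * (R + h) ^ 2 - k * ‖pt h x‖ ^ 2)) :=
            mul_le_mul_of_nonneg_left h1 hK0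
        _ ≤ K * (Real.exp (k * (R + h) ^ 2) * (k * ((2 * R + 1) * (Dd R h x + h)))) := by gcongr
        _ ≤ K * (Real.exp (k * (R + 1) ^ 2) * (k * ((2 * R + 1) * (Dd R h x + h)))) := by gcongr
        _ = _ := by ring
    · rw [hu0 x hx]; positivity

/-! ### Uniformly bounded solutions of the scheme -/

/-- Discrete Taylor expansions with Hölder remainder, uniform in the mesh. -/
lemma loc {R h : ℝ} {u : Zd I → ℝ} {S : ℝ} (hS : 0 ≤ S) (hh : 0 < h) (hP : PS R h u S)
    (hW : ∀ i j x, 0 < Dd R h x → |wq h u i j x| * Dd R h x ≤ S)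
    {x0 y : Zd I} {r : ℕ} (h0 : 0 < Dd R h x0) (hr : 32 * I * r * h ≤ Dd R h x0)
    (hy : y ∈ Cube x0 r) :
    (∀ i j, |wq h u i j y - wq h u i j x0|
      ≤ I * (2 * S / (Dd R h x0 * √(Dd R h x0)) * √(r * h))) ∧
    (∀ j, |vq h u j y - vq h u j x0 - ∑ k, (h * (y k : ℝ) - h * x0 k) * wq h u k j x0|
      ≤ ∑ k, I * (2 * S / (Dd R h x0 * √(Dd R h x0)) * √(r * h)) * |h * (y k : ℝ) - h * x0 k|) ∧
    |u y - u x0 - ∑ k, (h * (y k : ℝ) - h * x0 k) * vq h u k x0|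
      ≤ ∑ k, I * (2 * S / Dd R h x0 * (r * h)) * |h * (y k : ℝ) - h * x0 k| := by
  set E := 2 * S / (Dd R h x0 * √(Dd R h x0)) with hE
  have hE0 : 0 ≤ E := by positivity
  have habs : ∀ k, |h * (y k : ℝ) - h * x0 k| = h * |(y k : ℝ) - x0 k| := fun k => by
    rw [← mul_sub, abs_mul, abs_of_pos hh]
  have hw : ∀ i j, ∀ z ∈ Cube x0 r, |wq h u i j z - wq h u i j x0| ≤ I * (E * √(r * h)) := by
    intro i j z hz
    refine AH.pair hh.le hE0 (PS_AH hS hP hh h0 hr i j) (self_mem_Cube x0 r) hz _ fun k => ?_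
    exact_mod_cast hz k
  refine ⟨fun i j => hw i j y hy, fun j => ?_, ?_⟩
  · have h1 := cube_taylor (vq h u j) x0 r (h * (I * (E * √(r * h)))) (by positivity)
      (self_mem_Cube x0 r) hy (fun k z hz => by
        rw [dif_vq h hh, dif_vq h hh, ← sub_mul, abs_mul, abs_of_pos hh, mul_comm]
        exact mul_le_mul_of_nonneg_left (hw k j z hz) hh.le)
    refine le_trans (le_of_eq ?_) (h1.trans (le_of_eq ?_))
    · congr 2
      refine Finset.sum_congr rfl fun k _ => ?_
      rw [dif_vq h hh]; ring
    · refine Finset.sum_congr rfl fun k _ => ?_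
      rw [habs]; ring
  · have hwb : ∀ i j, ∀ z ∈ Cube x0 r, |wq h u i j z| ≤ 2 * S / Dd R h x0 := by
      intro i j z hz
      have h1 := (Dd_Cube' hh hr hz).1
      have h2 := hW i j z (by linarith)
      rw [le_div_iff₀ h0]
      have := mul_le_mul_of_nonneg_left h1 (abs_nonneg (wq h u i j z))
      nlinarith
    have hd : ∀ k, ∀ z, dif k 1 u z = h * vq h u k z := fun k z => by
      simp only [vq]; field_simp
    have hv : ∀ k, ∀ z ∈ Cube x0 r, |vq h u k z - vq h u k x0| ≤ I * (2 * S / Dd R h x0 * (r * h)) := by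
      intro k z hz
      have h1 := cube_diff_le (vq h u k) x0 r (2 * S / Dd R h x0 * h) (by positivity)
        (fun l z hz => by
          rw [dif_vq h hh, abs_mul, abs_of_pos hh]
          exact mul_le_mul_of_nonneg_right (hwb l k z hz) hh.le) (self_mem_Cube x0 r) hz
      refine h1.trans ?_
      have h2 : ∑ l, 2 * S / Dd R h x0 * h * |(z l : ℝ) - x0 l|
          ≤ ∑ _l : Fin I, 2 * S / Dd R h x0 * h * r := by
        refine Finset.sum_le_sum fun l _ => mul_le_mul_of_nonneg_left ?_ (by positivity)
        exact_mod_cast hz l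
      refine h2.trans (le_of_eq ?_)
      simp only [Finset.sum_const, Finset.card_univ, Fintype.card_fin, nsmul_eq_mul]
      ring
    have h1 := cube_taylor u x0 r (h * (I * (2 * S / Dd R h x0 * (r * h)))) (by positivity)
      (self_mem_Cube x0 r) hy (fun k z hz => by
        rw [hd, hd, ← mul_sub, abs_mul, abs_of_pos hh]
        exact mul_le_mul_of_nonneg_left (hv k z hz) hh.le)
    refine le_trans (le_of_eq ?_) (h1.trans (le_of_eq ?_))
    · congr 2
      refine Finset.sum_congr rfl fun k _ => ?_
      rw [hd]; ring
    · refine Finset.sum_congr rfl fun k _ => ?_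
      rw [habs]; ring

/-- A solution of the scheme of mesh `h` together with its bounds. -/
structure Sch (P : Dat I) (C h : ℝ) (u : Zd I → ℝ) : Prop where
  pos : 0 < h
  eq : ∀ x, 0 < Dd P.R h x → Lap P.d u x / h ^ 2 = ff P h u x
  bd : ∀ x, |u x| ≤ C * (max (Dd P.R h x) 0 + h)
  v : ∀ j x, |vq h u j x| ≤ C
  w : ∀ i j x, 0 < Dd P.R h x → |wq h u i j x| * Dd P.R h x ≤ C
  ps : PS P.R h u C

/-- Solutions of the scheme with uniform bounds. -/
lemma exists_Sch (P : Dat I) (hI : 0 < I) (mb dm b0 Λ : ℝ) (hmb : ∀ i, P.μ i ≤ mb) (hdm : 0 < dm)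
    (hdm' : ∀ k, dm ≤ P.d k) (hb : ∀ k, |P.b k| ≤ b0) (hΛ0 : 0 ≤ Λ)
    (hΛ : ∀ k, ∑ j, P.d j ≤ Λ * P.d k)
    (hsmall : 1024 * (n0 I Λ) ^ 2 * I * (mb * P.R) ≤ dm) :
    ∃ C : ℝ, 0 ≤ C ∧ ∃ h0 : ℝ, 0 < h0 ∧ ∀ h, 0 < h → h ≤ h0 → ∃ u, Sch P C h u := by
  have hmb0 : 0 < mb := (P.hμ ⟨0, hI⟩).trans_le (hmb ⟨0, hI⟩)
  have hI1 : (1:ℝ) ≤ I := by exact_mod_cast hI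
  have hsm : (I + 1) * (mb * P.R) ≤ dm := by
    refine le_trans ?_ hsmall
    have h1 : (1:ℝ) ≤ n0 I Λ := by
      have : 1 ≤ n0 I Λ := by unfold n0; omega
      exact_mod_cast this
    have h2 : (1:ℝ) ≤ (n0 I Λ : ℝ) ^ 2 := one_le_pow₀ h1
    have h3 : 0 ≤ mb * P.R := mul_nonneg hmb0.le P.hR.le
    gcongr
    nlinarith
  obtain ⟨h0, C0, hh0, -, hC0, hex⟩ := exists_scheme P hI mb dm b0 hmb hdm hdm' hb hsm
  obtain ⟨C, hC, hest⟩ := interior P hI mb dm Λ hmb hdm hdm' hΛ0 hΛ hsmall C0 hC0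
  refine ⟨C + C0 * (I + 1), by positivity, h0, hh0, fun h hh hle => ?_⟩
  obtain ⟨u, hu, hub⟩ := hex h hh hle
  obtain ⟨h1, h2, h3⟩ := hest h u hh hu hub
  have hp : 0 ≤ C0 * (I + 1) := by positivity
  refine ⟨u, hh, hu.1, fun x => (hub x).trans ?_, fun j x => ?_, fun i j x hx => ?_, ?_⟩
  · have : 0 ≤ max (Dd P.R h x) 0 + h := by positivity
    gcongr
    nlinarith
  · by_cases hx : 0 < Dd P.R h x
    · exact (h2 j x hx).trans (by linarith)
    · have h4 : u x = 0 := hu.2 x (not_lt.1 hx)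
      have h5 := hub (x + sg j 1)
      have h6 := (abs_le.1 (Dd_Cube (R := P.R) hh.le
        (add_single_mem_Cube x j 1 (r := 1) (by norm_num)))).2
      have h7 : max (Dd P.R h (x + sg j 1)) 0 ≤ I * h := by
        refine max_le ?_ (by positivity)
        push_cast at h6
        linarith [not_lt.1 hx]
      simp only [vq, dif, h4, sub_zero]
      rw [abs_div, abs_of_pos hh, div_le_iff₀ hh]
      refine h5.trans ?_
      have : C0 * (max (Dd P.R h (x + sg j 1)) 0 + h) ≤ C0 * (I * h + h) := by gcongr
      nlinarith
  · exact (h3 i j x hx).trans (by linarith)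
  · exact PS.mono h1 (by linarith)

/-! ### Passage to the limit -/

open Filter Topology in
/-- Limit along a fixed ultrafilter on `ℕ`; meaningful for bounded sequences. -/
def ulim (f : ℕ → ℝ) : ℝ := limUnder (hyperfilter ℕ : Filter ℕ) f

open Filter Topology in
lemma ulim_spec {f : ℕ → ℝ} {B : ℝ} (hf : ∀ᶠ m in (hyperfilter ℕ : Filter ℕ), |f m| ≤ B) :
    Tendsto f (hyperfilter ℕ : Filter ℕ) (𝓝 (ulim f)) := by
  refine tendsto_nhds_limUnder ?_
  obtain ⟨a, -, ha⟩ := (isCompact_Icc (a := -B) (b := B)).ultrafilter_le_nhds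
    ((hyperfilter ℕ).map f) (by
      rw [Ultrafilter.coe_map, le_principal_iff, Filter.mem_map]
      filter_upwards [hf] with m hm using abs_le.1 hm)
  exact ⟨a, ha⟩

open Filter Topology in
lemma tendsto_ciInf_fin [Nonempty (Fin I)] {l : Filter ℕ} {f : Fin I → ℕ → ℝ} {a : Fin I → ℝ}
    (h : ∀ i, Tendsto (f i) l (𝓝 (a i))) :
    Tendsto (fun m => ⨅ i, f i m) l (𝓝 (⨅ i, a i)) := by
  rw [Metric.tendsto_nhds]
  intro ε hε
  have : ∀ᶠ m in l, ∀ i, dist (f i m) (a i) < ε / 2 :=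
    Filter.eventually_all.2 fun i => Metric.tendsto_nhds.1 (h i) _ (half_pos hε)
  filter_upwards [this] with m hm
  rw [Real.dist_eq]
  exact (iInf_sub_le _ _ (ε / 2) fun i => (hm i).le).trans_lt (half_lt_self hε)

/-- The grid point below `x`. -/
def gr (h : ℝ) (x : Euc I) : Zd I := fun j => ⌊x j / h⌋

lemma gr_near {h : ℝ} (hh : 0 < h) (x : Euc I) (j : Fin I) :
    |h * (gr h x j : ℝ) - x j| ≤ h := by
  have h1 := Int.floor_le (x j / h)
  have h2 := Int.lt_floor_add_one (x j / h)
  rw [le_div_iff₀ hh] at h1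
  rw [div_lt_iff₀ hh] at h2
  simp only [gr]
  rw [abs_le]; constructor <;> nlinarith

/-- Number of grid steps needed to join the grid points below `x` and `y`. -/
def rr (h : ℝ) (x y : Euc I) : ℕ := ⌈‖y - x‖ / h⌉₊ + 1

lemma gr_mem_Cube {h : ℝ} (hh : 0 < h) (x y : Euc I) : gr h y ∈ Cube (gr h x) (rr h x y) := by
  intro j
  have h1 : |y j / h - x j / h| ≤ ⌈‖y - x‖ / h⌉₊ := by
    refine le_trans ?_ (Nat.le_ceil _)
    rw [← sub_div, abs_div, abs_of_pos hh]
    have := abs_apply_le_norm (y - x) j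
    simp only [PiLp.sub_apply] at this
    gcongr
  have a1 := Int.floor_le (x j / h)
  have a2 := Int.lt_floor_add_one (x j / h)
  have a3 := Int.floor_le (y j / h)
  have a4 := Int.lt_floor_add_one (y j / h)
  have h2 := abs_le.1 h1
  have e1 : ((⌊y j / h⌋ : ℤ) : ℝ) - ⌊x j / h⌋ < (⌈‖y - x‖ / h⌉₊ : ℝ) + 1 := by linarith [h2.2]
  have e2 : ((⌊x j / h⌋ : ℤ) : ℝ) - ⌊y j / h⌋ < (⌈‖y - x‖ / h⌉₊ : ℝ) + 1 := by linarith [h2.1]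
  have e1' : ⌊y j / h⌋ - ⌊x j / h⌋ < (⌈‖y - x‖ / h⌉₊ : ℤ) + 1 := by exact_mod_cast e1
  have e2' : ⌊x j / h⌋ - ⌊y j / h⌋ < (⌈‖y - x‖ / h⌉₊ : ℤ) + 1 := by exact_mod_cast e2
  simp only [gr, rr]
  push_cast
  rw [abs_le]; constructor <;> omega

lemma rr_bd {h : ℝ} (hh : 0 < h) (x y : Euc I) :
    ‖y - x‖ ≤ rr h x y * h ∧ rr h x y * h ≤ ‖y - x‖ + 2 * h := by
  have h0 : 0 ≤ ‖y - x‖ / h := by positivity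
  have h1 := Nat.le_ceil (‖y - x‖ / h)
  have h2 := (Nat.ceil_lt_add_one h0).le
  have e : ‖y - x‖ = ‖y - x‖ / h * h := by field_simp
  simp only [rr]
  push_cast
  constructor <;> nlinarith

lemma Dd_gr {R h : ℝ} (hh : 0 < h) (x : Euc I) :
    |Dd R h (gr h x) - (R - ‖x‖)| ≤ I * h := by
  have h1 : |‖x‖ - ‖pt h (gr h x)‖| ≤ ‖x - pt h (gr h x)‖ := abs_norm_sub_norm_le _ _
  have e : Dd R h (gr h x) - (R - ‖x‖) = ‖x‖ - ‖pt h (gr h x)‖ := by simp only [Dd]; ring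
  rw [e]
  refine h1.trans ((norm_le_sum_abs _).trans ?_)
  have : ∑ j, |(x - pt h (gr h x)) j| ≤ ∑ _j : Fin I, h :=
    Finset.sum_le_sum fun j _ => by
      rw [PiLp.sub_apply, pt_apply, abs_sub_comm]; exact gr_near hh x j
  simpa using this

open Filter Topology in
/-- The limit of the schemes, in terms of a function `φ`, its gradient `V` and its Hessian `W`
linked by Taylor expansions. -/
lemma exists_limit (P : Dat I) (hI : 0 < I) {C : ℝ} (hC : 0 ≤ C) {h : ℕ → ℝ} {u : ℕ → Zd I → ℝ}
    (hS : ∀ m, Sch P C (h m) (u m)) (h0 : Tendsto h atTop (𝓝 0)) :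
    ∃ (φ : Euc I → ℝ) (V : Fin I → Euc I → ℝ) (W : Fin I → Fin I → Euc I → ℝ),
      (∀ x y, |φ y - φ x| ≤ ∑ k, C * |y k - x k|) ∧
      (∀ x, |φ x| ≤ C * max (P.R - ‖x‖) 0) ∧
      (∀ i j x, ‖x‖ < P.R → |W i j x| * (P.R - ‖x‖) ≤ C) ∧
      (∀ x y : Euc I, ‖x‖ < P.R → 64 * I * ‖y - x‖ ≤ P.R - ‖x‖ →
        (∀ i j, |W i j y - W i j x|
          ≤ I * (2 * C / ((P.R - ‖x‖) * √(P.R - ‖x‖)) * √‖y - x‖)) ∧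
        (∀ j, |V j y - V j x - ∑ k, (y k - x k) * W k j x|
          ≤ ∑ k, I * (2 * C / ((P.R - ‖x‖) * √(P.R - ‖x‖)) * √‖y - x‖) * |y k - x k|) ∧
        |φ y - φ x - ∑ k, (y k - x k) * V k x|
          ≤ ∑ k, I * (2 * C / (P.R - ‖x‖) * ‖y - x‖) * |y k - x k|) ∧
      (∀ x : Euc I, ‖x‖ < P.R → ∑ j, P.d j * W j j x = P.γ * φ x
        - max (∑ j, x j) 0 * (⨅ i, (P.c i + (P.μ i * V i x - 1 / 2 * P.μ i * W i i x)))
        - ∑ j, (P.b j - P.μ j * x j) * V j x - ∑ j, (1 / 2 * P.μ j * x j) * W j j x) := by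
  have : Nonempty (Fin I) := ⟨⟨0, hI⟩⟩
  have hp : ∀ m, 0 < h m := fun m => (hS m).pos
  set U : Filter ℕ := (hyperfilter ℕ : Filter ℕ) with hU
  have hU0 : Tendsto h U (𝓝 0) := h0.mono_left Nat.hyperfilter_le_atTop
  set R := P.R with hR
  -- elementary limits
  have tI : ∀ c : ℝ, Tendsto (fun m => c * h m) U (𝓝 0) := fun c => by
    simpa using hU0.const_mul c
  have sq : ∀ {f : ℕ → ℝ} {a c : ℝ}, (∀ m, |f m - a| ≤ c * h m) → Tendsto f U (𝓝 a) := by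
    intro f a c hf
    rw [tendsto_iff_dist_tendsto_zero]
    exact squeeze_zero (fun m => dist_nonneg) (fun m => by rw [Real.dist_eq]; exact hf m) (tI c)
  have tx : ∀ (x : Euc I) j, Tendsto (fun m => h m * (gr (h m) x j : ℝ)) U (𝓝 (x j)) :=
    fun x j => sq (c := 1) fun m => by rw [one_mul]; exact gr_near (hp m) x j
  have tD : ∀ x : Euc I, Tendsto (fun m => Dd R (h m) (gr (h m) x)) U (𝓝 (R - ‖x‖)) :=
    fun x => sq fun m => Dd_gr (hp m) x
  have tr : ∀ x y : Euc I, Tendsto (fun m => (rr (h m) x y : ℝ) * h m) U (𝓝 ‖y - x‖) :=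
    fun x y => sq (c := 2) fun m => by
      have := rr_bd (hp m) x y
      rw [abs_le]; constructor <;> linarith [hp m, this.1, this.2]
  have eD : ∀ x : Euc I, ‖x‖ < R → ∀ᶠ m in U, (R - ‖x‖) / 2 < Dd R (h m) (gr (h m) x) :=
    fun x hx => (tD x).eventually (lt_mem_nhds (half_lt_self (by linarith)))
  have eh : ∀ c : ℝ, 0 < c → ∀ᶠ m in U, h m < c := fun c hc => hU0.eventually (gt_mem_nhds hc)
  -- the limits
  set φ : Euc I → ℝ := fun x => ulim fun m => u m (gr (h m) x) with hφ
  set V : Fin I → Euc I → ℝ := fun j x => ulim fun m => vq (h m) (u m) j (gr (h m) x) with hV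
  set W : Fin I → Fin I → Euc I → ℝ := fun i j x => ulim fun m => wq (h m) (u m) i j (gr (h m) x)
    with hW
  have tφ : ∀ x, Tendsto (fun m => u m (gr (h m) x)) U (𝓝 (φ x)) := fun x => by
    refine ulim_spec (B := C * (R + 1)) ?_
    filter_upwards [eh 1 one_pos] with m hm
    refine ((hS m).bd _).trans ?_
    have := max_le (Dd_le R (h m) (gr (h m) x)) P.hR.le
    gcongr
  have tV : ∀ j x, Tendsto (fun m => vq (h m) (u m) j (gr (h m) x)) U (𝓝 (V j x)) := fun j x =>
    ulim_spec (B := C) (Eventually.of_forall fun m => (hS m).v j _)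
  have tW : ∀ i j x, ‖x‖ < R →
      Tendsto (fun m => wq (h m) (u m) i j (gr (h m) x)) U (𝓝 (W i j x)) := fun i j x hx => by
    refine ulim_spec (B := C / ((R - ‖x‖) / 2)) ?_
    filter_upwards [eD x hx] with m hm
    have hpos : 0 < (R - ‖x‖) / 2 := by linarith
    rw [le_div_iff₀ hpos]
    refine le_trans ?_ ((hS m).w i j (gr (h m) x) (hpos.trans hm))
    gcongr
  refine ⟨φ, V, W, fun x y => ?_, fun x => ?_, fun i j x hx => ?_, fun x y hx hxy => ?_,
    fun x hx => ?_⟩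
  · refine le_of_tendsto_of_tendsto (((tφ y).sub (tφ x)).abs)
      (tendsto_finsetSum _ fun k _ => (((tx y k).sub (tx x k)).abs.const_mul C))
      (Eventually.of_forall fun m => ?_)
    have h1 := cube_diff_le (u m) (gr (h m) x) (rr (h m) x y) (C * h m)
      (mul_nonneg hC (hp m).le) (fun k z _ => by
        have := (hS m).v k z
        rwa [vq, abs_div, abs_of_pos (hp m), div_le_iff₀ (hp m)] at this)
      (self_mem_Cube _ _) (gr_mem_Cube (hp m) x y)
    refine h1.trans (le_of_eq (Finset.sum_congr rfl fun k _ => ?_))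
    rw [← mul_sub, abs_mul (h m), abs_of_pos (hp m)]; ring
  · refine le_of_tendsto_of_tendsto ((tφ x).abs) (b := U)
      (g := fun m => C * (max (Dd R (h m) (gr (h m) x)) 0 + h m)) ?_
      (Eventually.of_forall fun m => (hS m).bd _)
    simpa using (((tD x).max tendsto_const_nhds).add hU0).const_mul C
  · refine le_of_tendsto ((tW i j x hx).abs.mul (tD x)) ?_
    filter_upwards [eD x hx] with m hm
    exact (hS m).w i j _ (lt_trans (by linarith) hm)
  · have hD0 : 0 < R - ‖x‖ := by linarith
    have hI1 : (1:ℝ) ≤ I := by exact_mod_cast hI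
    have hy : ‖y‖ < R := by
      have := norm_sub_norm_le y x
      have : 64 * ‖y - x‖ ≤ 64 * I * ‖y - x‖ := by
        gcongr; linarith
      nlinarith [norm_nonneg (y - x)]
    have er : ∀ᶠ m in U, 32 * I * rr (h m) x y * h m ≤ Dd R (h m) (gr (h m) x) := by
      have t1 : Tendsto (fun m => 32 * I * ((rr (h m) x y : ℝ) * h m)) U
          (𝓝 (32 * I * ‖y - x‖)) := (tr x y).const_mul _
      filter_upwards [t1.eventually_lt (tD x) (by linarith)] with m hm
      linarith
    have hloc := ((eD x hx).and er).mono fun m hm =>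
      loc hC (hp m) (hS m).ps (hS m).w (lt_trans (by linarith) hm.1) hm.2
        (gr_mem_Cube (hp m) x y)
    have tE : Tendsto (fun m => I * (2 * C / (Dd R (h m) (gr (h m) x)
        * √(Dd R (h m) (gr (h m) x))) * √(rr (h m) x y * h m))) U
        (𝓝 (I * (2 * C / ((R - ‖x‖) * √(R - ‖x‖)) * √‖y - x‖))) := by
      refine Tendsto.const_mul _ (Tendsto.mul (tendsto_const_nhds.div ((tD x).mul (tD x).sqrt) ?_)
        (tr x y).sqrt)
      have := Real.sqrt_pos.2 hD0
      positivity
    have tE' : Tendsto (fun m => I * (2 * C / Dd R (h m) (gr (h m) x) * (rr (h m) x y * h m))) U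
        (𝓝 (I * (2 * C / (R - ‖x‖) * ‖y - x‖))) :=
      Tendsto.const_mul _ ((tendsto_const_nhds.div (tD x) hD0.ne').mul (tr x y))
    refine ⟨fun i j => ?_, fun j => ?_, ?_⟩
    · exact le_of_tendsto_of_tendsto (((tW i j y hy).sub (tW i j x hx)).abs) tE
        (hloc.mono fun m hm => hm.1 i j)
    · exact le_of_tendsto_of_tendsto ((((tV j y).sub (tV j x)).sub
        (tendsto_finsetSum _ fun k _ => ((tx y k).sub (tx x k)).mul (tW k j x hx))).abs)
        (tendsto_finsetSum _ fun k _ => tE.mul ((tx y k).sub (tx x k)).abs)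
        (hloc.mono fun m hm => hm.2.1 j)
    · exact le_of_tendsto_of_tendsto ((((tφ y).sub (tφ x)).sub
        (tendsto_finsetSum _ fun k _ => ((tx y k).sub (tx x k)).mul (tV k x))).abs)
        (tendsto_finsetSum _ fun k _ => tE'.mul ((tx y k).sub (tx x k)).abs)
        (hloc.mono fun m hm => hm.2.2)
  · have hD0 : 0 < R - ‖x‖ := by linarith
    -- the backward shift in the second differences disappears in the limit
    have tW' : ∀ j, Tendsto (fun m => wq (h m) (u m) j j (gr (h m) x + sg j (-1))) U
        (𝓝 (W j j x)) := by
      intro j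
      set D := (R - ‖x‖) / 4 with hD
      have hDp : 0 < D := by positivity
      have t1 : Tendsto (fun m => C * √(h m) / (D * √D)) U (𝓝 0) := by
        have := (hU0.sqrt.const_mul C).div_const (D * √D)
        simpa using this
      have t2 : Tendsto (fun m => wq (h m) (u m) j j (gr (h m) x + sg j (-1))
          - wq (h m) (u m) j j (gr (h m) x)) U (𝓝 0) := by
        refine squeeze_zero_norm' ?_ t1
        filter_upwards [eD x hx, eh (D / (8 * I)) (by
          have : (0:ℝ) < I := by exact_mod_cast hI
          positivity)] with m hm1 hm2
        have hIp : (1:ℝ) ≤ I := by exact_mod_cast hI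
        rw [lt_div_iff₀ (by positivity)] at hm2
        have a1 := (abs_le.1 (Dd_Cube (R := R) (hp m).le
          (add_single_mem_Cube (gr (h m) x) j (-1) (r := 1) (by norm_num)))).1
        push_cast at a1
        set z := gr (h m) x + sg j (-1) with hz
        have hDz : D ≤ Dd R (h m) z := by linarith
        have hIh : h m ≤ I * h m := by nlinarith [hp m]
        have e : z + sg j ((1:ℕ):ℤ) = gr (h m) x := by
          rw [hz, add_assoc, ← sg_add]; simp
        have a2 := (hS m).ps j j j z (hDp.trans_le hDz) 1 (by push_cast; linarith)
        rw [e] at a2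
        rw [Real.norm_eq_abs, abs_sub_comm]
        refine a2.trans ?_
        push_cast
        rw [one_mul]
        have hDz0 : 0 ≤ Dd P.R (h m) z := hDp.le.trans hDz
        gcongr
      simpa using t2.add (tW j j x hx)
    have t1 : Tendsto (fun m => ff P (h m) (u m) (gr (h m) x)) U (𝓝 (P.γ * φ x
        - max (∑ j, x j) 0 * (⨅ i, (P.c i + (P.μ i * V i x - 1 / 2 * P.μ i * W i i x)))
        - ∑ j, (P.b j - P.μ j * x j) * V j x - ∑ j, (1 / 2 * P.μ j * x j) * W j j x)) := by
      refine ((((tφ x).const_mul P.γ).sub (Tendsto.mul ?_ ?_)).sub ?_).sub ?_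
      · exact (tendsto_finsetSum _ fun j _ => tx x j).max tendsto_const_nhds
      · exact tendsto_ciInf_fin fun i => tendsto_const_nhds.add
          (((tV i x).const_mul _).sub ((tW' i).const_mul _))
      · exact tendsto_finsetSum _ fun j _ =>
          (tendsto_const_nhds.sub ((tx x j).const_mul _)).mul (tV j x)
      · exact tendsto_finsetSum _ fun j _ => ((tx x j).const_mul _).mul (tW' j)
    have t2 : Tendsto (fun m => Lap P.d (u m) (gr (h m) x) / h m ^ 2) U
        (𝓝 (∑ j, P.d j * W j j x)) := by
      refine Tendsto.congr (fun m => ?_) (tendsto_finsetSum _ fun j _ => (tW' j).const_mul (P.d j))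
      simp only [Lap, Finset.sum_div, wq_back, mul_div_assoc]
    refine tendsto_nhds_unique_of_eventuallyEq t2 t1 ?_
    filter_upwards [eD x hx] with m hm
    exact (hS m).eq _ (lt_trans (by linarith) hm)

/-! ### Classical regularity of the limit -/

/-- The linear form with coefficients `v`. -/
def lin (v : Fin I → ℝ) : Euc I →L[ℝ] ℝ := ∑ k, v k • (EuclideanSpace.proj k : Euc I →L[ℝ] ℝ)

lemma lin_apply (v : Fin I → ℝ) (z : Euc I) : lin v z = ∑ k, v k * z k := by
  simp [lin]

lemma lin_single (v : Fin I → ℝ) (i : Fin I) : lin v (EuclideanSpace.single i 1) = v i := by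
  rw [lin_apply, Finset.sum_eq_single i]
  · simp
  · intro j _ hj; simp [hj]
  · simp

lemma norm_lin_le (v : Fin I → ℝ) : ‖lin v‖ ≤ ∑ k, |v k| := by
  refine ContinuousLinearMap.opNorm_le_bound _ (Finset.sum_nonneg fun _ _ => abs_nonneg _)
    fun z => ?_
  rw [lin_apply, Real.norm_eq_abs, Finset.sum_mul]
  refine (Finset.abs_sum_le_sum_abs _ _).trans (Finset.sum_le_sum fun k _ => ?_)
  rw [abs_mul]
  exact mul_le_mul_of_nonneg_left (abs_apply_le_norm z k) (abs_nonneg _)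

lemma lin_sub (v w : Fin I → ℝ) : lin v - lin w = lin (fun k => v k - w k) := by
  ext z; simp [lin_apply, sub_mul, Finset.sum_sub_distrib]

open Filter Topology in
lemma hasFDerivAt_of_bound {f : Euc I → ℝ} {v : Fin I → ℝ} {x : Euc I} {ρ : ℝ} (hρ : 0 < ρ)
    (ω : ℝ → ℝ) (hω : Tendsto ω (𝓝 0) (𝓝 0))
    (h : ∀ y, ‖y - x‖ ≤ ρ → |f y - f x - ∑ k, (y k - x k) * v k| ≤ ∑ k, ω ‖y - x‖ * |y k - x k|) :
    HasFDerivAt f (lin v) x := by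
  refine HasFDerivAt.of_isLittleO (Asymptotics.isLittleO_iff.2 fun ε hε => ?_)
  have t1 : Tendsto (fun y : Euc I => ‖y - x‖) (𝓝 x) (𝓝 0) := by
    have : Continuous fun y : Euc I => ‖y - x‖ := by fun_prop
    simpa using this.tendsto x
  have t2 : Tendsto (fun y : Euc I => I * |ω ‖y - x‖|) (𝓝 x) (𝓝 0) := by
    simpa using ((hω.comp t1).abs.const_mul (I:ℝ))
  filter_upwards [t1.eventually (gt_mem_nhds hρ), t2.eventually (gt_mem_nhds hε)] with y h1 h2
  rw [Real.norm_eq_abs, lin_apply]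
  have e : ∑ k, v k * (y - x) k = ∑ k, (y k - x k) * v k :=
    Finset.sum_congr rfl fun k _ => by rw [PiLp.sub_apply, mul_comm]
  rw [e]
  refine (h y h1.le).trans ?_
  have h3 : ∑ k, ω ‖y - x‖ * |y k - x k| ≤ ∑ _k : Fin I, |ω ‖y - x‖| * ‖y - x‖ := by
    refine Finset.sum_le_sum (g := fun _ => |ω ‖y - x‖| * ‖y - x‖) fun k _ => ?_
    have := abs_apply_le_norm (y - x) k
    rw [PiLp.sub_apply] at this
    exact mul_le_mul (le_abs_self _) this (abs_nonneg _) (abs_nonneg _)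
  refine h3.trans ?_
  simp only [Finset.sum_const, Finset.card_univ, Fintype.card_fin, nsmul_eq_mul]
  rw [← mul_assoc]
  gcongr

open Filter Topology in
/-- Existence of a classical solution for data with small service rates relative to the
diffusion coefficients. -/
lemma exists_solution (P : Dat I) (hI : 0 < I) (mb dm b0 Λ : ℝ) (hmb : ∀ i, P.μ i ≤ mb)
    (hdm : 0 < dm) (hdm' : ∀ k, dm ≤ P.d k) (hb : ∀ k, |P.b k| ≤ b0) (hΛ0 : 0 ≤ Λ)
    (hΛ : ∀ k, ∑ j, P.d j ≤ Λ * P.d k)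
    (hsmall : 1024 * (n0 I Λ) ^ 2 * I * (mb * P.R) ≤ dm) :
    ∃ φ : Euc I → ℝ, (∃ K : NNReal, LipschitzOnWith K φ (closedBall 0 P.R)) ∧
      ContDiffOn ℝ 2 φ (ball 0 P.R) ∧ (∀ x : Euc I, ‖x‖ = P.R → φ x = 0) ∧
      HolderSecond (1 / 2) P.R φ ∧
      ∀ x ∈ ball (0 : Euc I) P.R, ∑ j, P.d j * pd2 φ j x = P.γ * φ x
        - max (∑ j, x j) 0 * (⨅ i, (P.c i + (P.μ i * pd1 φ i x - 1 / 2 * P.μ i * pd2 φ i x)))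
        - ∑ j, (P.b j - P.μ j * x j) * pd1 φ j x - ∑ j, (1 / 2 * P.μ j * x j) * pd2 φ j x := by
  obtain ⟨C, hC, h0, hh0, hex⟩ := exists_Sch P hI mb dm b0 Λ hmb hdm hdm' hb hΛ0 hΛ hsmall
  have hseq : ∀ m : ℕ, 0 < h0 / ((m:ℝ) + 1) ∧ h0 / ((m:ℝ) + 1) ≤ h0 := fun m =>
    ⟨by positivity, div_le_self hh0.le (by linarith [(Nat.cast_nonneg m : (0:ℝ) ≤ m)])⟩
  choose u hu using fun m : ℕ => hex _ (hseq m).1 (hseq m).2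
  have hlim : Tendsto (fun m : ℕ => h0 / ((m:ℝ) + 1)) atTop (𝓝 0) := by
    have := (tendsto_one_div_add_atTop_nhds_zero_nat (𝕜 := ℝ)).const_mul h0
    simpa [div_eq_mul_inv] using this
  obtain ⟨φ, V, W, hLip, hbd, hWbd, hT, hEq⟩ := exists_limit P hI hC hu hlim
  set R := P.R with hR
  have hI1 : (1:ℝ) ≤ I := by exact_mod_cast hI
  have hmem : ∀ x : Euc I, x ∈ ball (0 : Euc I) R ↔ ‖x‖ < R := fun x => by simp
  have hrad : ∀ x y : Euc I, ‖y - x‖ ≤ (R - ‖x‖) / (64 * I) → 64 * I * ‖y - x‖ ≤ R - ‖x‖ := by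
    intro x y hxy
    rw [le_div_iff₀ (by positivity)] at hxy
    linarith
  have hdφ : ∀ x : Euc I, ‖x‖ < R → HasFDerivAt φ (lin fun k => V k x) x := by
    intro x hx
    have hD : 0 < R - ‖x‖ := by linarith
    refine hasFDerivAt_of_bound (ρ := (R - ‖x‖) / (64 * I)) (by positivity)
      (fun t => I * (2 * C / (R - ‖x‖) * t)) ?_ fun y hy => (hT x y hx (hrad x y hy)).2.2
    have : Continuous fun t : ℝ => I * (2 * C / (R - ‖x‖) * t) := by fun_prop
    simpa using this.tendsto 0
  have hdV : ∀ (j : Fin I) (x : Euc I), ‖x‖ < R →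
      HasFDerivAt (V j) (lin fun k => W k j x) x := by
    intro j x hx
    have hD : 0 < R - ‖x‖ := by linarith
    refine hasFDerivAt_of_bound (ρ := (R - ‖x‖) / (64 * I)) (by positivity)
      (fun t => I * (2 * C / ((R - ‖x‖) * √(R - ‖x‖)) * √t)) ?_
      fun y hy => (hT x y hx (hrad x y hy)).2.1 j
    have : Continuous fun t : ℝ => I * (2 * C / ((R - ‖x‖) * √(R - ‖x‖)) * √t) := by fun_prop
    simpa using this.tendsto 0
  have hcW : ∀ i j, ContinuousOn (W i j) (ball (0 : Euc I) R) := by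
    intro i j x hx
    rw [hmem] at hx
    have hD : 0 < R - ‖x‖ := by linarith
    refine ContinuousAt.continuousWithinAt ?_
    rw [ContinuousAt, tendsto_iff_dist_tendsto_zero]
    have hc : Continuous fun y : Euc I =>
        I * (2 * C / ((R - ‖x‖) * √(R - ‖x‖)) * √‖y - x‖) := by fun_prop
    have t1 : Tendsto (fun y : Euc I => I * (2 * C / ((R - ‖x‖) * √(R - ‖x‖)) * √‖y - x‖))
        (𝓝 x) (𝓝 0) := by simpa using hc.tendsto x
    have t2 : Tendsto (fun y : Euc I => ‖y - x‖) (𝓝 x) (𝓝 0) := by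
      have : Continuous fun y : Euc I => ‖y - x‖ := by fun_prop
      simpa using this.tendsto x
    refine squeeze_zero' (Eventually.of_forall fun _ => dist_nonneg) ?_ t1
    have hpos : 0 < (R - ‖x‖) / (64 * I) := by positivity
    filter_upwards [t2.eventually (gt_mem_nhds hpos)] with y hy
    rw [Real.dist_eq]
    exact (hT x y hx (hrad x y hy.le)).1 i j
  have hnhds : ∀ x : Euc I, ‖x‖ < R → ∀ᶠ y in 𝓝 x, ‖y‖ < R := fun x hx =>
    (continuous_norm.tendsto x).eventually (gt_mem_nhds hx)
  have hpd1 : ∀ i, ∀ x : Euc I, ‖x‖ < R → pd1 φ i x = V i x := fun i x hx => by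
    rw [pd1, (hdφ x hx).fderiv, lin_single]
  have hpd2 : ∀ i, ∀ x : Euc I, ‖x‖ < R → pd2 φ i x = W i i x := fun i x hx => by
    have e : pd1 φ i =ᶠ[𝓝 x] V i := (hnhds x hx).mono fun y hy => hpd1 i y hy
    rw [pd2, e.fderiv_eq, (hdV i x hx).fderiv, lin_single]
  have hCV : ∀ j, ContDiffOn ℝ 1 (V j) (ball (0 : Euc I) R) := by
    intro j
    rw [show (1 : WithTop ℕ∞) = 0 + 1 from (zero_add 1).symm,
      contDiffOn_succ_iff_fderiv_of_isOpen isOpen_ball]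
    refine ⟨fun x hx => (hdV j x ((hmem x).1 hx)).differentiableAt.differentiableWithinAt,
      by simp, contDiffOn_zero.2 ?_⟩
    refine ContinuousOn.congr (f := fun x => lin fun k => W k j x) ?_
      fun x hx => (hdV j x ((hmem x).1 hx)).fderiv
    exact continuousOn_finsetSum _ fun k _ => (hcW k j).smul continuousOn_const
  have hCφ : ContDiffOn ℝ 2 φ (ball (0 : Euc I) R) := by
    rw [show (2 : WithTop ℕ∞) = 1 + 1 from one_add_one_eq_two.symm,
      contDiffOn_succ_iff_fderiv_of_isOpen isOpen_ball]
    refine ⟨fun x hx => (hdφ x ((hmem x).1 hx)).differentiableAt.differentiableWithinAt,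
      by simp, ?_⟩
    refine ContDiffOn.congr (f := fun x => lin fun k => V k x) ?_
      fun x hx => (hdφ x ((hmem x).1 hx)).fderiv
    exact ContDiffOn.sum fun k _ => (hCV k).smul contDiffOn_const
  have hD2 : ∀ x : Euc I, ‖x‖ < R → ∀ z, fderiv ℝ (fderiv ℝ φ) x z
      = lin (fun k => lin (fun l => W l k x) z) := by
    intro x hx z
    have e : fderiv ℝ φ =ᶠ[𝓝 x] fun y => ∑ k, V k y • (EuclideanSpace.proj k : Euc I →L[ℝ] ℝ) :=
      (hnhds x hx).mono fun y hy => (hdφ y hy).fderiv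
    have h1 : HasFDerivAt (fun y => ∑ k, V k y • (EuclideanSpace.proj k : Euc I →L[ℝ] ℝ))
        (∑ k, (lin fun l => W l k x).smulRight (EuclideanSpace.proj k : Euc I →L[ℝ] ℝ)) x :=
      HasFDerivAt.fun_sum fun k _ => (hdV k x hx).smul_const (EuclideanSpace.proj k : Euc I →L[ℝ] ℝ)
    rw [e.fderiv_eq, h1.fderiv]
    simp [lin]
  refine ⟨φ, ⟨(I * C).toNNReal, ?_⟩, hCφ, fun x hx => ?_, ?_, fun x hx => ?_⟩
  · refine LipschitzOnWith.of_dist_le_mul fun x _ y _ => ?_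
    rw [Real.coe_toNNReal _ (by positivity), dist_comm, Real.dist_eq, dist_comm, dist_eq_norm]
    refine (hLip x y).trans ?_
    have : ∑ k, C * |y k - x k| ≤ ∑ _k : Fin I, C * ‖y - x‖ :=
      Finset.sum_le_sum (g := fun _ => C * ‖y - x‖) fun k _ => by
        have := abs_apply_le_norm (y - x) k
        rw [PiLp.sub_apply] at this
        gcongr
    refine this.trans (le_of_eq ?_)
    simp; ring
  · have := hbd x
    rw [hx] at this
    simpa using this
  · intro K hK hKc
    rcases K.eq_empty_or_nonempty with rfl | hne
    · exact ⟨0, by simp⟩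
    obtain ⟨x1, hx1, hmax⟩ := hKc.exists_isMaxOn hne continuous_norm.continuousOn
    set δ := R - ‖x1‖ with hδ
    have hδ0 : 0 < δ := by have := (hmem x1).1 (hK hx1); linarith
    have hge : ∀ x ∈ K, δ ≤ R - ‖x‖ := fun x hx => by
      have : ‖x‖ ≤ ‖x1‖ := hmax hx
      linarith
    have hsδ := Real.sqrt_pos.2 hδ0
    set η := δ / (64 * I) with hη
    have hη0 : 0 < η := by positivity
    have hsη := Real.sqrt_pos.2 hη0
    set E := I * (2 * C / (δ * √δ)) + 2 * (C / δ) / √η with hE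
    have hE0 : 0 ≤ E := by positivity
    have hWdiff : ∀ x ∈ K, ∀ y ∈ K, ∀ i j, |W i j x - W i j y| ≤ E * √‖x - y‖ := by
      intro x hx y hy i j
      have hxR := (hmem x).1 (hK hx)
      have hyR := (hmem y).1 (hK hy)
      have hx' := hge x hx
      have hy' := hge y hy
      rw [abs_sub_comm, norm_sub_rev]
      by_cases hxy : ‖y - x‖ ≤ η
      · have h1 : 64 * I * ‖y - x‖ ≤ R - ‖x‖ := by
          rw [hη, le_div_iff₀ (by positivity)] at hxy
          linarith
        refine ((hT x y hxR h1).1 i j).trans ?_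
        have h2 : 2 * C / ((R - ‖x‖) * √(R - ‖x‖)) ≤ 2 * C / (δ * √δ) := by gcongr
        have h3 : 0 ≤ 2 * (C / δ) / √η * √‖y - x‖ := by positivity
        have h4 : I * (2 * C / ((R - ‖x‖) * √(R - ‖x‖)) * √‖y - x‖)
            ≤ I * (2 * C / (δ * √δ) * √‖y - x‖) := by gcongr
        rw [hE, add_mul]
        linarith
      · have hb : ∀ z : Euc I, ‖z‖ < R → δ ≤ R - ‖z‖ → |W i j z| ≤ C / δ := by
          intro z hz hz'
          rw [le_div_iff₀ hδ0]
          exact (mul_le_mul_of_nonneg_left hz' (abs_nonneg _)).trans (hWbd i j z hz)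
        have h1 := hb x hxR hx'
        have h2 := hb y hyR hy'
        have h3 : |W i j y - W i j x| ≤ 2 * (C / δ) := (abs_sub _ _).trans (by linarith)
        have h4 : √η ≤ √‖y - x‖ := Real.sqrt_le_sqrt (not_le.1 hxy).le
        have h5 : 2 * (C / δ) ≤ 2 * (C / δ) / √η * √‖y - x‖ := by
          rw [div_mul_eq_mul_div, le_div_iff₀ hsη]
          gcongr
        have h6 : 0 ≤ I * (2 * C / (δ * √δ)) * √‖y - x‖ := by positivity
        rw [hE, add_mul]
        linarith
    refine ⟨I * (I * E), fun x hx y hy => ?_⟩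
    rw [← Real.sqrt_eq_rpow]
    refine ContinuousLinearMap.opNorm_le_bound _ (by positivity) fun z => ?_
    rw [_root_.sub_apply, hD2 x ((hmem x).1 (hK hx)), hD2 y ((hmem y).1 (hK hy)),
      lin_sub]
    refine (norm_lin_le _).trans ?_
    have h1 : ∀ k, |lin (fun l => W l k x) z - lin (fun l => W l k y) z|
        ≤ I * (E * √‖x - y‖) * ‖z‖ := by
      intro k
      rw [← _root_.sub_apply, lin_sub, ← Real.norm_eq_abs]
      refine (ContinuousLinearMap.le_opNorm _ z).trans ?_
      refine mul_le_mul_of_nonneg_right ((norm_lin_le _).trans ?_) (norm_nonneg _)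
      have : ∑ l, |W l k x - W l k y| ≤ ∑ _l : Fin I, E * √‖x - y‖ :=
        Finset.sum_le_sum fun l _ => hWdiff x hx y hy l k
      simpa using this
    have h2 : ∑ k, |lin (fun l => W l k x) z - lin (fun l => W l k y) z|
        ≤ ∑ _k : Fin I, I * (E * √‖x - y‖) * ‖z‖ := Finset.sum_le_sum fun k _ => h1 k
    refine h2.trans (le_of_eq ?_)
    simp; ring
  · have hxR := (hmem x).1 hx
    simp only [hpd1 _ x hxR, hpd2 _ x hxR]
    exact hEq x hxR

/-! ### Uniqueness by the maximum principle -/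

open Filter Topology in
/-- Second derivative test at a local maximum of `φ - ψ`. -/
lemma local_max {R : ℝ} {φ ψ : Euc I → ℝ} (hφ : ContDiffOn ℝ 2 φ (ball 0 R))
    (hψ : ContDiffOn ℝ 2 ψ (ball 0 R)) {x : Euc I} (hx : x ∈ ball (0 : Euc I) R)
    (hm : IsLocalMax (fun y => φ y - ψ y) x) (i : Fin I) :
    pd1 φ i x = pd1 ψ i x ∧ pd2 φ i x ≤ pd2 ψ i x := by
  set e : Euc I := EuclideanSpace.single i 1 with he
  have hO : ∀ y ∈ ball (0 : Euc I) R, ball (0 : Euc I) R ∈ 𝓝 y := fun y hy => isOpen_ball.mem_nhds hy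
  have hd : ∀ f : Euc I → ℝ, ContDiffOn ℝ 2 f (ball 0 R) → ∀ y ∈ ball (0 : Euc I) R,
      DifferentiableAt ℝ f y := fun f hf y hy =>
    (hf.contDiffAt (hO y hy)).differentiableAt (by norm_num)
  have hd2 : ∀ f : Euc I → ℝ, ContDiffOn ℝ 2 f (ball 0 R) → DifferentiableAt ℝ (pd1 f i) x := by
    intro f hf
    have h1 : ContDiffAt ℝ 1 (fderiv ℝ f) x :=
      (hf.contDiffAt (hO x hx)).fderiv_right (by norm_num)
    exact (h1.differentiableAt (by norm_num)).clm_apply (differentiableAt_const _)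
  -- the restriction to the line through `x` in direction `e_i`
  set g : ℝ → ℝ := fun t => φ (x + t • e) - ψ (x + t • e) with hg
  have hl : ∀ t : ℝ, HasDerivAt (fun t : ℝ => x + t • e) e t := fun t => by
    simpa using ((hasDerivAt_id t).smul_const e).const_add x
  have hlc : Continuous fun t : ℝ => x + t • e := by fun_prop
  have hl0 : Tendsto (fun t : ℝ => x + t • e) (𝓝 0) (𝓝 x) := by simpa using hlc.tendsto 0
  have hx0 : x + (0:ℝ) • e = x := by simp
  have hg1 : ∀ᶠ t in 𝓝 (0:ℝ), HasDerivAt g (pd1 φ i (x + t • e) - pd1 ψ i (x + t • e)) t := by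
    filter_upwards [hl0.eventually (hO x hx)] with t ht
    exact ((hd φ hφ _ ht).hasFDerivAt.comp_hasDerivAt t (hl t)).sub
      ((hd ψ hψ _ ht).hasFDerivAt.comp_hasDerivAt t (hl t))
  have hg1' : deriv g =ᶠ[𝓝 0] fun t => pd1 φ i (x + t • e) - pd1 ψ i (x + t • e) :=
    hg1.mono fun t ht => ht.deriv
  have hg2 : HasDerivAt (fun t : ℝ => pd1 φ i (x + t • e) - pd1 ψ i (x + t • e))
      (pd2 φ i x - pd2 ψ i x) 0 := by
    have k1 : HasFDerivAt (pd1 φ i) (fderiv ℝ (pd1 φ i) x) (x + (0:ℝ) • e) := by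
      rw [hx0]; exact (hd2 φ hφ).hasFDerivAt
    have k2 : HasFDerivAt (pd1 ψ i) (fderiv ℝ (pd1 ψ i) x) (x + (0:ℝ) • e) := by
      rw [hx0]; exact (hd2 ψ hψ).hasFDerivAt
    exact (k1.comp_hasDerivAt 0 (hl 0)).sub (k2.comp_hasDerivAt 0 (hl 0))
  have hdd : deriv (deriv g) 0 = pd2 φ i x - pd2 ψ i x := by
    rw [hg1'.deriv_eq, hg2.deriv]
  have hmax : IsLocalMax g 0 := by
    have := hl0.eventually hm
    filter_upwards [this] with t ht
    simpa [hg] using ht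
  have hd0 : deriv g 0 = 0 := hmax.deriv_eq_zero
  refine ⟨?_, ?_⟩
  · have : deriv g 0 = pd1 φ i (x + (0:ℝ) • e) - pd1 ψ i (x + (0:ℝ) • e) := hg1'.self_of_nhds
    rw [hd0, hx0] at this
    linarith
  · by_contra! hcon
    have hmin : IsLocalMin g 0 := isLocalMin_of_deriv_deriv_pos (by rw [hdd]; linarith) hd0
      hg1.self_of_nhds.continuousAt
    have hconst : g =ᶠ[𝓝 0] fun _ => g 0 := by
      filter_upwards [hmax, hmin] with t h1 h2 using le_antisymm h1 h2
    have h3 : deriv (deriv g) 0 = 0 := by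
      have h4 : deriv g =ᶠ[𝓝 0] fun _ => 0 :=
        hconst.deriv.trans (Eventually.of_forall fun t => by simp)
      rw [h4.deriv_eq]; simp
    rw [hdd] at h3
    linarith

/-- The equation for the data `P`. -/
def PEq (P : Dat I) (φ : Euc I → ℝ) (x : Euc I) : Prop :=
  ∑ j, P.d j * pd2 φ j x = P.γ * φ x
    - max (∑ j, x j) 0 * (⨅ i, (P.c i + (P.μ i * pd1 φ i x - 1 / 2 * P.μ i * pd2 φ i x)))
    - ∑ j, (P.b j - P.μ j * x j) * pd1 φ j x - ∑ j, (1 / 2 * P.μ j * x j) * pd2 φ j x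

/-- Comparison: at a positive interior maximum of `φ - ψ` the gradients agree and the second
derivatives are ordered; using at `φ` the control that is optimal for `ψ` gives
`γ (φ - ψ) ≤ 0`, since the operator is elliptic on the ball. -/
lemma le_of_PEq (P : Dat I) (hI : 0 < I) {mb dm : ℝ} (hmb : ∀ i, P.μ i ≤ mb) (hdm : 0 < dm)
    (hdm' : ∀ k, dm ≤ P.d k) (hsm : (I + 1) * (mb * P.R) ≤ dm) {φ ψ : Euc I → ℝ}
    (hcφ : ContinuousOn φ (closedBall 0 P.R)) (hcψ : ContinuousOn ψ (closedBall 0 P.R))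
    (hφ : ContDiffOn ℝ 2 φ (ball 0 P.R)) (hψ : ContDiffOn ℝ 2 ψ (ball 0 P.R))
    (hbφ : ∀ x : Euc I, ‖x‖ = P.R → φ x = 0) (hbψ : ∀ x : Euc I, ‖x‖ = P.R → ψ x = 0)
    (heφ : ∀ x ∈ ball (0 : Euc I) P.R, PEq P φ x) (heψ : ∀ x ∈ ball (0 : Euc I) P.R, PEq P ψ x) :
    ∀ x ∈ closedBall (0 : Euc I) P.R, φ x ≤ ψ x := by
  have : Nonempty (Fin I) := ⟨⟨0, hI⟩⟩
  by_contra! hcon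
  obtain ⟨y, hy, hlt⟩ := hcon
  obtain ⟨x, hx, hmax⟩ := (isCompact_closedBall (0 : Euc I) P.R).exists_isMaxOn ⟨y, hy⟩
    (hcφ.sub hcψ)
  have hpos : 0 < φ x - ψ x := by
    have : φ y - ψ y ≤ φ x - ψ x := hmax hy
    linarith
  have hxb : x ∈ ball (0 : Euc I) P.R := by
    rw [mem_closedBall_zero_iff] at hx
    rw [mem_ball_zero_iff]
    refine lt_of_le_of_ne hx fun h => ?_
    rw [hbφ x h, hbψ x h] at hpos
    simp at hpos
  have hloc : IsLocalMax (fun y => φ y - ψ y) x := by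
    filter_upwards [isOpen_ball.mem_nhds hxb] with z hz using hmax (ball_subset_closedBall hz)
  have hder := local_max hφ hψ hxb hloc
  have h1 := heφ x hxb
  have h2 := heψ x hxb
  have hxR : ‖x‖ < P.R := by simpa using hxb
  set s := max (∑ j, x j) 0 with hs
  have hs0 : 0 ≤ s := le_max_right _ _
  have hxj : ∀ j, |x j| ≤ P.R := fun j => (abs_apply_le_norm x j).trans hxR.le
  have hsR : s ≤ I * P.R := by
    refine max_le ?_ (by have := P.hR; positivity)
    have : ∑ j, x j ≤ ∑ _j : Fin I, P.R :=
      Finset.sum_le_sum fun j _ => (le_abs_self _).trans (hxj j)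
    simpa using this
  -- a control which is optimal for `ψ` at `x`
  obtain ⟨i, hi⟩ := exists_eq_ciInf_of_finite
    (f := fun i => P.c i + (P.μ i * pd1 ψ i x - 1 / 2 * P.μ i * pd2 ψ i x))
  have h3 : (⨅ i, (P.c i + (P.μ i * pd1 φ i x - 1 / 2 * P.μ i * pd2 φ i x)))
      ≤ P.c i + (P.μ i * pd1 φ i x - 1 / 2 * P.μ i * pd2 φ i x) :=
    ciInf_le (Set.finite_range _).bddBelow i
  have h4 := mul_le_mul_of_nonneg_left h3 hs0
  have c1 := collect P s i (fun j => x j) (fun j => pd1 φ j x) (fun j => pd2 φ j x)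
  have c2 := collect P s i (fun j => x j) (fun j => pd1 ψ j x) (fun j => pd2 ψ j x)
  have h5 : ∑ j, (cA P s i j (x j) * pd2 φ j x + cB P s i j (x j) * pd1 φ j x)
      ≤ ∑ j, (cA P s i j (x j) * pd2 ψ j x + cB P s i j (x j) * pd1 ψ j x) := by
    refine Finset.sum_le_sum fun j _ => ?_
    have hA := cA_ge P hmb hdm' hsm hs0 hsR (hxj j) i j
    rw [(hder j).1]
    have := mul_le_mul_of_nonneg_left (hder j).2 (show 0 ≤ cA P s i j (x j) by linarith)
    linarith
  unfold PEq at h1 h2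
  rw [← hs] at h1 h2
  rw [← hi] at h2
  have h6 : P.γ * φ x ≤ P.γ * ψ x := by linarith
  have := P.hγ
  nlinarith

/-! ### The heavy-traffic regime -/

/-- The HJB equation is the equation for data with drift `b_j = l_j^n` and diffusion
`d_j = (λ_j^n + μ_j ν_j n) / 2`. -/
lemma HJB_iff (P : Dat I) {a : Fin I → ℝ} {lam : ℝ} {n : ℕ}
    (hb : ∀ j, P.b j = a j * lam - P.μ j * nu P.μ a j * n)
    (hd : ∀ j, P.d j = 1 / 2 * (a j * lam + P.μ j * nu P.μ a j * n)) (φ : Euc I → ℝ) (x : Euc I) :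
    HJBgen P.μ a P.c P.γ lam n (fun y => max y 0) φ x ↔ PEq P φ x := by
  have e1 : ∑ j, ((a j * lam - P.μ j * nu P.μ a j * n) - P.μ j * x j) * pd1 φ j x
      = ∑ j, (P.b j - P.μ j * x j) * pd1 φ j x :=
    Finset.sum_congr rfl fun j _ => by rw [hb]
  have e2 : (1 / 2) * ∑ j, (a j * lam + P.μ j * (nu P.μ a j * n + x j)) * pd2 φ j x
      = ∑ j, P.d j * pd2 φ j x + ∑ j, (1 / 2 * P.μ j * x j) * pd2 φ j x := by
    rw [Finset.mul_sum, ← Finset.sum_add_distrib]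
    refine Finset.sum_congr rfl fun j _ => ?_
    rw [hd]; ring
  unfold HJBgen PEq
  simp only [add_sub_assoc] at e1 e2 ⊢
  rw [e1, e2]
  constructor <;> intro h <;> linarith

open Filter in
/-- The radius of `B_κ^n` is negligible compared with `n`. -/
lemma Rad_small (κ : ℝ) (m : ℕ) {ε : ℝ} (hε : 0 < ε) :
    ∀ᶠ n : ℕ in atTop, Rad κ m n ≤ ε * n := by
  have h0 : (fun x : ℝ => Real.log x ^ (m:ℝ)) =o[atTop] fun x => x ^ (1 / 2 : ℝ) :=
    isLittleO_log_rpow_rpow_atTop _ (by norm_num)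
  have h1 := (h0.comp_tendsto tendsto_natCast_atTop_atTop).def
    (show (0:ℝ) < ε / (|κ| + 1) by positivity)
  filter_upwards [h1, eventually_ge_atTop 1] with n hn h1n
  have hn' : (1:ℝ) ≤ n := by exact_mod_cast h1n
  have hl : 0 ≤ Real.log n := Real.log_nonneg hn'
  simp only [Function.comp, Real.rpow_natCast, ← Real.sqrt_eq_rpow, Real.norm_eq_abs] at hn
  rw [abs_of_nonneg (pow_nonneg hl m), abs_of_nonneg (Real.sqrt_nonneg _)] at hn
  have hs : Real.sqrt n * Real.sqrt n = n := Real.mul_self_sqrt (by positivity)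
  have hk : κ ≤ |κ| + 1 := (le_abs_self κ).trans (by linarith)
  calc Rad κ m n ≤ (|κ| + 1) * Real.sqrt n * Real.log n ^ m := by unfold Rad; gcongr
    _ ≤ (|κ| + 1) * Real.sqrt n * (ε / (|κ| + 1) * Real.sqrt n) := by gcongr
    _ = ε * (Real.sqrt n * Real.sqrt n) := by field_simp
    _ = ε * n := by rw [hs]

open Topology in
lemma HolderSecond.congr {α R : ℝ} {φ ψ : Euc I → ℝ} (h : HolderSecond α R φ)
    (he : Set.EqOn φ ψ (closedBall 0 R)) : HolderSecond α R ψ := by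
  have h2 : ∀ x ∈ ball (0 : Euc I) R, fderiv ℝ (fderiv ℝ φ) x = fderiv ℝ (fderiv ℝ ψ) x := by
    intro x hx
    have h1 : φ =ᶠ[𝓝 x] ψ := by
      filter_upwards [isOpen_ball.mem_nhds hx] with y hy using he (ball_subset_closedBall hy)
    exact h1.fderiv.fderiv_eq
  intro K hK hKc
  obtain ⟨C, hC⟩ := h K hK hKc
  refine ⟨C, fun x hx y hy => ?_⟩
  rw [← h2 x (hK hx), ← h2 y (hK hy)]
  exact hC x hx y hy

open Filter in
/-- For large `n` the equation on `B_κ^n` fits the framework `Dat`, and the ball is small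
compared with the diffusion coefficients at the origin. -/
lemma exists_Dat (hI : 0 < I) (μ a c : Fin I → ℝ) (γ : ℝ)
    (hμ : ∀ i, 0 < μ i) (ha : ∀ i, 0 < a i) (hsum : ∑ i, a i = 1)
    (hc : ∀ i, 0 < c i) (hγ : 0 < γ) (lam : ℕ → ℝ) (hlam : ∀ n : ℕ, 1 ≤ n → 0 < lam n)
    (κ : ℝ) (hκ : 0 < κ) (m : ℕ) :
    ∃ Λ mb : ℝ, 0 ≤ Λ ∧ ∃ N : ℕ, ∀ n : ℕ, N ≤ n → ∃ (P : Dat I) (dm : ℝ),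
      P.μ = μ ∧ P.c = c ∧ P.γ = γ ∧ P.R = Rad κ m n ∧
      (∀ j, P.b j = a j * lam n - P.μ j * nu P.μ a j * n) ∧
      (∀ j, P.d j = 1 / 2 * (a j * lam n + P.μ j * nu P.μ a j * n)) ∧
      (∀ i, P.μ i ≤ mb) ∧ 0 < dm ∧ (∀ k, dm ≤ P.d k) ∧ (∀ k, ∑ j, P.d j ≤ Λ * P.d k) ∧
      1024 * (n0 I Λ) ^ 2 * I * (mb * P.R) ≤ dm := by
  have hne : Nonempty (Fin I) := ⟨⟨0, hI⟩⟩
  set s := ∑ j, a j / μ j with hs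
  have hs0 : 0 < s := Finset.sum_pos (fun j _ => div_pos (ha j) (hμ j)) Finset.univ_nonempty
  obtain ⟨k₀, hk₀⟩ := Finite.exists_min a
  set am := a k₀ with ham
  have ham0 : 0 < am := ha k₀
  set mb := ∑ j, μ j with hmbdef
  have hmb : ∀ i, μ i ≤ mb := fun i =>
    Finset.single_le_sum (f := μ) (fun j _ => (hμ j).le) (Finset.mem_univ i)
  have hmb0 : 0 < mb := Finset.sum_pos (fun j _ => hμ j) Finset.univ_nonempty
  have hΛ : (0:ℝ) < 1 / am := by positivity
  have hI' : (0:ℝ) < I := by exact_mod_cast hI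
  have hn0 : (0:ℝ) < n0 I (1 / am) := by exact_mod_cast Nat.succ_pos _
  -- `μ_j ν_j n = a_j n / s`, so all `d_j` are of order `n`, and comparable with each other
  have hnu : ∀ j, μ j * nu μ a j = a j / s := fun j => by
    have := hμ j
    unfold nu
    rw [← hs]
    field_simp
  obtain ⟨N, hN⟩ := eventually_atTop.1 (Rad_small κ m
    (show 0 < 1 / 2 * am / s / (1024 * (n0 I (1 / am) : ℝ) ^ 2 * I * mb) by positivity))
  refine ⟨1 / am, mb, hΛ.le, max N 2, fun n hn => ?_⟩
  have hn2 : 2 ≤ n := (le_max_right _ _).trans hn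
  have hR := hN n ((le_max_left _ _).trans hn)
  have hnr : (2:ℝ) ≤ n := by exact_mod_cast hn2
  have hl := hlam n (by omega)
  have hlog : 0 < Real.log n := Real.log_pos (by linarith)
  have hdeq : ∀ j, 1 / 2 * (a j * lam n + μ j * nu μ a j * n) = a j * (1 / 2 * (lam n + n / s)) :=
    fun j => by rw [hnu]; ring
  have hq : 0 < 1 / 2 * (lam n + n / s) := by positivity
  refine ⟨⟨μ, c, fun j => a j * lam n - μ j * nu μ a j * n,
    fun j => 1 / 2 * (a j * lam n + μ j * nu μ a j * n), γ, Rad κ m n, hμ, hc,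
    fun j => by rw [hdeq]; exact mul_pos (ha j) hq, hγ, by unfold Rad; positivity⟩,
    1 / 2 * am / s * n, rfl, rfl, rfl, rfl, fun _ => rfl, fun _ => rfl, hmb, by positivity,
    fun k => ?_, fun k => ?_, ?_⟩
  · show _ ≤ 1 / 2 * (a k * lam n + μ k * nu μ a k * n)
    rw [hdeq]
    calc 1 / 2 * am / s * n = am * (1 / 2 * (0 + n / s)) := by ring
      _ ≤ a k * (1 / 2 * (lam n + n / s)) := by
        have := hk₀ k
        have := (ha k).le
        gcongr
  · show ∑ j, 1 / 2 * (a j * lam n + μ j * nu μ a j * n)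
      ≤ 1 / am * (1 / 2 * (a k * lam n + μ k * nu μ a k * n))
    simp only [hdeq]
    rw [← Finset.sum_mul, hsum, ← mul_assoc (1 / am)]
    refine mul_le_mul_of_nonneg_right ?_ hq.le
    rw [one_div, inv_mul_eq_div, one_le_div ham0]
    exact hk₀ k
  · show 1024 * (n0 I (1 / am) : ℝ) ^ 2 * I * (mb * Rad κ m n) ≤ 1 / 2 * am / s * n
    calc 1024 * (n0 I (1 / am) : ℝ) ^ 2 * I * (mb * Rad κ m n)
        = (1024 * (n0 I (1 / am) : ℝ) ^ 2 * I * mb) * Rad κ m n := by ring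
      _ ≤ (1024 * (n0 I (1 / am) : ℝ) ^ 2 * I * mb) *
          (1 / 2 * am / s / (1024 * (n0 I (1 / am) : ℝ) ^ 2 * I * mb) * n) := by gcongr
      _ = 1 / 2 * am / s * n := by field_simp

/-- Fix `κ > 0` and `m ≥ 3`.  There is `α ∈ (0,1]` (independent of `n`)
such that for all sufficiently large `n`: the HJB equation on `B_κ^n` has exactly one
classical solution (unique as a function on the closed ball), and the second derivatives of
any such solution are `α`-Hölder continuous on every compact subset of `B_κ^n`. -/
theorem stmt0
    (I : ℕ) (hI : 0 < I)
    (μ a c : Fin I → ℝ) (γ β : ℝ)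
    (hμ : ∀ i, 0 < μ i) (ha : ∀ i, 0 < a i) (hsum : ∑ i, a i = 1)
    (hc : ∀ i, 0 < c i) (hγ : 0 < γ)
    (lam : ℕ → ℝ)
    (hlam : ∀ n : ℕ, 1 ≤ n → 0 < lam n ∧
      (n : ℝ) = lam n * (∑ i, a i / μ i)
        + β * Real.sqrt (lam n * (∑ i, a i / μ i)))
    (κ : ℝ) (hκ : 0 < κ) (m : ℕ) (hm : 3 ≤ m) :
    ∃ α : ℝ, 0 < α ∧ α ≤ 1 ∧
      ∃ N : ℕ, ∀ n : ℕ, N ≤ n →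
        (∃ φ : Euc I → ℝ,
            IsSolGen μ a c γ (lam n) n (Rad κ m n) (fun y => max y 0) φ) ∧
        (∀ φ ψ : Euc I → ℝ,
            IsSolGen μ a c γ (lam n) n (Rad κ m n) (fun y => max y 0) φ →
            IsSolGen μ a c γ (lam n) n (Rad κ m n) (fun y => max y 0) ψ →
            Set.EqOn φ ψ (closedBall 0 (Rad κ m n))) ∧
        (∀ φ : Euc I → ℝ,
            IsSolGen μ a c γ (lam n) n (Rad κ m n) (fun y => max y 0) φ →
            HolderSecond α (Rad κ m n) φ) := by
  obtain ⟨Λ, mb, hΛ0, N, hN⟩ := exists_Dat hI μ a c γ hμ ha hsum hc hγ lam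
    (fun n hn => (hlam n hn).1) κ hκ m
  refine ⟨1 / 2, by norm_num, by norm_num, N, fun n hn => ?_⟩
  obtain ⟨P, dm, rfl, rfl, rfl, hR, hb, hd, hmb, hdm, hdm', hΛ, hsmall⟩ := hN n hn
  rw [← hR]
  have hsm : (I + 1) * (mb * P.R) ≤ dm := by
    refine le_trans ?_ hsmall
    have hI' : (1:ℝ) ≤ I := by exact_mod_cast hI
    have hn0 : (1:ℝ) ≤ n0 I Λ := by exact_mod_cast Nat.succ_le_succ (Nat.zero_le _)
    have hmb0 : 0 ≤ mb := (P.hμ ⟨0, hI⟩).le.trans (hmb ⟨0, hI⟩)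
    have := P.hR
    have h2 : (1:ℝ) ≤ (n0 I Λ : ℝ) ^ 2 := one_le_pow₀ hn0
    have h3 : (I:ℝ) + 1 ≤ 1024 * (n0 I Λ : ℝ) ^ 2 * I := by nlinarith
    gcongr
  have huniq : ∀ φ ψ : Euc I → ℝ,
      IsSolGen P.μ a P.c P.γ (lam n) n P.R (fun y => max y 0) φ →
      IsSolGen P.μ a P.c P.γ (lam n) n P.R (fun y => max y 0) ψ →
      ∀ x ∈ closedBall (0 : Euc I) P.R, φ x ≤ ψ x := by
    rintro φ ψ ⟨⟨K, hK⟩, hφ, hbφ, heφ⟩ ⟨⟨L, hL⟩, hψ, hbψ, heψ⟩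
    exact le_of_PEq P hI hmb hdm hdm' hsm hK.continuousOn hL.continuousOn hφ hψ hbφ hbψ
      (fun x hx => (HJB_iff P hb hd φ x).1 (heφ x hx))
      (fun x hx => (HJB_iff P hb hd ψ x).1 (heψ x hx))
  obtain ⟨φ₀, h1, h2, h3, h4, h5⟩ := exists_solution P hI mb dm (∑ k, |P.b k|) Λ hmb hdm hdm'
    (fun k => Finset.single_le_sum (f := fun k => |P.b k|) (fun j _ => abs_nonneg _)
      (Finset.mem_univ k)) hΛ0 hΛ hsmall
  have hsol : IsSolGen P.μ a P.c P.γ (lam n) n P.R (fun y => max y 0) φ₀ :=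
    ⟨h1, h2, h3, fun x hx => (HJB_iff P hb hd φ₀ x).2 (h5 x hx)⟩
  exact ⟨⟨φ₀, hsol⟩,
    fun φ ψ hφ hψ x hx => le_antisymm (huniq φ ψ hφ hψ x hx) (huniq ψ φ hψ hφ x hx),
    fun φ hφ => h4.congr fun x hx =>
      le_antisymm (huniq φ₀ φ hsol hφ x hx) (huniq φ φ₀ hφ hsol x hx)⟩

end HW
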